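/- Let 0 < α_1, α_3 < 1 and −1/2 < α_2 ≤ 0 with α_1 + α_2 + α_3 = 1. For any three measurable subsets E_1, E_2, E_3 of [0,∞) of finite measure such that |E_2| is maximal among |E_1|, |E_2|, |E_3|, there exists a major subset E_2' ⊆ E_2 (that is, |E_2'| ≥ |E_2|/2) such that for all measurable functions f_1, f_2, f_3 with |f_1| ≤ 1_{E_1}, |f_3| ≤ 1_{E_3}, and |f_2| ≤ 1_{E_2'}, one has |Λ_L(f_1, f_2, f_3)| ≤ C |E_1|^{α_1} |E_2|^{α_2} |E_3|^{α_3}, where C depends only on α_1, α_2, α_3 and is uniform in the parameter L ≥ 2 and in N. -/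

import Mathlib

open MeasureTheory Set ENNReal NNReal

noncomputable section

namespace Quartile

/-- The Walsh functions on `[0,1)` (extended by zero), in Walsh-Paley order,
defined by the recursion `W_{2l} = W_l(2x) + W_l(2x-1)`, `W_{2l+1} = W_l(2x) - W_l(2x-1)`. -/
def walsh (n : ℕ) (x : ℝ) : ℝ :=
  if h : n = 0 then (if 0 ≤ x ∧ x < 1 then 1 else 0)
  else if n % 2 = 0 then walsh (n / 2) (2 * x) + walsh (n / 2) (2 * x - 1)
  else walsh (n / 2) (2 * x) - walsh (n / 2) (2 * x - 1)
termination_by n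
decreasing_by
  all_goals exact Nat.div_lt_self (Nat.pos_of_ne_zero h) one_lt_two

/-- The dyadic interval `[2^k n, 2^k (n+1)) ⊆ [0,∞)`. -/
def dyadicI (k : ℤ) (n : ℕ) : Set ℝ := Ico ((2:ℝ)^k * n) ((2:ℝ)^k * (n+1))

/-- A tile: the dyadic rectangle `[2^k n, 2^k(n+1)) × [2^{-k} l, 2^{-k}(l+1))` of area one. -/
structure Tile where
  k : ℤ
  n : ℕ
  l : ℕ

namespace Tile

/-- The time interval `I_p` of a tile. -/
def timeI (p : Tile) : Set ℝ := Ico ((2:ℝ)^p.k * p.n) ((2:ℝ)^p.k * (p.n+1))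

/-- The frequency interval `ω_p` of a tile. -/
def freqI (p : Tile) : Set ℝ := Ico ((2:ℝ)^(-p.k) * p.l) ((2:ℝ)^(-p.k) * (p.l+1))

/-- The tile as a subset of the phase plane. -/
def toSet (p : Tile) : Set (ℝ × ℝ) := p.timeI ×ˢ p.freqI

/-- The Walsh wave packet `w_p` of a tile, `L²`-normalized. -/
def wp (p : Tile) (x : ℝ) : ℝ :=
  Real.sqrt ((2:ℝ)^(-p.k)) * walsh p.l ((2:ℝ)^(-p.k) * x - p.n)

end Tile

/-- The order on dyadic rectangles: `p ≤ q` iff `I_p ⊆ I_q` and `ω_q ⊆ ω_p`, for tiles. -/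
def tileLE (p q : Tile) : Prop := p.timeI ⊆ q.timeI ∧ q.freqI ⊆ p.freqI

/-- The inner product `⟨f, w_p⟩` of a function with a (real valued) wave packet. -/
def coef (f : ℝ → ℂ) (p : Tile) : ℂ := ∫ x, f x * (p.wp x : ℂ)

/-- The rank one projection `Π_p f = ⟨f, w_p⟩ w_p` associated to a single tile. -/
def projT (p : Tile) (f : ℝ → ℂ) (x : ℝ) : ℂ := coef f p * (p.wp x : ℂ)

/-- The projection associated to a collection of (pairwise disjoint) tiles. -/
def projSet (𝔭 : Set Tile) (f : ℝ → ℂ) (x : ℝ) : ℂ := ∑' p : 𝔭, projT p f x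

/-- The maximal tiles contained in a subset `S` of the phase plane; when `S` is a disjoint
union of tiles (of the kind appearing below) these form the canonical tiling of `S`. -/
def maxTiles (S : Set (ℝ × ℝ)) : Set Tile :=
  {p | p.toSet ⊆ S ∧ ∀ q : Tile, q.toSet ⊆ S → tileLE p q → q = p}

/-- The phase plane projection `Π_S` associated to a subset `S` of the phase plane,
computed with the canonical tiling of `S` by maximal tiles (the projection is independent
of the chosen tiling). -/
def piProj (S : Set (ℝ × ℝ)) (f : ℝ → ℂ) (x : ℝ) : ℂ := projSet (maxTiles S) f x

/-- A bitile: the dyadic rectangle `[2^k n, 2^k(n+1)) × [2^{1-k} l, 2^{1-k}(l+1))` of area two. -/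
structure Bitile where
  k : ℤ
  n : ℕ
  l : ℕ

namespace Bitile

/-- The time interval `I_P` of a bitile. -/
def timeI (P : Bitile) : Set ℝ := Ico ((2:ℝ)^P.k * P.n) ((2:ℝ)^P.k * (P.n+1))

/-- The frequency interval `ω_P` of a bitile. -/
def freqI (P : Bitile) : Set ℝ := Ico ((2:ℝ)^(1-P.k) * P.l) ((2:ℝ)^(1-P.k) * (P.l+1))

/-- The bitile as a subset of the phase plane. -/
def toSet (P : Bitile) : Set (ℝ × ℝ) := P.timeI ×ˢ P.freqI

/-- The lower tile `P_d` of a bitile. -/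
def d (P : Bitile) : Tile := ⟨P.k, P.n, 2*P.l⟩

/-- The upper tile `P_u` of a bitile. -/
def u (P : Bitile) : Tile := ⟨P.k, P.n, 2*P.l+1⟩

/-- The left tile of a bitile. -/
def left (P : Bitile) : Tile := ⟨P.k-1, 2*P.n, P.l⟩

/-- The right tile of a bitile. -/
def right (P : Bitile) : Tile := ⟨P.k-1, 2*P.n+1, P.l⟩

/-- The `L^∞`-normalized wave packet `φ_{P_d} = |I_P|^{1/2} w_{P_d}`. -/
def phid (P : Bitile) (x : ℝ) : ℝ := Real.sqrt ((2:ℝ)^P.k) * P.d.wp x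

end Bitile

/-- The order on dyadic rectangles, for bitiles. -/
def bitileLE (P Q : Bitile) : Prop := P.timeI ⊆ Q.timeI ∧ Q.freqI ⊆ P.freqI

/-- Strict order on bitiles. -/
def bitileLT (P Q : Bitile) : Prop := bitileLE P Q ∧ P ≠ Q

/-- A collection of bitiles is convex if together with `P₁ < P < P₂` for `P₁, P₂` in the
collection it contains `P`. -/
def IsConvex (PP : Set Bitile) : Prop :=
  ∀ P1 P2 P : Bitile, P1 ∈ PP → P2 ∈ PP → bitileLT P1 P → bitileLT P P2 → P ∈ PP

/-- A tree: a collection of bitiles with a (unique) maximal element `P_T = I_T × ω_T`. -/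
structure Tree where
  carrier : Set Bitile
  top : Bitile
  top_mem : top ∈ carrier
  le_top : ∀ P ∈ carrier, bitileLE P top

namespace Tree

/-- `T_d`: those bitiles of the tree whose lower tile frequency interval contains `ω_T`
(in the paper's notation, `P_T ≤ P_d`). -/
def Td (T : Tree) : Set Bitile := {P | P ∈ T.carrier ∧ T.top.freqI ⊆ P.d.freqI}

/-- `T_u`: those bitiles of the tree whose upper tile frequency interval contains `ω_T`
(in the paper's notation, `P_T ≤ P_u`). -/
def Tu (T : Tree) : Set Bitile := {P | P ∈ T.carrier ∧ T.top.freqI ⊆ P.u.freqI}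

/-- The region `⋃_{P ∈ T} P` of the phase plane occupied by a tree. -/
def unionSet (T : Tree) : Set (ℝ × ℝ) := ⋃ P ∈ T.carrier, P.toSet

/-- The phase plane projection `Π_T` of a (convex) tree. -/
def proj (T : Tree) (f : ℝ → ℂ) : ℝ → ℂ := piProj T.unionSet f

end Tree

/-- The vertical dilation `2^L S` of a subset of the phase plane. -/
def dilate (L : ℕ) (S : Set (ℝ × ℝ)) : Set (ℝ × ℝ) := (fun q => (q.1, (2:ℝ)^L * q.2)) '' S

/-- The enlarged tree `T^{(L)}` with respect to a frequency `ξ ∈ ω_T`: all bitiles `P` with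
`2^L ξ ∈ ω_P` contained in a rectangle `2^L P'` with `P' ∈ T`. -/
def Tree.enlarged (L : ℕ) (T : Tree) (ξ : ℝ) : Set Bitile :=
  {P | (2:ℝ)^L * ξ ∈ P.freqI ∧ ∃ P' ∈ T.carrier, P.toSet ⊆ dilate L P'.toSet}

/-- The region of the phase plane occupied by the enlarged tree `T^{(L)}`. -/
def Tree.enlargedSet (L : ℕ) (T : Tree) (ξ : ℝ) : Set (ℝ × ℝ) :=
  ⋃ P ∈ T.enlarged L ξ, P.toSet

/-- The left endpoint of `ω_T`, a canonical choice of `ξ ∈ ω_T`. -/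
def Tree.xiTop (T : Tree) : ℝ := (2:ℝ)^(1-T.top.k) * T.top.l

/-- The phase plane projection `Π_{T^{(L)}}` of the enlarged tree (independent of the
choice of `ξ ∈ ω_T`; we use the canonical choice).  For `L = 0` this is `Π_T`. -/
def Tree.projL (L : ℕ) (T : Tree) (f : ℝ → ℂ) : ℝ → ℂ := piProj (T.enlargedSet L T.xiTop) f

/-- `size^{(L)}(PP, f) = sup |I_T|^{-1/2} ‖Π_{T^{(L)}} f‖₂`, the supremum over convex trees
`T ⊆ PP`.  For `L = 0` this is the plain `size(PP, f)`. -/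
def size (L : ℕ) (PP : Set Bitile) (f : ℝ → ℂ) : ℝ≥0∞ :=
  ⨆ (T : Tree) (_ : T.carrier ⊆ PP ∧ IsConvex T.carrier),
    (ENNReal.ofReal (Real.sqrt ((2:ℝ)^T.top.k)))⁻¹ * eLpNorm (T.projL L f) 2 volume

/-- The quartile form `Λ_{PP}` restricted to a collection `PP` of bitiles. -/
def quartileFormOn (L : ℕ) (PP : Set Bitile) (f1 f2 f3 : ℝ → ℂ) : ℂ :=
  ∫ x, ∑' P : PP, (P.1.phid x : ℂ) * projT P.1.u f1 x *
      piProj (dilate L P.1.d.toSet) f2 x * piProj (dilate L P.1.d.toSet) f3 x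

/-- The bitiles contained in the strip `ℝ₊ × [0, 2^N)`. -/
def stripBitiles (N : ℕ) : Set Bitile := {P | P.freqI ⊆ Ico (0:ℝ) ((2:ℝ)^N)}

/-- The quartile form `Λ_L` (with frequency truncation parameter `N`). -/
def quartileForm (L N : ℕ) (f1 f2 f3 : ℝ → ℂ) : ℂ :=
  quartileFormOn L (stripBitiles N) f1 f2 f3

/-- The quartile form perturbed by a bounded sequence of coefficients `c_P`. -/
def quartileFormC (L N : ℕ) (c : Bitile → ℂ) (f1 f2 f3 : ℝ → ℂ) : ℂ :=
  ∫ x, ∑' P : stripBitiles N, c P.1 * (P.1.phid x : ℂ) * projT P.1.u f1 x *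
      piProj (dilate L P.1.d.toSet) f2 x * piProj (dilate L P.1.d.toSet) f3 x

/-- The counting function `Σ_{T ∈ 𝕋} 1_{I_T}` of a collection of trees. -/
def countingFn (𝕋 : Set Tree) (x : ℝ) : ℝ≥0∞ :=
  ∑' T : 𝕋, (T.1.top.timeI).indicator (fun _ => (1:ℝ≥0∞)) x

/-- The average of an `ℝ≥0∞`-valued function over a set. -/
def avgOn (I : Set ℝ) (g : ℝ → ℝ≥0∞) : ℝ≥0∞ := (volume I)⁻¹ * ∫⁻ x in I, g x

/-- The dyadic BMO norm on `[0,∞)` of an `ℝ≥0∞`-valued function. -/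
def dyadicBMO (g : ℝ → ℝ≥0∞) : ℝ≥0∞ :=
  ⨆ (k : ℤ) (n : ℕ), avgOn (dyadicI k n)
    (fun x => (g x - avgOn (dyadicI k n) g) + (avgOn (dyadicI k n) g - g x))

/-- The dyadic Hardy-Littlewood maximal function on `[0,∞)`. -/
def dyadicMax (f : ℝ → ℂ) (x : ℝ) : ℝ≥0∞ :=
  ⨆ (k : ℤ) (n : ℕ) (_ : x ∈ dyadicI k n),
    (volume (dyadicI k n))⁻¹ * ∫⁻ y in dyadicI k n, ‖f y‖₊

/-- The dyadic interval of length `2^j` containing `y ≥ 0`. -/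
def freqInterval (j : ℤ) (y : ℝ) : Set ℝ :=
  Ico ((2:ℝ)^j * ⌊y / (2:ℝ)^j⌋) ((2:ℝ)^j * (⌊y / (2:ℝ)^j⌋ + 1))

/-- The projection `Π_l := Π_{I_T × ω_l}`, where `ω_l` is the dyadic interval of
length `2^l` containing the frequency `y`. -/
def PiScale (T : Tree) (j : ℤ) (y : ℝ) (f : ℝ → ℂ) : ℝ → ℂ :=
  piProj (T.top.timeI ×ˢ freqInterval j y) f

/-- The difference projection `Π_l^Δ = Π_l - Π_{l-1}`. -/
def PiDelta (T : Tree) (j : ℤ) (y : ℝ) (f : ℝ → ℂ) (x : ℝ) : ℂ :=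
  PiScale T j y f x - PiScale T (j-1) y f x

section Part1

open Classical in
instance : DecidableEq Bitile := Classical.decEq _

/-- A bitile lies below the tile `(k,n,l)`. -/
def below (Q : Bitile) (k : ℤ) (n l : ℕ) : Prop :=
  Q.k ≤ k ∧ Q.n / 2 ^ (k - Q.k).toNat = n ∧ l / 2 ^ (k - Q.k).toNat / 2 = Q.l

instance (Q : Bitile) (k : ℤ) (n l : ℕ) : Decidable (below Q k n l) := by
  unfold below; infer_instance

/-- The discrete order on bitiles. -/
def ble (Q P : Bitile) : Prop := below Q P.k P.n (2 * P.l)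

instance (Q P : Bitile) : Decidable (ble Q P) := by
  unfold ble; infer_instance

lemma below_iff_ble (Q : Bitile) (k : ℤ) (n l : ℕ) : below Q k n l ↔ ble Q ⟨k, n, l / 2⟩ := by
  unfold ble below
  have : l / 2 ^ (k - Q.k).toNat / 2 = 2 * (l / 2) / 2 ^ (k - Q.k).toNat / 2 := by
    rw [Nat.div_div_eq_div_mul, Nat.div_div_eq_div_mul, mul_comm, ← Nat.div_div_eq_div_mul,
      ← Nat.div_div_eq_div_mul]
    congr 1; omega
  simp only [this]

lemma ble_iff (Q P : Bitile) : ble Q P ↔ ∃ δ : ℕ, P.k = Q.k + δ ∧ P.n = Q.n / 2 ^ δ ∧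
    Q.l = P.l / 2 ^ δ := by
  have key : ∀ δ : ℕ, 2 * P.l / 2 ^ δ / 2 = P.l / 2 ^ δ := by
    intro δ
    rw [Nat.div_div_eq_div_mul, mul_comm (2 ^ δ) 2, ← Nat.div_div_eq_div_mul]
    congr 1; omega
  unfold ble below
  constructor
  · rintro ⟨h1, h2, h3⟩
    refine ⟨(P.k - Q.k).toNat, by omega, h2.symm, ?_⟩
    rw [← h3, key]
  · rintro ⟨δ, h1, h2, h3⟩
    have : (P.k - Q.k).toNat = δ := by omega
    rw [this]
    exact ⟨by omega, h2.symm, by rw [h3, key]⟩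

lemma ble_refl (P : Bitile) : ble P P := (ble_iff _ _).2 ⟨0, by simp⟩

lemma ble_trans {Q R P : Bitile} (h1 : ble Q R) (h2 : ble R P) : ble Q P := by
  rw [ble_iff] at *
  obtain ⟨a, ha1, ha2, ha3⟩ := h1
  obtain ⟨b, hb1, hb2, hb3⟩ := h2
  refine ⟨a + b, by push_cast; omega, ?_, ?_⟩
  · rw [hb2, ha2, Nat.div_div_eq_div_mul, pow_add]
  · rw [ha3, hb3, Nat.div_div_eq_div_mul, pow_add, mul_comm]

/-- Sum over the tree below the tile `(k,n,l)`. -/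
def treeSum {E : Type*} [AddCommMonoid E] (PP : Finset Bitile) (F : ℤ → ℕ → ℕ → E)
    (k : ℤ) (n l : ℕ) : E :=
  ∑ Q ∈ PP with below Q k n l, F Q.k Q.n (l / 2 ^ (k - Q.k).toNat)

lemma treeSum_rec {E : Type*} [AddCommMonoid E] (PP : Finset Bitile) (F : ℤ → ℕ → ℕ → E)
    (k : ℤ) (n l : ℕ) : treeSum PP F k n l = (if (⟨k, n, l / 2⟩ : Bitile) ∈ PP then F k n l else 0)
      + treeSum PP F (k - 1) (2 * n) (l / 2) + treeSum PP F (k - 1) (2 * n + 1) (l / 2) := by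
  unfold treeSum
  rw [← Finset.sum_ite_eq PP (⟨k, n, l / 2⟩ : Bitile) (fun _ => F k n l)]
  simp only [Finset.sum_filter]
  rw [← Finset.sum_add_distrib, ← Finset.sum_add_distrib]
  refine Finset.sum_congr rfl fun Q _ => ?_
  obtain ⟨qk, qn, ql⟩ := Q
  unfold below
  simp only [Bitile.mk.injEq]
  rcases lt_trichotomy qk k with h | h | h
  · obtain ⟨δ, rfl⟩ : ∃ δ : ℕ, k = qk + δ + 1 := ⟨(k - qk - 1).toNat, by omega⟩
    have e1 : (qk + δ + 1 - qk).toNat = δ + 1 := by omega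
    have e2 : (qk + δ + 1 - 1 - qk).toNat = δ := by omega
    have e3 : ¬ (qk + δ + 1 = qk) := by omega
    have e4 : qk ≤ qk + δ + 1 := by omega
    have e5 : qk ≤ qk + δ + 1 - 1 := by omega
    have e6 : qn / 2 ^ (δ + 1) = qn / 2 ^ δ / 2 := by rw [pow_succ, Nat.div_div_eq_div_mul]
    have e7 : l / 2 ^ (δ + 1) = l / 2 / 2 ^ δ := by rw [pow_succ', Nat.div_div_eq_div_mul]
    simp only [e1, e2, e3, e4, e5, e6, e7, true_and, false_and, if_false, zero_add]
    generalize qn / 2 ^ δ = a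
    by_cases hl : l / 2 / 2 ^ δ / 2 = ql
    · simp only [hl, and_true]
      by_cases h0 : a = 2 * n
      · simp [h0]
      · by_cases h1 : a = 2 * n + 1
        · have : (2 * n + 1) / 2 = n := by omega
          simp [h1, this]
        · have : ¬ (a / 2 = n) := by omega
          simp [h0, h1, this]
    · simp [hl]
  · subst h
    simp only [sub_self, Int.toNat_zero, pow_zero, Nat.div_one, le_refl, true_and]
    have : ¬ (qk ≤ qk - 1) := by omega
    simp only [this, false_and, if_false, add_zero]
    by_cases hn : n = qn
    · subst hn
      by_cases hl : l / 2 = ql <;> simp [hl]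
    · simp [hn, Ne.symm hn]
  · have a1 : ¬ (qk ≤ k) := by omega
    have a2 : ¬ (qk ≤ k - 1) := by omega
    have a3 : ¬ (k = qk) := by omega
    simp [a1, a2, a3]

/-- Convexity of a finite collection. -/
def Conv (PP : Finset Bitile) : Prop :=
  ∀ P ∈ PP, ∀ R, ble R P → R ∉ PP → ∀ Q ∈ PP, ¬ ble Q R

lemma Conv.sdiff {PP : Finset Bitile} (h : Conv PP) (P0 : Bitile) (S : Finset Bitile)
    (hS : ∀ Q ∈ PP, Q ∈ S ↔ ble Q P0) : Conv (PP \ S) := by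
  intro P hP R hR hRn Q hQ hQR
  rw [Finset.mem_sdiff] at hP hQ hRn
  by_cases hRP : R ∈ PP
  · have : R ∈ S := by by_contra h'; exact hRn ⟨hRP, h'⟩
    exact hQ.2 ((hS Q hQ.1).2 (ble_trans hQR ((hS R hRP).1 this)))
  · exact h P hP.1 R hR hRP Q hQ.1 hQR

/-- The sibling index. -/
def sib (l : ℕ) : ℕ := if l % 2 = 0 then l + 1 else l - 1

lemma sib_even (l : ℕ) : sib (2 * l) = 2 * l + 1 := by unfold sib; simp
lemma sib_odd (l : ℕ) : sib (2 * l + 1) = 2 * l := by unfold sib; simp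

lemma child_ble (k : ℤ) (n l i : ℕ) (hi : i < 2) :
    ble ⟨k - 1, 2 * n + i, l / 2⟩ ⟨k, n, l⟩ := by
  rw [ble_iff]; refine ⟨1, by simp, ?_, by simp⟩
  simp; omega

lemma treeSum_eq_zero {E : Type*} [AddCommMonoid E] {PP : Finset Bitile} {F : ℤ → ℕ → ℕ → E}
    {k : ℤ} {n l : ℕ} (h : ∀ Q ∈ PP, ¬ below Q k n l) : treeSum PP F k n l = 0 := by
  unfold treeSum
  rw [Finset.filter_false_of_mem h, Finset.sum_empty]

lemma treeSum_nonneg {PP : Finset Bitile} {F : ℤ → ℕ → ℕ → ℝ} (hF : ∀ k n l, 0 ≤ F k n l)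
    (k : ℤ) (n l : ℕ) : 0 ≤ treeSum PP F k n l :=
  Finset.sum_nonneg fun _ _ => hF _ _ _

lemma treeSum_mono {PP PP' : Finset Bitile} (hs : PP' ⊆ PP) {F : ℤ → ℕ → ℕ → ℝ}
    (hF : ∀ k n l, 0 ≤ F k n l)
    (k : ℤ) (n l : ℕ) : treeSum PP' F k n l ≤ treeSum PP F k n l :=
  Finset.sum_le_sum_of_subset_of_nonneg (Finset.filter_subset_filter _ hs) fun _ _ _ => hF _ _ _

lemma treeSum_le {PP : Finset Bitile} {F G : ℤ → ℕ → ℕ → ℝ}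
    (hF : ∀ k n l, F k n l ≤ G k n l)
    (k : ℤ) (n l : ℕ) : treeSum PP F k n l ≤ treeSum PP G k n l :=
  Finset.sum_le_sum fun _ _ => hF _ _ _

end Part1


section Part2

lemma titu (x y a b : ℝ) (ha : 0 < a) (hb : 0 < b) :
    (x + y) ^ 2 / (a + b) ≤ x ^ 2 / a + y ^ 2 / b := by
  rw [div_add_div _ _ ha.ne' hb.ne', div_le_div_iff₀ (by positivity) (by positivity)]
  nlinarith [sq_nonneg (x * b - y * a)]

lemma bellman (g v : ℂ) (t0 t1 ν t : ℝ) (h0 : 0 ≤ t0) (h1 : 0 ≤ t1) (hν : 0 ≤ ν)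
    (ht : ν + (t0 + t1) / 2 = t) (htt : t ≤ 1) :
    ‖g‖ ^ 2 * ν + 2 * (‖g + v‖ ^ 2 * (t0 / (1 + t0)) + ‖g - v‖ ^ 2 * (t1 / (1 + t1))) ≤
      4 * ‖v‖ ^ 2 + 4 * (‖g‖ ^ 2 * (t / (1 + t))) := by
  have par : ‖g + v‖ ^ 2 + ‖g - v‖ ^ 2 = 2 * ‖g‖ ^ 2 + 2 * ‖v‖ ^ 2 := by
    have := parallelogram_law_with_norm ℝ g v
    nlinarith
  have hg : 2 * ‖g‖ ≤ ‖g + v‖ + ‖g - v‖ := by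
    have : ‖(g + v) + (g - v)‖ ≤ ‖g + v‖ + ‖g - v‖ := norm_add_le _ _
    have e : (g + v) + (g - v) = 2 * g := by ring
    rw [e, norm_mul] at this
    simpa using this
  set x := ‖g + v‖
  set y := ‖g - v‖
  set a := ‖g‖
  have ha : 0 ≤ a := norm_nonneg _
  have e0 : t0 / (1 + t0) = 1 - 1 / (1 + t0) := by field_simp; ring
  have e1 : t1 / (1 + t1) = 1 - 1 / (1 + t1) := by field_simp; ring
  have tpos : 0 ≤ t := by linarith
  have e2 : t / (1 + t) = 1 - 1 / (1 + t) := by field_simp; ring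
  have T := titu x y (1 + t0) (1 + t1) (by linarith) (by linarith)
  have T2 : (2 * a) ^ 2 / (1 + t0 + (1 + t1)) ≤ (x + y) ^ 2 / (1 + t0 + (1 + t1)) := by
    gcongr
  set u := (t0 + t1) / 2 with hu
  have upos : 0 ≤ u := by positivity
  have T3 : (2 * a) ^ 2 / (1 + t0 + (1 + t1)) = 2 * (a ^ 2 * (1 / (1 + u))) := by
    have : 1 + t0 + (1 + t1) = 2 * (1 + u) := by rw [hu]; ring
    rw [this]; field_simp
  have T4 : ν ≤ 4 * (1 / (1 + u) - 1 / (1 + t)) := by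
    have : 1 / (1 + u) - 1 / (1 + t) = ν / ((1 + u) * (1 + t)) := by
      rw [div_sub_div _ _ (by positivity) (by positivity)]
      congr 1; linarith
    rw [this, ← mul_div_assoc, le_div_iff₀ (by positivity)]
    have : (1 + u) * (1 + t) ≤ 2 * 2 := by gcongr <;> linarith
    nlinarith
  rw [e0, e1, e2]
  have T5 := mul_le_mul_of_nonneg_left T4 (sq_nonneg a)
  have p0 : x ^ 2 / (1 + t0) = x ^ 2 * (1 / (1 + t0)) := by ring
  have p1 : y ^ 2 / (1 + t1) = y ^ 2 * (1 / (1 + t1)) := by ring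
  nlinarith

section tree
variable (PP : Finset Bitile) (L : ℕ) (M : ℕ → ℤ → ℕ → ℕ → ℂ) (en : ℕ → ℤ → ℕ → ℕ → ℝ)
  (b1 : ℤ → ℕ → ℕ → ℂ) (σ s : ℝ)

/-- The contribution of a single bitile. -/
def Lam (L : ℕ) (M : ℕ → ℤ → ℕ → ℕ → ℂ) (b1 : ℤ → ℕ → ℕ → ℂ) (k : ℤ) (n l : ℕ) : ℂ :=
  b1 k n (2 * l + 1) * (M L (k - 1) (2 * n) (2 * l) - M L (k - 1) (2 * n + 1) (2 * l))

/-- Square function of the first function on the tree. -/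
def vv (b1 : ℤ → ℕ → ℕ → ℂ) (k : ℤ) (n l : ℕ) : ℂ := if l % 2 = 0 then b1 k n (l + 1) else 0

/-- The Carleson quantity. -/
def NN (PP : Finset Bitile) (L : ℕ) (en : ℕ → ℤ → ℕ → ℕ → ℝ) (k : ℤ) (n l : ℕ) : ℝ :=
  en (L + 1) k n l + 2 * treeSum PP (fun k n l => en (L + 1) k n (sib l)) k n l

lemma NN_nonneg (hen0 : ∀ d k n l, 0 ≤ en d k n l) (k : ℤ) (n l : ℕ) : 0 ≤ NN PP L en k n l := by
  unfold NN
  have := treeSum_nonneg (PP := PP) (F := fun k n l => en (L + 1) k n (sib l))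
    (fun _ _ _ => hen0 _ _ _ _) k n l
  linarith [hen0 (L + 1) k n l]

lemma tree_leaf (hen0 : ∀ d k n l, 0 ≤ en d k n l)
    (hMen : ∀ d k n l, ‖M d k n l‖ ≤ en d k n l) (hσ : 0 < σ) (hs : 0 < s)
    (k : ℤ) (n l : ℕ) (g : ℂ) (h1 : ∀ Q ∈ PP, ¬ below Q k n l)
    (h2 : en (L + 1) k n l ≤ 2 * s * 2 ^ k) :
    ‖treeSum PP (fun k n l => Lam L M b1 k n (l / 2)) k n l + g * M (L + 1) k n l‖ ≤
      3 * σ * NN PP L en k n l + 16 * s / σ * (treeSum PP (fun k n l => ‖vv b1 k n l‖ ^ 2 * 2 ^ k) k n l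
        + ‖g‖ ^ 2 * 2 ^ k * (NN PP L en k n l / (4 * s * 2 ^ k) /
          (1 + NN PP L en k n l / (4 * s * 2 ^ k)))) := by
  unfold NN
  rw [treeSum_eq_zero h1, treeSum_eq_zero h1, treeSum_eq_zero h1]
  simp only [zero_add, mul_zero, add_zero]
  rw [norm_mul]
  set e := en (L + 1) k n l with he
  have e0 : 0 ≤ e := hen0 _ _ _ _
  have hI : (0:ℝ) < 2 ^ k := by positivity
  set I : ℝ := 2 ^ k
  set t := e / (4 * s * I) with ht
  have t0 : 0 ≤ t := by positivity
  have t1 : t ≤ 1 := by rw [ht, div_le_one (by positivity)]; nlinarith [mul_pos hs hI]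
  have et : e = 4 * s * I * t := by rw [ht]; field_simp
  have h3 : ‖g‖ * ‖M (L + 1) k n l‖ ≤ ‖g‖ * e := by gcongr; exact hMen _ _ _ _
  refine h3.trans ?_
  have h4 : t / 2 ≤ t / (1 + t) := by gcongr; linarith
  have h5 : ‖g‖ ≤ σ + ‖g‖ ^ 2 / σ := by
    have : σ + ‖g‖ ^ 2 / σ - ‖g‖ = ((‖g‖ - σ / 2) ^ 2 + 3 / 4 * σ ^ 2) / σ := by field_simp; ring
    have h' : 0 ≤ ((‖g‖ - σ / 2) ^ 2 + 3 / 4 * σ ^ 2) / σ := by positivity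
    linarith
  calc ‖g‖ * e ≤ (σ + ‖g‖ ^ 2 / σ) * e := by gcongr
    _ = σ * e + 8 * s / σ * (‖g‖ ^ 2 * I * (t / 2)) := by rw [et]; field_simp; ring
    _ ≤ 3 * σ * e + 16 * s / σ * (‖g‖ ^ 2 * I * (t / (1 + t))) := by
      gcongr
      · linarith
      · norm_num

lemma tree_ind (hconv : Conv PP) (kmin : ℤ) (hk : ∀ Q ∈ PP, kmin ≤ Q.k)
    (hM1 : ∀ d k n l, M (d + 1) k n l = M d (k - 1) (2 * n) l + M d (k - 1) (2 * n + 1) l)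
    (hM2 : ∀ d k n l, M d k n (2 * l) + M d k n (2 * l + 1) = M (d + 1) k n l)
    (he1 : ∀ d k n l, en (d + 1) k n l = en d (k - 1) (2 * n) l + en d (k - 1) (2 * n + 1) l)
    (he2 : ∀ d k n l, en (d + 1) k n l ≤ en d k n (2 * l) + en d k n (2 * l + 1))
    (hen0 : ∀ d k n l, 0 ≤ en d k n l)
    (hMen : ∀ d k n l, ‖M d k n l‖ ≤ en d k n l) (hσ : 0 < σ) (hs : 0 < s)
    (hb : ∀ Q ∈ PP, ‖b1 Q.k Q.n (2 * Q.l + 1)‖ ≤ σ)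
    (hsize : ∀ P ∈ PP, en (L + 1) P.k P.n (2 * P.l) +
      treeSum PP (fun k n l => en (L + 1) k n (sib l)) P.k P.n (2 * P.l) ≤ s * 2 ^ P.k) :
    ∀ (D : ℕ) (k : ℤ) (n l : ℕ) (g : ℂ), k < kmin + D →
    ((⟨k, n, l / 2⟩ : Bitile) ∈ PP ∨ ((∀ Q ∈ PP, ¬ below Q k n l) ∧
      en (L + 1) k n l ≤ 2 * s * 2 ^ k)) →
    ‖treeSum PP (fun k n l => Lam L M b1 k n (l / 2)) k n l + g * M (L + 1) k n l‖ ≤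
      3 * σ * NN PP L en k n l + 16 * s / σ * (treeSum PP (fun k n l => ‖vv b1 k n l‖ ^ 2 * 2 ^ k) k n l
        + ‖g‖ ^ 2 * 2 ^ k * (NN PP L en k n l / (4 * s * 2 ^ k) /
          (1 + NN PP L en k n l / (4 * s * 2 ^ k)))) := by
  intro D
  induction D with
  | zero =>
    intro k n l g hkD h
    rcases h with h | h
    · have := hk _ h; simp at this hkD; omega
    · exact tree_leaf PP L M en b1 σ s hen0 hMen hσ hs k n l g h.1 h.2
  | succ D ih =>
    intro k n l g hkD h
    rcases h with h | h
    swap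
    · exact tree_leaf PP L M en b1 σ s hen0 hMen hσ hs k n l g h.1 h.2
    have hkD' : k - 1 < kmin + D := by push_cast at hkD; omega
    -- sizes
    have hsz := hsize _ h
    simp only at hsz
    rw [treeSum_rec] at hsz
    have hl2 : 2 * (l / 2) / 2 = l / 2 := by omega
    rw [hl2, if_pos h, sib_even] at hsz
    set F := fun (k : ℤ) (n l : ℕ) => en (L + 1) k n (sib l) with hF
    have F0 : ∀ k n l, 0 ≤ F k n l := fun _ _ _ => hen0 _ _ _ _
    have hT0 := treeSum_nonneg (PP := PP) F0 (k - 1) (2 * n) (l / 2)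
    have hT1 := treeSum_nonneg (PP := PP) F0 (k - 1) (2 * n + 1) (l / 2)
    have h2k : (2:ℝ) ^ k = 2 * 2 ^ (k - 1) := by
      rw [zpow_sub_one₀ (by norm_num)]; ring
    have hIpos : (0:ℝ) < 2 ^ (k - 1) := by positivity
    have hkids : ∀ i < 2, en (L + 1) (k - 1) (2 * n + i) (l / 2) ≤ 2 * s * 2 ^ (k - 1) ∧
        ((⟨k - 1, 2 * n + i, l / 2 / 2⟩ : Bitile) ∈ PP ∨
        ((∀ Q ∈ PP, ¬ below Q (k - 1) (2 * n + i) (l / 2)) ∧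
        en (L + 1) (k - 1) (2 * n + i) (l / 2) ≤ 2 * s * 2 ^ (k - 1))) := by
      intro i hi
      have A : en (L + 1) (k - 1) (2 * n + i) (l / 2) ≤ 2 * s * 2 ^ (k - 1) := by
        have a1 := he2 L (k - 1) (2 * n + i) (l / 2)
        have a2 := he1 L k n (2 * (l / 2))
        have a3 := he1 L k n (2 * (l / 2) + 1)
        have p1 := hen0 L (k - 1) (2 * n) (2 * (l / 2))
        have p2 := hen0 L (k - 1) (2 * n + 1) (2 * (l / 2))
        have p3 := hen0 L (k - 1) (2 * n) (2 * (l / 2) + 1)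
        have p4 := hen0 L (k - 1) (2 * n + 1) (2 * (l / 2) + 1)
        rw [h2k] at hsz
        interval_cases i
        · simp only [add_zero] at *; linarith
        · linarith
      refine ⟨A, ?_⟩
      by_cases hm : (⟨k - 1, 2 * n + i, l / 2 / 2⟩ : Bitile) ∈ PP
      · exact Or.inl hm
      · refine Or.inr ⟨?_, A⟩
        intro Q hQ hb
        rw [below_iff_ble] at hb
        exact hconv _ h _ (child_ble k n (l / 2) i hi) hm Q hQ hb
    have k0 := (hkids 0 (by norm_num)).2
    have k1 := (hkids 1 (by norm_num)).2
    simp only [add_zero] at k0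
    -- N recursion
    have hN : NN PP L en (k - 1) (2 * n) (l / 2) + NN PP L en (k - 1) (2 * n + 1) (l / 2) +
        en (L + 1) k n (sib l) ≤ NN PP L en k n l ∧ NN PP L en k n l ≤ 2 * (s * 2 ^ k) := by
      unfold NN
      rw [treeSum_rec PP _ k n l, if_pos h]
      have a1 := he2 L (k - 1) (2 * n) (l / 2)
      have a2 := he2 L (k - 1) (2 * n + 1) (l / 2)
      have a3 := he1 L k n (2 * (l / 2))
      have a4 := he1 L k n (2 * (l / 2) + 1)
      have p := hen0 (L + 1) k n (2 * (l / 2))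
      have p' := hen0 (L + 1) k n (2 * (l / 2) + 1)
      rcases Nat.mod_two_eq_zero_or_one l with hl | hl
      · have : l = 2 * (l / 2) := by omega
        have e1 : en (L + 1) k n l = en (L + 1) k n (2 * (l / 2)) := by rw [← this]
        have e2 : sib l = 2 * (l / 2) + 1 := by unfold sib; simp [hl]; omega
        rw [e1, e2]
        constructor <;> linarith
      · have : l = 2 * (l / 2) + 1 := by omega
        have e1 : en (L + 1) k n l = en (L + 1) k n (2 * (l / 2) + 1) := by rw [← this]
        have e2 : sib l = 2 * (l / 2) := by unfold sib; simp [hl]; omega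
        rw [e1, e2]
        constructor <;> linarith
    set v := vv b1 k n l with hv
    have hvσ : ‖v‖ ≤ σ := by
      rw [hv]; unfold vv
      split_ifs with hl
      · have := hb _ h
        simp only at this
        have e : l + 1 = 2 * (l / 2) + 1 := by omega
        rw [e]; exact this
      · simpa using hσ.le
    have i0 := ih (k - 1) (2 * n) (l / 2) (g + v) hkD' k0
    have i1 := ih (k - 1) (2 * n + 1) (l / 2) (g - v) hkD' k1
    set S0 := treeSum PP (fun k n l => Lam L M b1 k n (l / 2)) (k - 1) (2 * n) (l / 2)
    set S1 := treeSum PP (fun k n l => Lam L M b1 k n (l / 2)) (k - 1) (2 * n + 1) (l / 2)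
    rw [treeSum_rec PP _ k n l, if_pos h, treeSum_rec PP (fun k n l => ‖vv b1 k n l‖ ^ 2 * 2 ^ k) k n l,
      if_pos h]
    set V0 := treeSum PP (fun k n l => ‖vv b1 k n l‖ ^ 2 * 2 ^ k) (k - 1) (2 * n) (l / 2)
    set V1 := treeSum PP (fun k n l => ‖vv b1 k n l‖ ^ 2 * 2 ^ k) (k - 1) (2 * n + 1) (l / 2)
    have n0 := NN_nonneg PP L en hen0 (k - 1) (2 * n) (l / 2)
    have n1 := NN_nonneg PP L en hen0 (k - 1) (2 * n + 1) (l / 2)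
    set N0 := NN PP L en (k - 1) (2 * n) (l / 2)
    set N1 := NN PP L en (k - 1) (2 * n + 1) (l / 2)
    set N := NN PP L en k n l
    set E := en (L + 1) k n (sib l) with hE
    have E0 : 0 ≤ E := hen0 _ _ _ _
    -- the algebraic identity and error
    have hstep : ‖Lam L M b1 k n (l / 2) + S0 + S1 + g * M (L + 1) k n l‖ ≤
        ‖S0 + (g + v) * M (L + 1) (k - 1) (2 * n) (l / 2)‖ +
        ‖S1 + (g - v) * M (L + 1) (k - 1) (2 * n + 1) (l / 2)‖ + (‖g‖ + 2 * σ) * E := by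
      have m0 := hM2 L (k - 1) (2 * n) (l / 2)
      have m1 := hM2 L (k - 1) (2 * n + 1) (l / 2)
      have q1 := hM1 L k n l
      have qE := he1 L k n (sib l)
      have b0 := hMen L (k - 1) (2 * n) (sib l)
      have b1' := hMen L (k - 1) (2 * n + 1) (sib l)
      have hgv : ‖g + v‖ ≤ ‖g‖ + σ := (norm_add_le _ _).trans (by linarith)
      have hgv' : ‖g - v‖ ≤ ‖g‖ + σ := (norm_sub_le _ _).trans (by linarith)
      have c0 : ‖(g + v) * M L (k - 1) (2 * n) (sib l)‖ ≤
          (‖g‖ + σ) * en L (k - 1) (2 * n) (sib l) := by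
        rw [norm_mul]; gcongr
      have c1 : ‖(g - v) * M L (k - 1) (2 * n + 1) (sib l)‖ ≤
          (‖g‖ + σ) * en L (k - 1) (2 * n + 1) (sib l) := by
        rw [norm_mul]; gcongr
      have z0 := hen0 L (k - 1) (2 * n) (sib l)
      have z1 := hen0 L (k - 1) (2 * n + 1) (sib l)
      rcases Nat.mod_two_eq_zero_or_one l with hl | hl
      · have e1 : 2 * (l / 2) = l := by omega
        have e2 : sib l = l + 1 := by unfold sib; simp [hl]
        have hv' : v = b1 k n (l + 1) := by rw [hv]; unfold vv; simp [hl]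
        have id : Lam L M b1 k n (l / 2) + S0 + S1 + g * M (L + 1) k n l =
          (S0 + (g + v) * M (L + 1) (k - 1) (2 * n) (l / 2)) +
          (S1 + (g - v) * M (L + 1) (k - 1) (2 * n + 1) (l / 2)) +
          (- ((g + v) * M L (k - 1) (2 * n) (sib l)) -
            (g - v) * M L (k - 1) (2 * n + 1) (sib l)) := by
          unfold Lam
          rw [← m0, ← m1, q1, e2, e1, hv']; ring
        rw [id]
        refine (norm_add_le _ _).trans (add_le_add (norm_add_le _ _) ?_)
        refine (norm_sub_le _ _).trans ?_
        rw [norm_neg, hE, qE]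
        nlinarith
      · have e1 : 2 * (l / 2) + 1 = l := by omega
        have e2 : sib l = 2 * (l / 2) := by unfold sib; simp [hl]; omega
        have hv' : v = 0 := by rw [hv]; unfold vv; simp [hl]
        have id : Lam L M b1 k n (l / 2) + S0 + S1 + g * M (L + 1) k n l =
          (S0 + (g + v) * M (L + 1) (k - 1) (2 * n) (l / 2)) +
          (S1 + (g - v) * M (L + 1) (k - 1) (2 * n + 1) (l / 2)) +
          (- (g * M L (k - 1) (2 * n) (sib l)) - g * M L (k - 1) (2 * n + 1) (sib l) +
          Lam L M b1 k n (l / 2)) := by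
          rw [← m0, ← m1, q1, e2, e1, hv']; ring
        rw [id]
        refine (norm_add_le _ _).trans (add_le_add (norm_add_le _ _) ?_)
        refine (norm_add_le _ _).trans ?_
        have f1 : ‖Lam L M b1 k n (l / 2)‖ ≤ σ * (en L (k - 1) (2 * n) (sib l) +
            en L (k - 1) (2 * n + 1) (sib l)) := by
          unfold Lam
          rw [norm_mul, ← e2]
          have := hb _ h
          simp only at this
          rw [← e2] at this
          gcongr
          exact (norm_sub_le _ _).trans (add_le_add b0 b1')
        have f2 : ‖-(g * M L (k - 1) (2 * n) (sib l)) - g * M L (k - 1) (2 * n + 1) (sib l)‖ ≤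
            ‖g‖ * en L (k - 1) (2 * n) (sib l) + ‖g‖ * en L (k - 1) (2 * n + 1) (sib l) := by
          refine (norm_sub_le _ _).trans ?_
          rw [norm_neg, norm_mul, norm_mul]
          gcongr
        rw [hE, qE]
        nlinarith
    have hgg : ‖g‖ ≤ σ + ‖g‖ ^ 2 / σ := by
      have : σ + ‖g‖ ^ 2 / σ - ‖g‖ = ((‖g‖ - σ / 2) ^ 2 + 3 / 4 * σ ^ 2) / σ := by field_simp; ring
      have h' : 0 ≤ ((‖g‖ - σ / 2) ^ 2 + 3 / 4 * σ ^ 2) / σ := by positivity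
      linarith
    rw [h2k]
    set I : ℝ := 2 ^ (k - 1) with hI
    set ν := N - N0 - N1 with hν
    have hνE : E ≤ ν := by rw [hν]; linarith [hN.1]
    have herr : (‖g‖ + 2 * σ) * E ≤ 3 * σ * ν + ‖g‖ ^ 2 / σ * ν := by
      calc (‖g‖ + 2 * σ) * E ≤ (σ + ‖g‖ ^ 2 / σ + 2 * σ) * ν := by gcongr
        _ = _ := by ring
    have hbel := bellman g v (N0 / (4 * s * I)) (N1 / (4 * s * I)) (ν / (4 * s * (2 * I)))
      (N / (4 * s * (2 * I))) (by positivity) (by positivity)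
      (div_nonneg (E0.trans hνE) (by positivity))
      (by rw [hν]; field_simp; ring)
      (by rw [div_le_one (by positivity)]; have := hN.2; rw [h2k] at this; nlinarith [mul_pos hs hIpos])
    set ψ0 := N0 / (4 * s * I) / (1 + N0 / (4 * s * I))
    set ψ1 := N1 / (4 * s * I) / (1 + N1 / (4 * s * I))
    set ψ := N / (4 * s * (2 * I)) / (1 + N / (4 * s * (2 * I)))
    have hb2 := mul_le_mul_of_nonneg_left hbel (show 0 ≤ 8 * s * I / σ by positivity)
    have eν : 8 * s * I / σ * (‖g‖ ^ 2 * (ν / (4 * s * (2 * I)))) = ‖g‖ ^ 2 / σ * ν := by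
      field_simp; ring
    refine hstep.trans ?_
    have fin : 16 * s / σ * (‖v‖ ^ 2 * (2 * I) + V0 + V1 + ‖g‖ ^ 2 * (2 * I) * ψ) =
      8 * s * I / σ * (4 * ‖v‖ ^ 2 + 4 * (‖g‖ ^ 2 * ψ)) + 16 * s / σ * (V0 + V1) := by ring
    rw [fin]
    have f2 : 8 * s * I / σ * (2 * (‖g + v‖ ^ 2 * ψ0 + ‖g - v‖ ^ 2 * ψ1)) =
      16 * s / σ * (‖g + v‖ ^ 2 * I * ψ0) + 16 * s / σ * (‖g - v‖ ^ 2 * I * ψ1) := by ring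
    rw [mul_add, eν, f2] at hb2
    have hNν : N = N0 + N1 + ν := by rw [hν]; ring
    rw [hNν]
    linarith

/-- The single tree estimate. -/
lemma tree_estimate (hconv : Conv PP)
    (hM1 : ∀ d k n l, M (d + 1) k n l = M d (k - 1) (2 * n) l + M d (k - 1) (2 * n + 1) l)
    (hM2 : ∀ d k n l, M d k n (2 * l) + M d k n (2 * l + 1) = M (d + 1) k n l)
    (he1 : ∀ d k n l, en (d + 1) k n l = en d (k - 1) (2 * n) l + en d (k - 1) (2 * n + 1) l)
    (he2 : ∀ d k n l, en (d + 1) k n l ≤ en d k n (2 * l) + en d k n (2 * l + 1))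
    (hen0 : ∀ d k n l, 0 ≤ en d k n l)
    (hMen : ∀ d k n l, ‖M d k n l‖ ≤ en d k n l) (hσ : 0 < σ) (hs : 0 < s)
    (hb : ∀ Q ∈ PP, ‖b1 Q.k Q.n (2 * Q.l + 1)‖ ≤ σ)
    (hsize : ∀ P ∈ PP, en (L + 1) P.k P.n (2 * P.l) +
      treeSum PP (fun k n l => en (L + 1) k n (sib l)) P.k P.n (2 * P.l) ≤ s * 2 ^ P.k)
    (P : Bitile) (hP : P ∈ PP)
    (hV : treeSum PP (fun k n l => ‖vv b1 k n l‖ ^ 2 * 2 ^ k) P.k P.n (2 * P.l) ≤ σ ^ 2 * 2 ^ P.k) :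
    ‖∑ Q ∈ PP with ble Q P, Lam L M b1 Q.k Q.n Q.l‖ ≤ 22 * σ * s * 2 ^ P.k := by
  obtain ⟨kmin, hk⟩ : ∃ kmin : ℤ, ∀ Q ∈ PP, kmin ≤ Q.k := by
    obtain ⟨m, hm⟩ := (PP.image (fun Q => Q.k)).finite_toSet.bddBelow
    exact ⟨m, fun Q hQ => hm (by simpa using ⟨Q, hQ, rfl⟩)⟩
  have h := tree_ind PP L M en b1 σ s hconv kmin hk hM1 hM2 he1 he2 hen0 hMen hσ hs hb hsize
    (P.k - kmin + 1).toNat P.k P.n (2 * P.l) 0 (by omega)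
    (Or.inl (by have : 2 * P.l / 2 = P.l := by omega
                rw [this]; exact hP))
  have e : treeSum PP (fun k n l => Lam L M b1 k n (l / 2)) P.k P.n (2 * P.l) =
      ∑ Q ∈ PP with ble Q P, Lam L M b1 Q.k Q.n Q.l := by
    unfold treeSum
    refine Finset.sum_congr rfl fun Q hQ => ?_
    rw [Finset.mem_filter] at hQ
    have := hQ.2
    unfold below at this
    simp only [this.2.2]
  rw [e] at h
  simp only [zero_mul, add_zero, norm_zero, ne_eq, OfNat.ofNat_ne_zero, not_false_eq_true,
    zero_pow] at h
  refine h.trans ?_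
  have hN : NN PP L en P.k P.n (2 * P.l) ≤ 2 * (s * 2 ^ P.k) := by
    have := hsize P hP
    unfold NN
    linarith [hen0 (L + 1) P.k P.n (2 * P.l)]
  calc _ ≤ 3 * σ * (2 * (s * 2 ^ P.k)) + 16 * s / σ * (σ ^ 2 * 2 ^ P.k) := by gcongr
    _ = _ := by field_simp; ring
end tree

end Part2


section Part3

open Classical in
/-- Localized energy of a coefficient array on depth `d` subintervals. -/
def En (A : ℤ → ℕ → ℕ → ℂ) (good : ℤ → ℕ → Prop) : ℕ → ℤ → ℕ → ℕ → ℝ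
  | 0, k, n, l => if good k n then 2 ^ k * ‖A k n l‖ ^ 2 else 0
  | d + 1, k, n, l => En A good d (k - 1) (2 * n) l + En A good d (k - 1) (2 * n + 1) l

/-- Localized pairing of two coefficient arrays. -/
def MM (A2 A3 : ℤ → ℕ → ℕ → ℂ) : ℕ → ℤ → ℕ → ℕ → ℂ
  | 0, k, n, l => 2 ^ k * (A2 k n l * A3 k n l)
  | d + 1, k, n, l => MM A2 A3 d (k - 1) (2 * n) l + MM A2 A3 d (k - 1) (2 * n + 1) l

open Classical in
/-- Total length of good intervals at depth `d`. -/
def GG (good : ℤ → ℕ → Prop) : ℕ → ℤ → ℕ → ℝ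
  | 0, k, n => if good k n then 2 ^ k else 0
  | d + 1, k, n => GG good d (k - 1) (2 * n) + GG good d (k - 1) (2 * n + 1)

/-- The Walsh recursion for coefficient arrays. -/
structure Rec (A : ℤ → ℕ → ℕ → ℂ) : Prop where
  even : ∀ k n l, A k n (2 * l) = (A (k - 1) (2 * n) l + A (k - 1) (2 * n + 1) l) / 2
  odd : ∀ k n l, A k n (2 * l + 1) = (A (k - 1) (2 * n) l - A (k - 1) (2 * n + 1) l) / 2

/-- Heredity of good intervals. -/
def Her (good : ℤ → ℕ → Prop) : Prop :=
  ∀ k n, (good (k - 1) (2 * n) ∨ good (k - 1) (2 * n + 1)) → good k n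

lemma two_zpow_pred (k : ℤ) : (2:ℝ) ^ k = 2 * 2 ^ (k - 1) := by
  rw [zpow_sub_one₀ (by norm_num)]; ring

lemma two_zpow_pred_c (k : ℤ) : (2:ℂ) ^ k = 2 * 2 ^ (k - 1) := by
  rw [zpow_sub_one₀ (by norm_num)]; ring

lemma Rec.par {A : ℤ → ℕ → ℕ → ℂ} (hA : Rec A) (k : ℤ) (n l : ℕ) :
    2 ^ k * ‖A k n (2 * l)‖ ^ 2 + 2 ^ k * ‖A k n (2 * l + 1)‖ ^ 2 =
    2 ^ (k - 1) * ‖A (k - 1) (2 * n) l‖ ^ 2 + 2 ^ (k - 1) * ‖A (k - 1) (2 * n + 1) l‖ ^ 2 := by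
  rw [hA.even, hA.odd, two_zpow_pred k, norm_div, norm_div]
  have := parallelogram_law_with_norm ℝ (A (k - 1) (2 * n) l) (A (k - 1) (2 * n + 1) l)
  simp only [Complex.norm_ofNat, div_pow]
  linear_combination (2:ℝ) ^ (k - 1) / 2 * this

variable {A A1 A2 A3 : ℤ → ℕ → ℕ → ℂ} {good : ℤ → ℕ → Prop}

lemma En_nonneg (d : ℕ) (k : ℤ) (n l : ℕ) : 0 ≤ En A good d k n l := by
  induction d generalizing k n with
  | zero => unfold En; split_ifs <;> positivity
  | succ d ih => unfold En; linarith [ih (k - 1) (2 * n), ih (k - 1) (2 * n + 1)]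

lemma GG_nonneg (d : ℕ) (k : ℤ) (n : ℕ) : 0 ≤ GG good d k n := by
  induction d generalizing k n with
  | zero => unfold GG; split_ifs <;> positivity
  | succ d ih => unfold GG; linarith [ih (k - 1) (2 * n), ih (k - 1) (2 * n + 1)]

lemma GG_le (d : ℕ) (k : ℤ) (n : ℕ) : GG good d k n ≤ 2 ^ k := by
  induction d generalizing k n with
  | zero => unfold GG; split_ifs; exacts [le_rfl, by positivity]
  | succ d ih =>
    unfold GG; rw [two_zpow_pred k]; linarith [ih (k - 1) (2 * n), ih (k - 1) (2 * n + 1)]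

lemma En_split (hA : Rec A) (hg : Her good) (d : ℕ) (k : ℤ) (n l : ℕ) :
    En A good (d + 1) k n l ≤ En A good d k n (2 * l) + En A good d k n (2 * l + 1) := by
  induction d generalizing k n with
  | zero =>
    simp only [En]
    have := hA.par k n l
    have g := hg k n
    have p0 : 0 ≤ (2:ℝ) ^ (k - 1) * ‖A (k - 1) (2 * n) l‖ ^ 2 := by positivity
    have p1 : 0 ≤ (2:ℝ) ^ (k - 1) * ‖A (k - 1) (2 * n + 1) l‖ ^ 2 := by positivity
    by_cases h : good k n
    · simp only [h, if_true]
      split_ifs <;> linarith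
    · have h0 : ¬ good (k - 1) (2 * n) := fun h' => h (g (Or.inl h'))
      have h1 : ¬ good (k - 1) (2 * n + 1) := fun h' => h (g (Or.inr h'))
      simp [h, h0, h1]
  | succ d ih =>
    have i0 := ih (k - 1) (2 * n)
    have i1 := ih (k - 1) (2 * n + 1)
    have e : ∀ l, En A good (d + 1) k n l =
      En A good d (k - 1) (2 * n) l + En A good d (k - 1) (2 * n + 1) l := fun _ => rfl
    have e' : En A good (d + 1 + 1) k n l =
      En A good (d + 1) (k - 1) (2 * n) l + En A good (d + 1) (k - 1) (2 * n + 1) l := rfl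
    rw [e, e, e']
    linarith

lemma En_split' (hA : Rec A) (hg : Her good) (S : ℝ)
    (hS : ∀ k n l, good k n → ‖A k n l‖ ≤ S) (d : ℕ) (k : ℤ) (n l : ℕ) :
    En A good d k n (2 * l) + En A good d k n (2 * l + 1) ≤
    En A good (d + 1) k n l + 4 * S ^ 2 * (GG good d k n - GG good (d + 1) k n) := by
  induction d generalizing k n with
  | zero =>
    simp only [En, GG]
    have := hA.par k n l
    have g := hg k n
    by_cases h : good k n
    · simp only [h, if_true]
      have a := hS k n (2 * l) h
      have b := hS k n (2 * l + 1) h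
      have c0 : ‖A (k - 1) (2 * n) l‖ ≤ 2 * S := by
        have e : A (k - 1) (2 * n) l = A k n (2 * l) + A k n (2 * l + 1) := by
          rw [hA.even, hA.odd]; ring
        rw [e]; exact (norm_add_le _ _).trans (by linarith)
      have c1 : ‖A (k - 1) (2 * n + 1) l‖ ≤ 2 * S := by
        have e : A (k - 1) (2 * n + 1) l = A k n (2 * l) - A k n (2 * l + 1) := by
          rw [hA.even, hA.odd]; ring
        rw [e]; exact (norm_sub_le _ _).trans (by linarith)
      have d0 : (2:ℝ) ^ (k - 1) * ‖A (k - 1) (2 * n) l‖ ^ 2 ≤ 2 ^ (k - 1) * (4 * S ^ 2) := by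
        have : ‖A (k - 1) (2 * n) l‖ ^ 2 ≤ (2 * S) ^ 2 := by gcongr
        gcongr; linarith
      have d1 : (2:ℝ) ^ (k - 1) * ‖A (k - 1) (2 * n + 1) l‖ ^ 2 ≤ 2 ^ (k - 1) * (4 * S ^ 2) := by
        have : ‖A (k - 1) (2 * n + 1) l‖ ^ 2 ≤ (2 * S) ^ 2 := by gcongr
        gcongr; linarith
      rw [two_zpow_pred k] at this ⊢
      split_ifs <;> linarith
    · have h0 : ¬ good (k - 1) (2 * n) := fun h' => h (g (Or.inl h'))
      have h1 : ¬ good (k - 1) (2 * n + 1) := fun h' => h (g (Or.inr h'))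
      simp [h, h0, h1]
  | succ d ih =>
    have i0 := ih (k - 1) (2 * n)
    have i1 := ih (k - 1) (2 * n + 1)
    rw [En, En, En, GG, GG.eq_def good (d + 1 + 1)]
    simp only
    linarith

lemma En_le (S : ℝ) (hS : ∀ k n l, good k n → ‖A k n l‖ ≤ S) (d : ℕ) (k : ℤ) (n l : ℕ) :
    En A good d k n l ≤ S ^ 2 * GG good d k n := by
  induction d generalizing k n with
  | zero =>
    simp only [En, GG]
    split_ifs with h
    · have := hS k n l h
      rw [mul_comm]; gcongr
    · simp
  | succ d ih =>
    have i0 := ih (k - 1) (2 * n)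
    have i1 := ih (k - 1) (2 * n + 1)
    rw [En, GG]; linarith

/-- The energy of the tree below `P`. -/
def EE (A : ℤ → ℕ → ℕ → ℂ) (good : ℤ → ℕ → Prop) (L : ℕ) (PP : Finset Bitile) (P : Bitile) : ℝ :=
  En A good L P.k P.n (2 * P.l) +
    treeSum PP (fun k n l => En A good L k n (sib l)) P.k P.n (2 * P.l)

lemma En_pair (hA : Rec A) (d : ℕ) (k : ℤ) (n l : ℕ) :
    En A good d k n l + En A good d k n (sib l) =
    En A good d k n (2 * (l / 2)) + En A good d k n (2 * (l / 2) + 1) := by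
  rcases Nat.mod_two_eq_zero_or_one l with hl | hl
  · have e1 : 2 * (l / 2) = l := by omega
    have e2 : sib l = l + 1 := by unfold sib; simp [hl]
    rw [e1, e2]
  · have e1 : 2 * (l / 2) + 1 = l := by omega
    have e2 : sib l = 2 * (l / 2) := by unfold sib; simp [hl]; omega
    rw [e1, e2, add_comm]

lemma EE_bound_aux (hA : Rec A) (hg : Her good) (S : ℝ)
    (hS : ∀ k n l, good k n → ‖A k n l‖ ≤ S) (L : ℕ) (PP : Finset Bitile) (kmin : ℤ)
    (hk : ∀ Q ∈ PP, kmin ≤ Q.k) (D : ℕ) : ∀ (k : ℤ) (n l : ℕ), k < kmin + D →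
    En A good L k n l + treeSum PP (fun k n l => En A good L k n (sib l)) k n l ≤
      4 * S ^ 2 * GG good L k n := by
  induction D with
  | zero =>
    intro k n l h
    rw [treeSum_eq_zero]
    · have := En_le S hS L k n l
      have p := mul_nonneg (sq_nonneg S) (GG_nonneg (good := good) L k n)
      linarith
    · intro Q hQ hb
      have := hk Q hQ
      have := hb.1
      simp at h; omega
  | succ D ih =>
    intro k n l h
    have h' : k - 1 < kmin + D := by push_cast at h; omega
    have i0 := ih (k - 1) (2 * n) (l / 2) h'
    have i1 := ih (k - 1) (2 * n + 1) (l / 2) h'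
    rw [treeSum_rec]
    have a := En_pair (good := good) hA L k n l
    have b := En_split' hA hg S hS L k n (l / 2)
    rw [En, GG] at b
    have c := En_nonneg (A := A) (good := good) L k n (sib l)
    split_ifs <;> linarith

lemma EE_bound (hA : Rec A) (hg : Her good) (S : ℝ)
    (hS : ∀ k n l, good k n → ‖A k n l‖ ≤ S) (L : ℕ) (PP : Finset Bitile) (P : Bitile) :
    EE A good L PP P ≤ 4 * S ^ 2 * 2 ^ P.k := by
  obtain ⟨kmin, hk⟩ : ∃ kmin : ℤ, ∀ Q ∈ PP, kmin ≤ Q.k := by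
    obtain ⟨m, hm⟩ := (PP.image (fun Q => Q.k)).finite_toSet.bddBelow
    exact ⟨m, fun Q hQ => hm (by simpa using ⟨Q, hQ, rfl⟩)⟩
  refine (EE_bound_aux hA hg S hS L PP kmin hk (P.k - kmin + 1).toNat P.k P.n (2 * P.l)
    (by omega)).trans ?_
  have := GG_le (good := good) L P.k P.n
  gcongr

lemma EE_mono {PP PP' : Finset Bitile} (h : PP' ⊆ PP) (L : ℕ) (P : Bitile) :
    EE A good L PP' P ≤ EE A good L PP P := by
  unfold EE
  have := treeSum_mono h (F := fun k n l => En A good L k n (sib l))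
    (fun _ _ _ => En_nonneg _ _ _ _) P.k P.n (2 * P.l)
  linarith

lemma MM_split (h2 : Rec A2) (h3 : Rec A3) (d : ℕ) (k : ℤ) (n l : ℕ) :
    MM A2 A3 d k n (2 * l) + MM A2 A3 d k n (2 * l + 1) = MM A2 A3 (d + 1) k n l := by
  induction d generalizing k n with
  | zero =>
    simp only [MM]
    rw [h2.even, h2.odd, h3.even, h3.odd, two_zpow_pred_c k]; ring
  | succ d ih =>
    have i0 := ih (k - 1) (2 * n)
    have i1 := ih (k - 1) (2 * n + 1)
    rw [MM, MM, MM, ← i0, ← i1]; ring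

lemma MM_bad (hg : Her good) (hbad : ∀ k n l, ¬ good k n → A2 k n l = 0) (d : ℕ) (k : ℤ) (n l : ℕ)
    (h : ¬ good k n) : MM A2 A3 d k n l = 0 := by
  induction d generalizing k n with
  | zero => simp [MM, hbad k n l h]
  | succ d ih =>
    rw [MM, ih, ih, add_zero]
    · exact fun h' => h (hg k n (Or.inr h'))
    · exact fun h' => h (hg k n (Or.inl h'))

/-- Combined energy. -/
def enC (A2 A3 : ℤ → ℕ → ℕ → ℂ) (good : ℤ → ℕ → Prop) (σ2 σ3 : ℝ) (d : ℕ) (k : ℤ) (n l : ℕ) : ℝ :=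
  σ2 * σ3 / 2 * (En A2 good d k n l / σ2 ^ 2 + En A3 good d k n l / σ3 ^ 2)

lemma MM_le (hbad : ∀ k n l, ¬ good k n → A2 k n l = 0) {σ2 σ3 : ℝ} (p2 : 0 < σ2) (p3 : 0 < σ3)
    (d : ℕ) (k : ℤ) (n l : ℕ) : ‖MM A2 A3 d k n l‖ ≤ enC A2 A3 good σ2 σ3 d k n l := by
  induction d generalizing k n with
  | zero =>
    simp only [enC, En, MM]
    by_cases h : good k n
    · simp only [h, if_true, norm_mul, norm_zpow, Complex.norm_ofNat]
      have e : σ2 * σ3 / 2 * (2 ^ k * ‖A2 k n l‖ ^ 2 / σ2 ^ 2 + 2 ^ k * ‖A3 k n l‖ ^ 2 / σ3 ^ 2) -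
        2 ^ k * (‖A2 k n l‖ * ‖A3 k n l‖) =
        2 ^ k * (σ2 * σ3 / 2 * (‖A2 k n l‖ / σ2 - ‖A3 k n l‖ / σ3) ^ 2) := by
        field_simp; ring
      have : 0 ≤ (2:ℝ) ^ k * (σ2 * σ3 / 2 * (‖A2 k n l‖ / σ2 - ‖A3 k n l‖ / σ3) ^ 2) := by
        positivity
      linarith
    · simp [h, hbad k n l h]
  | succ d ih =>
    have i0 := ih (k - 1) (2 * n)
    have i1 := ih (k - 1) (2 * n + 1)
    rw [MM]
    refine (norm_add_le _ _).trans ((add_le_add i0 i1).trans (le_of_eq ?_))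
    simp only [enC, En]; ring

lemma tree_pack (hA2 : Rec A2) (hA3 : Rec A3) (hg : Her good)
    (hbad : ∀ k n l, ¬ good k n → A2 k n l = 0) {σ1 σ2 σ3 : ℝ} (p1 : 0 < σ1) (p2 : 0 < σ2)
    (p3 : 0 < σ3) (L : ℕ) (PP : Finset Bitile) (hconv : Conv PP)
    (h1 : ∀ P ∈ PP, EE A1 good 0 PP P ≤ σ1 ^ 2 * 2 ^ P.k)
    (h2 : ∀ P ∈ PP, EE A2 good (L + 1) PP P ≤ σ2 ^ 2 * 2 ^ P.k)
    (h3 : ∀ P ∈ PP, EE A3 good (L + 1) PP P ≤ σ3 ^ 2 * 2 ^ P.k) (P : Bitile) (hP : P ∈ PP) :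
    ‖∑ Q ∈ PP with ble Q P, Lam L (MM A2 A3) A1 Q.k Q.n Q.l‖ ≤
      22 * σ1 * (σ2 * σ3) * 2 ^ P.k := by
  classical
  set b1 : ℤ → ℕ → ℕ → ℂ := fun k n l => if good k n then A1 k n l else 0 with hb1
  have e : ∀ k n l, Lam L (MM A2 A3) A1 k n l = Lam L (MM A2 A3) b1 k n l := by
    intro k n l
    unfold Lam
    by_cases h : good k n
    · simp [hb1, h]
    · rw [MM_bad hg hbad, MM_bad hg hbad]; · simp
      · exact fun h' => h (hg k n (Or.inr h'))
      · exact fun h' => h (hg k n (Or.inl h'))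
  simp only [e]
  have hbE : ∀ k n l, ‖b1 k n l‖ ^ 2 * 2 ^ k = En A1 good 0 k n l := by
    intro k n l
    simp only [hb1, En]
    split_ifs
    · ring
    · simp
  have ts : ∀ P ∈ PP, ∀ L, ∀ A : ℤ → ℕ → ℕ → ℂ, En A good L P.k P.n (2 * P.l + 1) ≤ EE A good L PP P := by
    intro P hP L A
    unfold EE
    rw [treeSum_rec]
    have : 2 * P.l / 2 = P.l := by omega
    rw [this, if_pos hP, sib_even]
    have a := treeSum_nonneg (PP := PP) (F := fun k n l => En A good L k n (sib l))
      (fun _ _ _ => En_nonneg _ _ _ _) (P.k - 1) (2 * P.n) P.l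
    have b := treeSum_nonneg (PP := PP) (F := fun k n l => En A good L k n (sib l))
      (fun _ _ _ => En_nonneg _ _ _ _) (P.k - 1) (2 * P.n + 1) P.l
    have c := En_nonneg (A := A) (good := good) L P.k P.n (2 * P.l)
    linarith
  refine tree_estimate PP L (MM A2 A3) (enC A2 A3 good σ2 σ3) b1 σ1 (σ2 * σ3) hconv
    (fun _ _ _ _ => by rw [MM]) (MM_split hA2 hA3) (fun _ _ _ _ => by simp only [enC, En]; ring)
    ?_ ?_ (MM_le hbad p2 p3) p1 (by positivity) ?_ ?_ P hP ?_
  · intro d k n l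
    unfold enC
    rw [← mul_add]
    have a := En_split hA2 hg d k n l
    have b := En_split hA3 hg d k n l
    have c : En A2 good d k n (2 * l) / σ2 ^ 2 + En A3 good d k n (2 * l) / σ3 ^ 2 +
      (En A2 good d k n (2 * l + 1) / σ2 ^ 2 + En A3 good d k n (2 * l + 1) / σ3 ^ 2) =
      (En A2 good d k n (2 * l) + En A2 good d k n (2 * l + 1)) / σ2 ^ 2 +
      (En A3 good d k n (2 * l) + En A3 good d k n (2 * l + 1)) / σ3 ^ 2 := by ring
    rw [c]; gcongr
  · intro d k n l
    unfold enC
    have := En_nonneg (A := A2) (good := good) d k n l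
    have := En_nonneg (A := A3) (good := good) d k n l
    positivity
  · intro Q hQ
    have a := (ts Q hQ 0 A1).trans (h1 Q hQ)
    rw [← hbE] at a
    exact le_of_sq_le_sq (le_of_mul_le_mul_right a (by positivity)) p1.le
  · intro Q hQ
    have a := h2 Q hQ
    have b := h3 Q hQ
    have c : enC A2 A3 good σ2 σ3 (L + 1) Q.k Q.n (2 * Q.l) +
        treeSum PP (fun k n l => enC A2 A3 good σ2 σ3 (L + 1) k n (sib l)) Q.k Q.n (2 * Q.l) =
        σ2 * σ3 / 2 * (EE A2 good (L + 1) PP Q / σ2 ^ 2 + EE A3 good (L + 1) PP Q / σ3 ^ 2) := by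
      unfold EE enC treeSum
      rw [← Finset.mul_sum, Finset.sum_add_distrib, ← Finset.sum_div, ← Finset.sum_div]
      ring
    rw [c]
    calc _ ≤ σ2 * σ3 / 2 * (σ2 ^ 2 * 2 ^ Q.k / σ2 ^ 2 + σ3 ^ 2 * 2 ^ Q.k / σ3 ^ 2) := by gcongr
      _ = _ := by field_simp; ring
  · refine le_trans ?_ (h1 P hP)
    unfold EE
    have a := treeSum_le (PP := PP) (F := fun k n l => ‖vv b1 k n l‖ ^ 2 * 2 ^ k)
      (G := fun k n l => En A1 good 0 k n (sib l)) (fun k n l => by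
        unfold vv
        split_ifs with h
        · simp only [hbE, sib, h, if_true]; exact le_rfl
        · simpa using En_nonneg _ _ _ _) P.k P.n (2 * P.l)
    have c := En_nonneg (A := A1) (good := good) 0 P.k P.n (2 * P.l)
    linarith

end Part3


section Part4

lemma selection (R : Bitile → Bitile → Prop) [∀ Q P, Decidable (R Q P)]
    (hR : ∀ Q P, R Q P → ble Q P) (key w : Bitile → ℝ)
    (hw : ∀ Q, 0 ≤ w Q) (dis : Bitile → Bitile → Prop) (hsym : ∀ Q Q', dis Q Q' → dis Q' Q)
    (hdis : ∀ Q P Q' P', R Q P → R Q' P' → key P ≤ key P' → (¬ ble Q' P ∨ P = P') → Q ≠ Q' →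
      dis Q Q') (τ : ℝ) (hτ : 0 < τ) (Λ : Bitile → ℂ) (K : ℝ) (hK : 0 ≤ K) (m : ℕ) :
    ∀ PP : Finset Bitile, PP.card = m → Conv PP →
    (∀ PP0 ⊆ PP, Conv PP0 → ∀ P ∈ PP0, ‖∑ Q ∈ PP0 with ble Q P, Λ Q‖ ≤ K * 2 ^ P.k) →
    ∃ PP' ⊆ PP, Conv PP' ∧ (∀ P ∈ PP', ∑ Q ∈ PP' with R Q P, w Q ≤ τ * 2 ^ P.k) ∧
      ∃ 𝒬 ⊆ PP, (∀ Q ∈ 𝒬, ∀ Q' ∈ 𝒬, Q ≠ Q' → dis Q Q') ∧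
        ‖∑ Q ∈ PP, Λ Q - ∑ Q ∈ PP', Λ Q‖ ≤ K / τ * ∑ Q ∈ 𝒬, w Q ∧
        ∀ Q ∈ 𝒬, ∃ P ∈ PP, R Q P ∧ τ * 2 ^ P.k < ∑ Q ∈ PP with R Q P, w Q := by
  induction m using Nat.strong_induction_on with
  | _ m ih =>
  intro PP hcard hconv hΛ
  by_cases hv : ∀ P ∈ PP, ∑ Q ∈ PP with R Q P, w Q ≤ τ * 2 ^ P.k
  · exact ⟨PP, subset_rfl, hconv, hv, ∅, by simp, by simp, by simp, by simp⟩
  push Not at hv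
  obtain ⟨P0, hP0, hP0v⟩ := hv
  obtain ⟨P, hP, hPmin⟩ := Finset.exists_min_image
    (PP.filter fun P => τ * 2 ^ P.k < ∑ Q ∈ PP with R Q P, w Q) key
    ⟨P0, by rw [Finset.mem_filter]; exact ⟨hP0, hP0v⟩⟩
  rw [Finset.mem_filter] at hP
  set S := PP.filter fun Q => ble Q P with hS
  have hSub : PP \ S ⊆ PP := Finset.sdiff_subset
  have hPS : P ∈ S := by rw [hS, Finset.mem_filter]; exact ⟨hP.1, ble_refl P⟩
  have hSP : S ⊆ PP := Finset.filter_subset _ _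
  have hc : (PP \ S).card < m := by
    rw [← hcard]
    refine Finset.card_lt_card ⟨hSub, fun h => ?_⟩
    exact (Finset.mem_sdiff.1 (h hP.1)).2 hPS
  obtain ⟨PP', hPP', hconv', hsmall, 𝒬, h𝒬, hQdis, hQsum, hwit⟩ := ih _ hc (PP \ S) rfl
    (hconv.sdiff P S (fun Q hQ => by rw [hS, Finset.mem_filter]; simp [hQ]))
    (fun PP0 h => hΛ PP0 (h.trans hSub))
  refine ⟨PP', hPP'.trans hSub, hconv', hsmall, (PP.filter fun Q => R Q P) ∪ 𝒬, ?_, ?_, ?_, ?_⟩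
  · exact Finset.union_subset (Finset.filter_subset _ _) (h𝒬.trans hSub)
  · have cross : ∀ Q ∈ PP.filter (fun Q => R Q P), ∀ Q' ∈ 𝒬, Q ≠ Q' → dis Q Q' := by
      intro Q hQ Q' hQ' hne
      rw [Finset.mem_filter] at hQ
      obtain ⟨P', hP', hRP', hviol⟩ := hwit Q' hQ'
      refine hdis Q P Q' P' hQ.2 hRP' (hPmin P' ?_) (Or.inl ?_) hne
      · rw [Finset.mem_filter]
        refine ⟨hSub hP', hviol.trans_le ?_⟩
        exact Finset.sum_le_sum_of_subset_of_nonneg (Finset.filter_subset_filter _ hSub)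
          fun _ _ _ => hw _
      · intro hb
        have := Finset.mem_sdiff.1 (h𝒬 hQ')
        exact this.2 (by rw [hS, Finset.mem_filter]; exact ⟨this.1, hb⟩)
    intro Q hQ Q' hQ' hne
    rcases Finset.mem_union.1 hQ with h | h <;> rcases Finset.mem_union.1 hQ' with h' | h'
    · rw [Finset.mem_filter] at h h'
      exact hdis Q P Q' P h.2 h'.2 le_rfl (Or.inr rfl) hne
    · exact cross Q h Q' h' hne
    · exact hsym _ _ (cross Q' h' Q h hne.symm)
    · exact hQdis Q h Q' h' hne
  · have hdj : Disjoint (PP.filter fun Q => R Q P) 𝒬 := by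
      rw [Finset.disjoint_left]
      intro Q hQ hQ'
      rw [Finset.mem_filter] at hQ
      have := Finset.mem_sdiff.1 (h𝒬 hQ')
      exact this.2 (by rw [hS, Finset.mem_filter]; exact ⟨this.1, hR _ _ hQ.2⟩)
    rw [Finset.sum_union hdj, mul_add]
    have e : ∑ Q ∈ PP, Λ Q = ∑ Q ∈ PP \ S, Λ Q + ∑ Q ∈ S, Λ Q :=
      (Finset.sum_sdiff hSP).symm
    rw [e]
    have e2 : ∑ Q ∈ PP \ S, Λ Q + ∑ Q ∈ S, Λ Q - ∑ Q ∈ PP', Λ Q =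
      ∑ Q ∈ S, Λ Q + (∑ Q ∈ PP \ S, Λ Q - ∑ Q ∈ PP', Λ Q) := by ring
    rw [e2]
    refine (norm_add_le _ _).trans (add_le_add ?_ hQsum)
    refine (hΛ PP subset_rfl hconv P hP.1).trans ?_
    rw [div_mul_eq_mul_div, le_div_iff₀ hτ, mul_assoc]
    gcongr
    linarith [hP.2]
  · intro Q hQ
    rcases Finset.mem_union.1 hQ with h | h
    · rw [Finset.mem_filter] at h
      exact ⟨P, hP.1, h.2, hP.2⟩
    · obtain ⟨P', hP', hRP', hviol⟩ := hwit Q h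
      refine ⟨P', hSub hP', hRP', hviol.trans_le ?_⟩
      exact Finset.sum_le_sum_of_subset_of_nonneg (Finset.filter_subset_filter _ hSub)
        fun _ _ _ => hw _

/-- Tiles `p ≤ q` intersect. -/
def tint (k : ℤ) (n l : ℕ) (k' : ℤ) (n' l' : ℕ) : Prop :=
  ∃ δ : ℕ, k' = k + δ ∧ n' = n / 2 ^ δ ∧ l = l' / 2 ^ δ

/-- The half tiles of the bitiles do not intersect. -/
def tdis (h : ℕ) (Q Q' : Bitile) : Prop :=
  ¬ tint Q.k Q.n (2 * Q.l + h) Q'.k Q'.n (2 * Q'.l + h) ∧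
  ¬ tint Q'.k Q'.n (2 * Q'.l + h) Q.k Q.n (2 * Q.l + h)

lemma tdis_symm (h : ℕ) (Q Q' : Bitile) (H : tdis h Q Q') : tdis h Q' Q := ⟨H.2, H.1⟩

lemma tint_ble {h : ℕ} (hh : h < 2) {Q Q' : Bitile}
    (H : tint Q.k Q.n (2 * Q.l + h) Q'.k Q'.n (2 * Q'.l + h)) : ble Q Q' := by
  obtain ⟨δ, h1, h2, h3⟩ := H
  rw [ble_iff]
  refine ⟨δ, h1, h2, ?_⟩
  have a : (2 * Q.l + h) / 2 = Q.l := by omega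
  have b : (2 * Q'.l + h) / 2 = Q'.l := by omega
  rw [← a, h3, Nat.div_div_eq_div_mul, mul_comm (2 ^ δ), ← Nat.div_div_eq_div_mul, b]

/-- Frequency of the top. -/
def xi (P : Bitile) : ℝ := 2 ^ (-P.k) * (2 * P.l : ℕ)

/-- The relation of kinds (b), (c). -/
def Rh (h : ℕ) (Q P : Bitile) : Prop :=
  ble Q P ∧ (2 * P.l / 2 ^ (P.k - Q.k).toNat + h) % 2 = 1

instance (h : ℕ) (Q P : Bitile) : Decidable (Rh h Q P) := by unfold Rh; infer_instance

lemma xi_bounds {Q P : Bitile} (H : ble Q P) :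
    2 ^ (-Q.k) * ((2 * P.l / 2 ^ (P.k - Q.k).toNat : ℕ) : ℝ) ≤ xi P ∧
    xi P < 2 ^ (-Q.k) * ((2 * P.l / 2 ^ (P.k - Q.k).toNat : ℕ) + 1 : ℝ) := by
  have hk := H.1
  obtain ⟨δ, hδ⟩ : ∃ δ : ℕ, (P.k - Q.k).toNat = δ := ⟨_, rfl⟩
  have hk2 : -Q.k = -P.k + (δ : ℤ) := by omega
  rw [hδ, hk2, zpow_add₀ (by norm_num), zpow_natCast]
  unfold xi
  have a : 2 ^ δ * (2 * P.l / 2 ^ δ) ≤ 2 * P.l := Nat.mul_div_le _ _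
  have b : 2 * P.l < 2 ^ δ * (2 * P.l / 2 ^ δ + 1) := by
    exact Nat.lt_mul_div_succ _ (by positivity)
  have a' : (2:ℝ) ^ δ * ((2 * P.l / 2 ^ δ : ℕ) : ℝ) ≤ (2 * P.l : ℕ) := by exact_mod_cast a
  have b' : ((2 * P.l : ℕ) : ℝ) < (2:ℝ) ^ δ * ((2 * P.l / 2 ^ δ : ℕ) + 1 : ℝ) := by exact_mod_cast b
  rw [mul_assoc, mul_assoc]
  constructor <;> gcongr

lemma Rh_dis {h : ℕ} (hh : h < 2) (Q P Q' P' : Bitile) (H : Rh h Q P) (H' : Rh h Q' P')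
    (hkey : (if h = 0 then xi P else - xi P) ≤ (if h = 0 then xi P' else - xi P'))
    (hd : ¬ ble Q' P ∨ P = P') (hne : Q ≠ Q') : tdis h Q Q' := by
  have hx := xi_bounds H.1
  have hx' := xi_bounds H'.1
  have l1 := H.1.2.2
  have l1' := H'.1.2.2
  have par := H.2
  have par' := H'.2
  have same : Q.k = Q'.k → Q.n = Q'.n → 2 * Q.l + h = 2 * Q'.l + h → False := by
    intro a b c
    apply hne
    obtain ⟨qk, qn, ql⟩ := Q
    obtain ⟨qk', qn', ql'⟩ := Q'
    simp only at a b c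
    have : ql = ql' := by omega
    subst a; subst b; subst this; rfl
  constructor
  · rintro ⟨ε, e1, e2, e3⟩
    rcases Nat.eq_zero_or_pos ε with rfl | hε
    · exact same (by omega) (by simpa using e2.symm) (by simpa using e3)
    obtain ⟨ε, rfl⟩ : ∃ ε', ε = ε' + 1 := ⟨ε - 1, by omega⟩
    have ek : -Q.k = -Q'.k + ((ε + 1 : ℕ) : ℤ) := by omega
    rw [ek, zpow_add₀ (by norm_num), zpow_natCast] at hx
    have a : 2 ^ (ε + 1) * (2 * Q.l + h) ≤ 2 * Q'.l + h := by rw [e3]; exact Nat.mul_div_le _ _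
    have b : 2 * Q'.l + h < 2 ^ (ε + 1) * (2 * Q.l + h + 1) := by
      rw [e3]
      exact Nat.lt_mul_div_succ _ (by positivity)
    have pw : 2 ^ (ε + 1) = 2 * 2 ^ ε := by rw [pow_succ]; ring
    generalize hla : 2 * P.l / 2 ^ (P.k - Q.k).toNat = lam at *
    generalize hla2 : 2 * P'.l / 2 ^ (P'.k - Q'.k).toNat = lam' at *
    have p0 : (0:ℝ) < 2 ^ (-Q'.k) := by positivity
    interval_cases h
    · simp only [if_true] at hkey
      have c1 : lam = 2 * Q.l + 1 := by omega
      have c2 : lam' = 2 * Q'.l + 1 := by omega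
      have c3 : lam' + 1 ≤ 2 ^ (ε + 1) * lam := by
        rw [c1, c2, pw]; rw [pw] at b
        have : Q'.l < 2 ^ ε * (2 * Q.l + 1) := by nlinarith
        nlinarith
      have c4 : (lam' + 1 : ℝ) ≤ 2 ^ (ε + 1) * lam := by exact_mod_cast c3
      have := mul_le_mul_of_nonneg_left c4 p0.le
      linarith [hx.1, hx'.2]
    · simp only [one_ne_zero, if_false] at hkey
      have c1 : lam = 2 * Q.l := by omega
      have c2 : lam' = 2 * Q'.l := by omega
      have c3 : 2 ^ (ε + 1) * (lam + 1) ≤ lam' := by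
        rw [c1, c2, pw]; rw [pw] at a
        have : 2 ^ ε * (2 * Q.l + 1) < Q'.l + 1 := by nlinarith
        nlinarith
      have c4 : 2 ^ (ε + 1) * (lam + 1 : ℝ) ≤ lam' := by exact_mod_cast c3
      have := mul_le_mul_of_nonneg_left c4 p0.le
      linarith [hx.2, hx'.1]
  · intro ht
    have hb := ble_trans (tint_ble hh ht) H.1
    rcases hd with hd | rfl
    · exact hd hb
    obtain ⟨ε, e1, e2, e3⟩ := ht
    rcases Nat.eq_zero_or_pos ε with rfl | hε
    · exact same (by omega) (by simpa using e2) (by simpa using e3.symm)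
    obtain ⟨ε, rfl⟩ : ∃ ε', ε = ε' + 1 := ⟨ε - 1, by omega⟩
    have hk := H.1.1
    have ed : (P.k - Q'.k).toNat = (P.k - Q.k).toNat + (ε + 1) := by omega
    have : 2 * P.l / 2 ^ (P.k - Q'.k).toNat = 2 * Q'.l + h := by
      rw [e3, ed, pow_add, pow_succ', ← Nat.div_div_eq_div_mul, ← Nat.div_div_eq_div_mul, l1,
        ← Nat.div_div_eq_div_mul]
      congr 1
      omega
    rw [this] at par'
    omega

lemma Ra_dis (Q P Q' P' : Bitile) (H : Q = P) (H' : Q' = P')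
    (hkey : (-P.k : ℝ) ≤ -P'.k)
    (hd : ¬ ble Q' P ∨ P = P') (hne : Q ≠ Q') : tdis 0 Q Q' := by
  subst H H'
  have hk : Q'.k ≤ Q.k := by
    have : (Q'.k : ℝ) ≤ Q.k := by linarith
    exact_mod_cast this
  have hd' : ¬ ble Q' Q := by
    rcases hd with h | h
    · exact h
    · exact absurd h hne
  refine ⟨fun ht => ?_, fun ht => hd' (tint_ble (by norm_num) ht)⟩
  obtain ⟨ε, e1, e2, e3⟩ := ht
  have : ε = 0 := by omega
  subst this
  apply hd'
  rw [ble_iff]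
  exact ⟨0, by omega, by simpa using e2.symm, by simpa using by simpa using e3.symm⟩

variable {A A1 A2 A3 : ℤ → ℕ → ℕ → ℂ} {good : ℤ → ℕ → Prop}

lemma EE_decomp (L : ℕ) (PP : Finset Bitile) (P : Bitile) (hP : P ∈ PP) : EE A good L PP P =
    ∑ Q ∈ PP with Q = P, En A good L Q.k Q.n (2 * Q.l + 0) +
    ∑ Q ∈ PP with Rh 0 Q P, En A good L Q.k Q.n (2 * Q.l + 0) +
    ∑ Q ∈ PP with Rh 1 Q P, En A good L Q.k Q.n (2 * Q.l + 1) := by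
  unfold EE treeSum
  rw [Finset.filter_eq', if_pos hP, Finset.sum_singleton, add_assoc]
  congr 1
  simp only [Finset.sum_filter]
  rw [← Finset.sum_add_distrib]
  refine Finset.sum_congr rfl fun Q _ => ?_
  unfold Rh
  have e : below Q P.k P.n (2 * P.l) ↔ ble Q P := Iff.rfl
  by_cases hb : ble Q P
  · have l1 := hb.2.2
    simp only [e, hb, if_true, true_and]
    generalize 2 * P.l / 2 ^ (P.k - Q.k).toNat = lam at *
    rcases Nat.mod_two_eq_zero_or_one lam with hl | hl
    · have s : sib lam = 2 * Q.l + 1 := by unfold sib; simp [hl]; omega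
      have : (lam + 1) % 2 = 1 := by omega
      simp [hl, this, s]
    · have s : sib lam = 2 * Q.l := by unfold sib; simp [hl]; omega
      have : ¬ ((lam + 1) % 2 = 1) := by omega
      simp [hl, this, s]
  · simp [e, hb]

end Part4


section Part5

variable {A A1 A2 A3 : ℤ → ℕ → ℕ → ℂ} {good : ℤ → ℕ → Prop}

/-- Abstract Bessel inequality. -/
def Bes (A : ℤ → ℕ → ℕ → ℂ) (good : ℤ → ℕ → Prop) (L : ℕ) (B : ℝ) : Prop :=
  ∀ h < 2, ∀ 𝒬 : Finset Bitile, (∀ Q ∈ 𝒬, ∀ Q' ∈ 𝒬, Q ≠ Q' → tdis h Q Q') →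
    ∑ Q ∈ 𝒬, En A good L Q.k Q.n (2 * Q.l + h) ≤ B

lemma refine_one (L : ℕ) (B : ℝ) (hB : Bes A good L B) (Λ : Bitile → ℂ) (K : ℝ) (hK : 0 ≤ K)
    (σ : ℝ) (hσ : 0 < σ) (PP : Finset Bitile) (hconv : Conv PP)
    (hΛ : ∀ PP0 ⊆ PP, Conv PP0 → ∀ P ∈ PP0, ‖∑ Q ∈ PP0 with ble Q P, Λ Q‖ ≤ K * 2 ^ P.k) :
    ∃ PP' ⊆ PP, Conv PP' ∧ (∀ P ∈ PP', EE A good L PP' P ≤ σ ^ 2 * 2 ^ P.k) ∧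
      ‖∑ Q ∈ PP, Λ Q - ∑ Q ∈ PP', Λ Q‖ ≤ 9 * K * (B / σ ^ 2) := by
  have hτ : 0 < σ ^ 2 / 3 := by positivity
  have wn : ∀ h, ∀ Q : Bitile, 0 ≤ En A good L Q.k Q.n (2 * Q.l + h) := fun h Q => En_nonneg _ _ _ _
  have mono : ∀ {P1 P2 : Finset Bitile}, P1 ⊆ P2 → ∀ (h : ℕ) (R : Bitile → Prop) [DecidablePred R],
    ∑ Q ∈ P1 with R Q, En A good L Q.k Q.n (2 * Q.l + h) ≤
    ∑ Q ∈ P2 with R Q, En A good L Q.k Q.n (2 * Q.l + h) := by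
    intro P1 P2 hs h R _
    exact Finset.sum_le_sum_of_subset_of_nonneg (Finset.filter_subset_filter _ hs)
      fun _ _ _ => wn _ _
  obtain ⟨P1, s1, c1, e1, 𝒬1, -, d1, n1, -⟩ := selection (fun Q P => Q = P)
    (fun Q P h => h ▸ ble_refl _) (fun P => (-P.k : ℝ)) (fun Q => En A good L Q.k Q.n (2 * Q.l + 0))
    (wn 0) (tdis 0) (tdis_symm 0) Ra_dis (σ ^ 2 / 3) hτ Λ K hK _ PP rfl hconv hΛ
  obtain ⟨P2, s2, c2, e2, 𝒬2, -, d2, n2, -⟩ := selection (Rh 0)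
    (fun Q P h => h.1) (fun P => if 0 = 0 then xi P else - xi P)
    (fun Q => En A good L Q.k Q.n (2 * Q.l + 0))
    (wn 0) (tdis 0) (tdis_symm 0) (Rh_dis (by norm_num)) (σ ^ 2 / 3) hτ Λ K hK _ P1 rfl c1
    (fun PP0 h => hΛ PP0 (h.trans s1))
  obtain ⟨P3, s3, c3, e3, 𝒬3, -, d3, n3, -⟩ := selection (Rh 1)
    (fun Q P h => h.1) (fun P => if 1 = 0 then xi P else - xi P)
    (fun Q => En A good L Q.k Q.n (2 * Q.l + 1))
    (wn 1) (tdis 1) (tdis_symm 1) (Rh_dis (by norm_num)) (σ ^ 2 / 3) hτ Λ K hK _ P2 rfl c2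
    (fun PP0 h => hΛ PP0 (h.trans (s2.trans s1)))
  refine ⟨P3, s3.trans (s2.trans s1), c3, ?_, ?_⟩
  · intro P hP
    rw [EE_decomp L P3 P hP]
    have a1 := (mono (s3.trans s2) 0 (fun Q => Q = P)).trans (e1 P (s2 (s3 hP)))
    have a2 := (mono s3 0 (fun Q => Rh 0 Q P)).trans (e2 P (s3 hP))
    have a3 := e3 P hP
    linarith
  · have b1 := hB 0 (by norm_num) 𝒬1 d1
    have b2 := hB 0 (by norm_num) 𝒬2 d2
    have b3 := hB 1 (by norm_num) 𝒬3 d3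
    have kk : K / (σ ^ 2 / 3) = 3 * K / σ ^ 2 := by field_simp
    have kp : 0 ≤ 3 * K / σ ^ 2 := by positivity
    rw [kk] at n1 n2 n3
    have m1 := n1.trans (mul_le_mul_of_nonneg_left b1 kp)
    have m2 := n2.trans (mul_le_mul_of_nonneg_left b2 kp)
    have m3 := n3.trans (mul_le_mul_of_nonneg_left b3 kp)
    have e : ∑ Q ∈ PP, Λ Q - ∑ Q ∈ P3, Λ Q = (∑ Q ∈ PP, Λ Q - ∑ Q ∈ P1, Λ Q) +
      (∑ Q ∈ P1, Λ Q - ∑ Q ∈ P2, Λ Q) + (∑ Q ∈ P2, Λ Q - ∑ Q ∈ P3, Λ Q) := by ring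
    rw [e]
    refine (norm_add₃_le).trans ?_
    have : 9 * K * (B / σ ^ 2) = 3 * (3 * K / σ ^ 2 * B) := by ring
    rw [this]; linarith

/-- Refinement which may be skipped. -/
lemma refine_opt (L : ℕ) (B D : ℝ) (hD : 0 ≤ D) (hB : Bes A good L B) (Λ : Bitile → ℂ) (K : ℝ) (hK : 0 ≤ K)
    (σ σ' : ℝ) (hσ : 0 < σ') (hor : σ' = σ ∨ B / σ' ^ 2 ≤ D) (PP : Finset Bitile) (hconv : Conv PP)
    (hsz : ∀ P ∈ PP, EE A good L PP P ≤ σ ^ 2 * 2 ^ P.k)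
    (hΛ : ∀ PP0 ⊆ PP, Conv PP0 → ∀ P ∈ PP0, ‖∑ Q ∈ PP0 with ble Q P, Λ Q‖ ≤ K * 2 ^ P.k) :
    ∃ PP' ⊆ PP, Conv PP' ∧ (∀ P ∈ PP', EE A good L PP' P ≤ σ' ^ 2 * 2 ^ P.k) ∧
      ‖∑ Q ∈ PP, Λ Q - ∑ Q ∈ PP', Λ Q‖ ≤ 9 * K * D := by
  rcases hor with h | h
  · refine ⟨PP, subset_rfl, hconv, ?_, ?_⟩
    · rw [h]; exact hsz
    · simp; positivity
  · obtain ⟨PP', a, b, c, d⟩ := refine_one L B hB Λ K hK σ' hσ PP hconv hΛ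
    exact ⟨PP', a, b, c, d.trans (by gcongr)⟩

/-- All sizes of a collection are controlled. -/
def Sizes (A1 A2 A3 : ℤ → ℕ → ℕ → ℂ) (good : ℤ → ℕ → Prop) (L : ℕ) (PP : Finset Bitile)
    (σ1 σ2 σ3 : ℝ) : Prop :=
  (∀ P ∈ PP, EE A1 good 0 PP P ≤ σ1 ^ 2 * 2 ^ P.k) ∧
  (∀ P ∈ PP, EE A2 good (L + 1) PP P ≤ σ2 ^ 2 * 2 ^ P.k) ∧
  (∀ P ∈ PP, EE A3 good (L + 1) PP P ≤ σ3 ^ 2 * 2 ^ P.k)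

lemma EE_sub {L : ℕ} {σ : ℝ} {PP PP' : Finset Bitile} (h : PP' ⊆ PP)
    (H : ∀ P ∈ PP, EE A good L PP P ≤ σ ^ 2 * 2 ^ P.k) :
    ∀ P ∈ PP', EE A good L PP' P ≤ σ ^ 2 * 2 ^ P.k :=
  fun P hP => (EE_mono h L P).trans (H P (h hP))

lemma Sizes.sub {L : ℕ} {σ1 σ2 σ3 : ℝ} {PP PP' : Finset Bitile} (h : PP' ⊆ PP)
    (H : Sizes A1 A2 A3 good L PP σ1 σ2 σ3) : Sizes A1 A2 A3 good L PP' σ1 σ2 σ3 :=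
  ⟨EE_sub h H.1, EE_sub h H.2.1, EE_sub h H.2.2⟩

lemma level_step (hA2 : Rec A2) (hA3 : Rec A3) (hg : Her good)
    (hbad : ∀ k n l, ¬ good k n → A2 k n l = 0) (L : ℕ) {B1 B2 B3 : ℝ}
    (hB1 : Bes A1 good 0 B1) (hB2 : Bes A2 good (L + 1) B2) (hB3 : Bes A3 good (L + 1) B3)
    {σ1 σ2 σ3 σ1' σ2' σ3' : ℝ} (p1 : 0 < σ1) (p2 : 0 < σ2) (p3 : 0 < σ3)
    (p1' : 0 < σ1') (p2' : 0 < σ2') (p3' : 0 < σ3') (D : ℝ) (hD : 0 ≤ D)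
    (o1 : σ1' = σ1 ∨ B1 / σ1' ^ 2 ≤ D) (o2 : σ2' = σ2 ∨ B2 / σ2' ^ 2 ≤ D)
    (o3 : σ3' = σ3 ∨ B3 / σ3' ^ 2 ≤ D)
    (PP : Finset Bitile) (hconv : Conv PP) (hS : Sizes A1 A2 A3 good L PP σ1 σ2 σ3) :
    ∃ PP' ⊆ PP, Conv PP' ∧ Sizes A1 A2 A3 good L PP' σ1' σ2' σ3' ∧
      ‖∑ Q ∈ PP, Lam L (MM A2 A3) A1 Q.k Q.n Q.l - ∑ Q ∈ PP', Lam L (MM A2 A3) A1 Q.k Q.n Q.l‖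
        ≤ 594 * (σ1 * σ2 * σ3) * D := by
  set K := 22 * σ1 * (σ2 * σ3) with hK
  have K0 : 0 ≤ K := by positivity
  have hΛ : ∀ PP0 ⊆ PP, Conv PP0 → ∀ P ∈ PP0,
      ‖∑ Q ∈ PP0 with ble Q P, Lam L (MM A2 A3) A1 Q.k Q.n Q.l‖ ≤ K * 2 ^ P.k := by
    intro PP0 h hc P hP
    have := hS.sub h
    exact tree_pack hA2 hA3 hg hbad p1 p2 p3 L PP0 hc this.1 this.2.1 this.2.2 P hP
  obtain ⟨Pa, sa, ca, ea, na⟩ := refine_opt 0 B1 D hD hB1 _ K K0 σ1 σ1' p1' o1 PP hconv hS.1 hΛ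
  obtain ⟨Pb, sb, cb, eb, nb⟩ := refine_opt (L + 1) B2 D hD hB2 _ K K0 σ2 σ2' p2' o2 Pa ca
    (EE_sub sa hS.2.1) (fun PP0 h => hΛ PP0 (h.trans sa))
  obtain ⟨Pc, sc, cc, ec, nc⟩ := refine_opt (L + 1) B3 D hD hB3 _ K K0 σ3 σ3' p3' o3 Pb cb
    (EE_sub (sb.trans sa) hS.2.2) (fun PP0 h => hΛ PP0 (h.trans (sb.trans sa)))
  refine ⟨Pc, sc.trans (sb.trans sa), cc, ⟨EE_sub (sc.trans sb) ea, EE_sub sc eb, ec⟩, ?_⟩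
  have e : ∑ Q ∈ PP, Lam L (MM A2 A3) A1 Q.k Q.n Q.l - ∑ Q ∈ Pc, Lam L (MM A2 A3) A1 Q.k Q.n Q.l =
    (∑ Q ∈ PP, Lam L (MM A2 A3) A1 Q.k Q.n Q.l - ∑ Q ∈ Pa, Lam L (MM A2 A3) A1 Q.k Q.n Q.l) +
    (∑ Q ∈ Pa, Lam L (MM A2 A3) A1 Q.k Q.n Q.l - ∑ Q ∈ Pb, Lam L (MM A2 A3) A1 Q.k Q.n Q.l) +
    (∑ Q ∈ Pb, Lam L (MM A2 A3) A1 Q.k Q.n Q.l - ∑ Q ∈ Pc, Lam L (MM A2 A3) A1 Q.k Q.n Q.l) := by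
    ring
  rw [e]
  refine (norm_add₃_le).trans ?_
  have : 594 * (σ1 * σ2 * σ3) * D = 27 * K * D := by rw [hK]; ring
  rw [this]; linarith

lemma ble_antisymm {P Q : Bitile} (h : ble P Q) (h' : ble Q P) : P = Q := by
  have hk := h.1
  have hk' := h'.1
  rw [ble_iff] at h
  obtain ⟨δ, a, b, c⟩ := h
  have : δ = 0 := by omega
  subst this
  obtain ⟨pk, pn, pl⟩ := P
  obtain ⟨qk, qn, ql⟩ := Q
  simp at a b c
  subst a b c; rfl

lemma Conv_singleton (P : Bitile) : Conv {P} := by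
  intro P1 hP R hR hRn Q hQ hQR
  rw [Finset.mem_singleton] at hP hQ hRn
  subst hP hQ
  exact hRn (ble_antisymm hR hQR)

lemma iterate_levels (hA2 : Rec A2) (hA3 : Rec A3) (hg : Her good)
    (hbad : ∀ k n l, ¬ good k n → A2 k n l = 0) (L : ℕ) {B1 B2 B3 : ℝ}
    (hB1 : Bes A1 good 0 B1) (hB2 : Bes A2 good (L + 1) B2) (hB3 : Bes A3 good (L + 1) B3)
    (s1 s2 s3 D : ℕ → ℝ) (p1 : ∀ m, 0 < s1 m) (p2 : ∀ m, 0 < s2 m) (p3 : ∀ m, 0 < s3 m)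
    (hD : ∀ m, 0 ≤ D m)
    (o1 : ∀ m, s1 (m + 1) = s1 m ∨ B1 / s1 (m + 1) ^ 2 ≤ D m)
    (o2 : ∀ m, s2 (m + 1) = s2 m ∨ B2 / s2 (m + 1) ^ 2 ≤ D m)
    (o3 : ∀ m, s3 (m + 1) = s3 m ∨ B3 / s3 (m + 1) ^ 2 ≤ D m)
    (PP : Finset Bitile) (hconv : Conv PP) (hS : Sizes A1 A2 A3 good L PP (s1 0) (s2 0) (s3 0))
    (M : ℕ) :
    ‖∑ Q ∈ PP, Lam L (MM A2 A3) A1 Q.k Q.n Q.l‖ ≤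
      ∑ m ∈ Finset.range M, 594 * (s1 m * s2 m * s3 m) * D m +
      22 * s1 M * (s2 M * s3 M) * ∑ P ∈ PP, (2:ℝ) ^ P.k := by
  have key : ∃ PP' ⊆ PP, Conv PP' ∧ Sizes A1 A2 A3 good L PP' (s1 M) (s2 M) (s3 M) ∧
      ‖∑ Q ∈ PP, Lam L (MM A2 A3) A1 Q.k Q.n Q.l - ∑ Q ∈ PP', Lam L (MM A2 A3) A1 Q.k Q.n Q.l‖
        ≤ ∑ m ∈ Finset.range M, 594 * (s1 m * s2 m * s3 m) * D m := by
    induction M with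
    | zero => exact ⟨PP, subset_rfl, hconv, hS, by simp⟩
    | succ M ih =>
      obtain ⟨P1, a, b, c, d⟩ := ih
      obtain ⟨P2, a', b', c', d'⟩ := level_step hA2 hA3 hg hbad L hB1 hB2 hB3 (p1 M) (p2 M) (p3 M)
        (p1 (M + 1)) (p2 (M + 1)) (p3 (M + 1)) (D M) (hD M) (o1 M) (o2 M) (o3 M) P1 b c
      refine ⟨P2, a'.trans a, b', c', ?_⟩
      rw [Finset.sum_range_succ]
      refine le_trans ?_ (add_le_add d d')
      refine le_trans (le_of_eq ?_) (norm_add_le _ _)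
      congr 1; ring
  obtain ⟨PP', a, b, c, d⟩ := key
  have single : ∀ P ∈ PP', ‖Lam L (MM A2 A3) A1 P.k P.n P.l‖ ≤ 22 * s1 M * (s2 M * s3 M) * 2 ^ P.k := by
    intro P hP
    have hs : ({P} : Finset Bitile) ⊆ PP' := by simpa using hP
    have t := c.sub hs
    have := tree_pack hA2 hA3 hg hbad (p1 M) (p2 M) (p3 M) L {P} (Conv_singleton P) t.1 t.2.1 t.2.2 P
      (by simp)
    rw [Finset.filter_true_of_mem (by intro x hx; rw [Finset.mem_singleton] at hx; rw [hx]; exact ble_refl P),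
      Finset.sum_singleton] at this
    exact this
  have h3 : ‖∑ Q ∈ PP', Lam L (MM A2 A3) A1 Q.k Q.n Q.l‖ ≤
      22 * s1 M * (s2 M * s3 M) * ∑ P ∈ PP, (2:ℝ) ^ P.k := by
    refine (norm_sum_le _ _).trans ((Finset.sum_le_sum single).trans ?_)
    rw [← Finset.mul_sum]
    have := p1 M
    have := p2 M
    have := p3 M
    gcongr
  have := norm_sub_norm_le (∑ Q ∈ PP, Lam L (MM A2 A3) A1 Q.k Q.n Q.l)
    (∑ Q ∈ PP', Lam L (MM A2 A3) A1 Q.k Q.n Q.l)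
  linarith

end Part5


section Part6

variable {A A1 A2 A3 : ℤ → ℕ → ℕ → ℂ} {good : ℤ → ℕ → Prop}

lemma smin_le {x θ α : ℝ} (hx : 0 < x) (hx1 : x ≤ 1) (h0 : 0 ≤ θ) (h1 : θ ≤ 1 / 2)
    (hα : α ≤ 1 - θ) (m : ℕ) :
    min (8 * x) (8 * ((1 / 2) ^ m * √x)) ≤ 8 * (x ^ α * ((1 / 4 : ℝ) ^ θ) ^ m) := by
  have hmin : min (8 * x) (8 * ((1 / 2) ^ m * √x)) = 8 * min x ((1 / 2) ^ m * √x) := by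
    rw [mul_min_of_nonneg _ _ (by norm_num)]
  rw [hmin]
  have hy : 0 < (1 / 2 : ℝ) ^ m * √x := by positivity
  set y := (1 / 2 : ℝ) ^ m * √x with hyd
  have hz : 0 < min x y := lt_min hx hy
  have e1 : min x y = (min x y) ^ (1 - 2 * θ) * (min x y) ^ (2 * θ) := by
    rw [← Real.rpow_add hz]; norm_num
  have e2 : y ^ (2 * θ) = x ^ θ * ((1 / 4 : ℝ) ^ θ) ^ m := by
    rw [Real.rpow_mul hy.le]
    have : y ^ (2:ℝ) = (1 / 4 : ℝ) ^ m * x := by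
      rw [Real.rpow_two, hyd, mul_pow, Real.sq_sqrt hx.le, ← pow_mul, mul_comm m 2, pow_mul]
      norm_num
    rw [this, Real.mul_rpow (by positivity) hx.le, ← Real.rpow_natCast, ← Real.rpow_mul (by norm_num),
      mul_comm (m : ℝ) θ, Real.rpow_mul (by norm_num), Real.rpow_natCast]
    ring
  have e3 : min x y ≤ x ^ (1 - θ) * ((1 / 4 : ℝ) ^ θ) ^ m := by
    rw [e1]
    calc _ ≤ x ^ (1 - 2 * θ) * y ^ (2 * θ) := 
          mul_le_mul (Real.rpow_le_rpow hz.le (min_le_left _ _) (by linarith))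
            (Real.rpow_le_rpow hz.le (min_le_right _ _) (by linarith)) (by positivity) (by positivity)
      _ = x ^ (1 - 2 * θ + θ) * ((1 / 4 : ℝ) ^ θ) ^ m := by rw [e2, Real.rpow_add hx]; ring
      _ = _ := by ring_nf
  have e4 : x ^ (1 - θ) ≤ x ^ α := Real.rpow_le_rpow_of_exponent_ge hx hx1 hα
  have : x ^ (1 - θ) * ((1 / 4 : ℝ) ^ θ) ^ m ≤ x ^ α * ((1 / 4 : ℝ) ^ θ) ^ m := by gcongr
  linarith

lemma smin_or {b x B : ℝ} (hb : 0 < b) (hx : 0 < x) (hB : B = x * b) (m : ℕ) :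
    min (8 * x) (8 * ((1 / 2) ^ (m + 1) * √x)) = min (8 * x) (8 * ((1 / 2) ^ m * √x)) ∨
    B / (min (8 * x) (8 * ((1 / 2) ^ (m + 1) * √x))) ^ 2 ≤ b * 4 ^ (m + 1) := by
  rcases le_total (8 * x) (8 * ((1 / 2) ^ (m + 1) * √x)) with h | h
  · left
    rw [min_eq_left h, min_eq_left]
    refine h.trans ?_
    have : (1 / 2 : ℝ) ^ (m + 1) ≤ (1 / 2) ^ m := by
      rw [pow_succ]
      have : (0:ℝ) ≤ (1 / 2) ^ m := by positivity
      linarith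
    gcongr
  · right
    rw [min_eq_right h, hB]
    have e : (8 * ((1 / 2) ^ (m + 1) * √x)) ^ 2 = 64 * (x * (1 / 4) ^ (m + 1)) := by
      rw [mul_pow, mul_pow, Real.sq_sqrt hx.le, ← pow_mul, mul_comm (m + 1) 2, pow_mul]
      norm_num; ring
    rw [e, div_le_iff₀ (by positivity)]
    have : (4:ℝ) ^ (m + 1) * (1 / 4) ^ (m + 1) = 1 := by rw [← mul_pow]; norm_num
    have e2 : b * 4 ^ (m + 1) * (64 * (x * (1 / 4) ^ (m + 1))) =
      64 * (x * b) * (4 ^ (m + 1) * (1 / 4) ^ (m + 1)) := by ring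
    rw [e2, this]
    nlinarith [mul_pos hx hb]

/-- The abstract main estimate for finite collections. -/
lemma abstract_bound (α1 α3 : ℝ) (h1 : α1 < 1) (h3 : α3 < 1)
    (h13 : α1 + α3 < 3 / 2) : ∃ C : ℝ, 0 ≤ C ∧
    ∀ (A1 A2 A3 : ℤ → ℕ → ℕ → ℂ) (good : ℤ → ℕ → Prop), Rec A1 → Rec A2 → Rec A3 → Her good →
    (∀ k n l, ¬ good k n → A2 k n l = 0) → ∀ L : ℕ, ∀ a b c : ℝ, 0 < a → 0 < c → a ≤ b → c ≤ b →
    (∀ k n l, good k n → ‖A1 k n l‖ ≤ 4 * (a / b)) →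
    (∀ k n l, good k n → ‖A2 k n l‖ ≤ 1) →
    (∀ k n l, good k n → ‖A3 k n l‖ ≤ 4 * (c / b)) →
    Bes A1 good 0 a → Bes A2 good (L + 1) b → Bes A3 good (L + 1) c →
    ∀ PP : Finset Bitile, Conv PP →
      ‖∑ Q ∈ PP, Lam L (MM A2 A3) A1 Q.k Q.n Q.l‖ ≤ C * (b * (a / b) ^ α1 * (c / b) ^ α3) := by
  set θ1 := min (1 - α1) (1 / 2) with ht1
  set θ3 := min (1 - α3) (1 / 2) with ht3
  have t1a : 0 ≤ θ1 := le_min (by linarith) (by norm_num)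
  have t3a : 0 ≤ θ3 := le_min (by linarith) (by norm_num)
  have t1b : θ1 ≤ 1 / 2 := min_le_right _ _
  have t3b : θ3 ≤ 1 / 2 := min_le_right _ _
  have t1c : α1 ≤ 1 - θ1 := by linarith [min_le_left (1 - α1) (1 / 2)]
  have t3c : α3 ≤ 1 - θ3 := by linarith [min_le_left (1 - α3) (1 / 2)]
  have tt : 1 / 2 < θ1 + θ3 := by
    rw [ht1, ht3]
    rcases min_choice (1 - α1) (1 / 2) with h | h <;> rcases min_choice (1 - α3) (1 / 2) with h' | h' <;>
      rw [h, h'] <;> linarith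
  set q : ℝ := 2 * ((1 / 4 : ℝ) ^ θ1 * (1 / 4 : ℝ) ^ θ3) with hq
  have q0 : 0 ≤ q := by positivity
  have q1 : q < 1 := by
    rw [hq, ← Real.rpow_add (by norm_num)]
    have a : (1 / 4 : ℝ) ^ (θ1 + θ3) < (1 / 4 : ℝ) ^ (1 / 2 : ℝ) :=
      Real.rpow_lt_rpow_of_exponent_gt (by norm_num) (by norm_num) tt
    have b : (1 / 4 : ℝ) ^ (1 / 2 : ℝ) = 1 / 2 := by
      rw [← Real.sqrt_eq_rpow, show (1 / 4 : ℝ) = (1 / 2) ^ 2 by norm_num, Real.sqrt_sq (by norm_num)]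
    linarith
  have q1' : 0 < 1 - q := by linarith
  refine ⟨594 * 512 / (1 - q), by positivity, ?_⟩
  intro A1 A2 A3 good r1 r2 r3 hg hbad L a b c ha hc hab hcb hS1 hS2 hS3 hB1 hB2 hB3 PP hconv
  have hb : 0 < b := ha.trans_le hab
  set x := a / b with hx
  set z := c / b with hz
  have x0 : 0 < x := by positivity
  have z0 : 0 < z := by positivity
  have x1 : x ≤ 1 := by rw [hx, div_le_one hb]; exact hab
  have z1 : z ≤ 1 := by rw [hz, div_le_one hb]; exact hcb
  have ea : a = x * b := by rw [hx]; field_simp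
  have ec : c = z * b := by rw [hz]; field_simp
  have sz : ∀ {y : ℝ}, 0 < y → y ≤ 1 → min (8 * y) (8 * ((1 / 2) ^ 0 * √y)) = 8 * y := by
    intro y h0 h1
    rw [min_eq_left]
    have : y ≤ √y := Real.le_sqrt_of_sq_le (by nlinarith)
    simpa using this
  have main := iterate_levels r2 r3 hg hbad L hB1 hB2 hB3
    (fun m => min (8 * x) (8 * ((1 / 2) ^ m * √x))) (fun m => 2 * (1 / 2) ^ m)
    (fun m => min (8 * z) (8 * ((1 / 2) ^ m * √z))) (fun m => b * 4 ^ (m + 1))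
    (fun m => lt_min (by positivity) (by positivity)) (fun m => by positivity)
    (fun m => lt_min (by positivity) (by positivity)) (fun m => by positivity)
    (fun m => smin_or hb x0 ea m) (fun m => Or.inr (by
      have : (2 * (1 / 2 : ℝ) ^ (m + 1)) ^ 2 = 4 * (1 / 4) ^ (m + 1) := by
        rw [mul_pow, ← pow_mul, mul_comm (m + 1) 2, pow_mul]; norm_num
      rw [this, div_le_iff₀ (by positivity)]
      have e : (4:ℝ) ^ (m + 1) * (1 / 4) ^ (m + 1) = 1 := by rw [← mul_pow]; norm_num
      have e2 : b * 4 ^ (m + 1) * (4 * (1 / 4) ^ (m + 1)) =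
        4 * b * ((4:ℝ) ^ (m + 1) * (1 / 4) ^ (m + 1)) := by ring
      rw [e2, e]; linarith))
    (fun m => smin_or hb z0 ec m) PP hconv (by
      refine ⟨fun P _ => ?_, fun P _ => ?_, fun P _ => ?_⟩
      · refine (EE_bound r1 hg _ hS1 0 PP P).trans (le_of_eq ?_)
        rw [sz x0 x1]; ring
      · refine (EE_bound r2 hg _ hS2 (L + 1) PP P).trans (le_of_eq ?_)
        norm_num
      · refine (EE_bound r3 hg _ hS3 (L + 1) PP P).trans (le_of_eq ?_)
        rw [sz z0 z1]; ring)
  set Y := b * x ^ α1 * z ^ α3 with hY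
  have Y0 : 0 ≤ Y := by positivity
  have serr : ∀ m : ℕ, 594 * (min (8 * x) (8 * ((1 / 2) ^ m * √x)) * (2 * (1 / 2) ^ m) *
      min (8 * z) (8 * ((1 / 2) ^ m * √z))) * (b * 4 ^ (m + 1)) ≤ 594 * 512 * Y * q ^ m := by
    intro m
    have u1 := smin_le x0 x1 t1a t1b t1c m
    have u3 := smin_le z0 z1 t3a t3b t3c m
    have v1 : 0 ≤ min (8 * x) (8 * ((1 / 2) ^ m * √x)) := le_min (by positivity) (by positivity)
    have v3 : 0 ≤ min (8 * z) (8 * ((1 / 2) ^ m * √z)) := le_min (by positivity) (by positivity)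
    calc _ ≤ 594 * ((8 * (x ^ α1 * ((1 / 4 : ℝ) ^ θ1) ^ m)) * (2 * (1 / 2) ^ m) *
          (8 * (z ^ α3 * ((1 / 4 : ℝ) ^ θ3) ^ m))) * (b * 4 ^ (m + 1)) := by gcongr
      _ = _ := by
        have : (2:ℝ) ^ m = (1 / 2) ^ m * 4 ^ m := by rw [← mul_pow]; norm_num
        rw [hY, hq, mul_pow, mul_pow, this]; ring
  have fin : ∀ M : ℕ, ‖∑ Q ∈ PP, Lam L (MM A2 A3) A1 Q.k Q.n Q.l‖ ≤ 594 * 512 / (1 - q) * Y +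
      (22 * (8 * x) * (2 * (8 * z)) * ∑ P ∈ PP, (2:ℝ) ^ P.k) * (1 / 2) ^ M := by
    intro M
    refine (main M).trans (add_le_add ?_ ?_)
    · calc _ ≤ ∑ m ∈ Finset.range M, 594 * 512 * Y * q ^ m := Finset.sum_le_sum fun m _ => serr m
        _ = 594 * 512 * Y * ∑ m ∈ Finset.range M, q ^ m := by rw [Finset.mul_sum]
        _ ≤ 594 * 512 * Y * (1 - q)⁻¹ := by
          gcongr
          rw [← tsum_geometric_of_lt_one q0 q1]
          exact (summable_geometric_of_lt_one q0 q1).sum_le_tsum _ (fun _ _ => by positivity)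
        _ = _ := by ring
    · have w1 : min (8 * x) (8 * ((1 / 2) ^ M * √x)) ≤ 8 * x := min_le_left _ _
      have w3 : min (8 * z) (8 * ((1 / 2) ^ M * √z)) ≤ 8 * z := min_le_left _ _
      have v1 : 0 ≤ min (8 * x) (8 * ((1 / 2) ^ M * √x)) := le_min (by positivity) (by positivity)
      have v3 : 0 ≤ min (8 * z) (8 * ((1 / 2) ^ M * √z)) := le_min (by positivity) (by positivity)
      have X0 : 0 ≤ ∑ P ∈ PP, (2:ℝ) ^ P.k := Finset.sum_nonneg fun _ _ => by positivity
      generalize min (8 * x) (8 * ((1 / 2) ^ M * √x)) = p1 at w1 v1 ⊢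
      generalize min (8 * z) (8 * ((1 / 2) ^ M * √z)) = p3 at w3 v3 ⊢
      generalize ∑ P ∈ PP, (2:ℝ) ^ P.k = S0 at X0 ⊢
      have hM : (0:ℝ) < (1 / 2) ^ M := by positivity
      generalize (1 / 2 : ℝ) ^ M = h0 at hM ⊢
      have k1 : p1 * p3 ≤ (8 * x) * (8 * z) := mul_le_mul w1 w3 v3 (by positivity)
      have k2 : 0 ≤ 44 * h0 * S0 := by positivity
      have k3 := mul_le_mul_of_nonneg_right k1 k2
      nlinarith [k3]
  have lim : Filter.Tendsto (fun M : ℕ => 594 * 512 / (1 - q) * Y +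
      (22 * (8 * x) * (2 * (8 * z)) * ∑ P ∈ PP, (2:ℝ) ^ P.k) * (1 / 2) ^ M) Filter.atTop
      (nhds (594 * 512 / (1 - q) * Y + (22 * (8 * x) * (2 * (8 * z)) * ∑ P ∈ PP, (2:ℝ) ^ P.k) * 0)) :=
    (_root_.tendsto_pow_atTop_nhds_zero_of_lt_one (r := (1 / 2 : ℝ)) (by norm_num) (by norm_num)).const_mul _ |>.const_add _
  rw [mul_zero, add_zero] at lim
  exact ge_of_tendsto' lim fin

end Part6


section Part7

lemma walsh_zero (x : ℝ) : walsh 0 x = if 0 ≤ x ∧ x < 1 then 1 else 0 := by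
  rw [walsh]; simp

lemma walsh_even (l : ℕ) (x : ℝ) : walsh (2 * l) x = walsh l (2 * x) + walsh l (2 * x - 1) := by
  rcases Nat.eq_zero_or_pos l with rfl | h
  · simp only [mul_zero, walsh_zero]
    rcases lt_or_ge x 0 with h | h
    · rw [if_neg (fun e => by linarith [e.1]), if_neg (fun e => by linarith [e.1]),
        if_neg (fun e => by linarith [e.1])]; norm_num
    rcases lt_or_ge x (1 / 2) with h' | h'
    · rw [if_pos ⟨h, by linarith⟩, if_pos ⟨by linarith, by linarith⟩, if_neg (fun e => by linarith [e.1])]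
      norm_num
    rcases lt_or_ge x 1 with h'' | h''
    · rw [if_pos ⟨h, by linarith⟩, if_neg (fun e => by linarith [e.2]), if_pos ⟨by linarith, by linarith⟩]
      norm_num
    · rw [if_neg (fun e => by linarith [e.2]), if_neg (fun e => by linarith [e.2]),
        if_neg (fun e => by linarith [e.2])]; norm_num
  · rw [walsh]
    have : 2 * l ≠ 0 := by omega
    simp [this]

lemma walsh_odd (l : ℕ) (x : ℝ) : walsh (2 * l + 1) x = walsh l (2 * x) - walsh l (2 * x - 1) := by
  rw [walsh]
  have e1 : (2 * l + 1) % 2 = 1 := by omega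
  have e2 : (2 * l + 1) / 2 = l := by omega
  simp [e1, e2]

lemma walsh_supp (l : ℕ) : ∀ x : ℝ, ¬ (0 ≤ x ∧ x < 1) → walsh l x = 0 := by
  induction l using Nat.strong_induction_on with
  | _ l ih =>
    intro x hx
    rcases Nat.eq_zero_or_pos l with rfl | h
    · rw [walsh_zero, if_neg hx]
    · have h1 := ih (l / 2) (by omega) (2 * x) (fun h => hx ⟨by linarith [h.1], by linarith [h.2]⟩)
      have h2 := ih (l / 2) (by omega) (2 * x - 1) (fun h => hx ⟨by linarith [h.1], by linarith [h.2]⟩)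
      rcases Nat.even_or_odd' l with ⟨m, rfl | rfl⟩
      · rw [walsh_even]
        rw [show 2 * m / 2 = m by omega] at h1 h2
        rw [h1, h2]; simp
      · rw [walsh_odd]
        rw [show (2 * m + 1) / 2 = m by omega] at h1 h2
        rw [h1, h2]; simp

lemma walsh_pm (l : ℕ) : ∀ x : ℝ, (0 ≤ x ∧ x < 1) → walsh l x = 1 ∨ walsh l x = -1 := by
  induction l using Nat.strong_induction_on with
  | _ l ih =>
    intro x hx
    rcases Nat.eq_zero_or_pos l with rfl | h
    · rw [walsh_zero, if_pos hx]; simp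
    · have key : (walsh (l / 2) (2 * x) = 0 ∧ (walsh (l / 2) (2 * x - 1) = 1 ∨ walsh (l / 2) (2 * x - 1) = -1)) ∨
        (walsh (l / 2) (2 * x - 1) = 0 ∧ (walsh (l / 2) (2 * x) = 1 ∨ walsh (l / 2) (2 * x) = -1)) := by
        rcases lt_or_ge x (1 / 2) with hh | hh
        · right
          exact ⟨walsh_supp _ _ (fun h => by linarith [h.1]), ih _ (by omega) _ ⟨by linarith, by linarith⟩⟩
        · left
          exact ⟨walsh_supp _ _ (fun h => by linarith [h.2]), ih _ (by omega) _ ⟨by linarith, by linarith⟩⟩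
      rcases Nat.even_or_odd' l with ⟨m, rfl | rfl⟩
      · rw [walsh_even]
        rw [show 2 * m / 2 = m by omega] at key
        rcases key with ⟨h1, h2 | h2⟩ | ⟨h1, h2 | h2⟩ <;> simp [h1, h2]
      · rw [walsh_odd]
        rw [show (2 * m + 1) / 2 = m by omega] at key
        rcases key with ⟨h1, h2 | h2⟩ | ⟨h1, h2 | h2⟩ <;> simp [h1, h2]

lemma walsh_meas (l : ℕ) : Measurable (walsh l) := by
  induction l using Nat.strong_induction_on with
  | _ l ih =>
    rcases Nat.eq_zero_or_pos l with rfl | h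
    · have : walsh 0 = (Ico (0:ℝ) 1).indicator (fun _ => (1:ℝ)) := by
        ext x; rw [walsh_zero]; simp [Set.indicator]
      rw [this]
      exact measurable_const.indicator measurableSet_Ico
    · have h1 : Measurable fun x : ℝ => walsh (l / 2) (2 * x) := (ih _ (by omega)).comp (by fun_prop)
      have h2 : Measurable fun x : ℝ => walsh (l / 2) (2 * x - 1) := (ih _ (by omega)).comp (by fun_prop)
      rcases Nat.even_or_odd' l with ⟨m, rfl | rfl⟩
      · rw [show 2 * m / 2 = m by omega] at h1 h2
        have : walsh (2 * m) = fun x => walsh m (2 * x) + walsh m (2 * x - 1) := by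
          ext x; exact walsh_even m x
        rw [this]; exact h1.add h2
      · rw [show (2 * m + 1) / 2 = m by omega] at h1 h2
        have : walsh (2 * m + 1) = fun x => walsh m (2 * x) - walsh m (2 * x - 1) := by
          ext x; exact walsh_odd m x
        rw [this]; exact h1.sub h2

/-- `L^∞` normalized Walsh packet. -/
def ww (k : ℤ) (n l : ℕ) (x : ℝ) : ℝ := walsh l ((2:ℝ) ^ (-k) * x - n)

lemma zpow_neg_pred (k : ℤ) : (2:ℝ) ^ (-(k - 1)) = 2 * (2:ℝ) ^ (-k) := by
  rw [show -(k - 1) = -k + 1 by ring, zpow_add_one₀ (by norm_num)]; ring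

lemma ww_even (k : ℤ) (n l : ℕ) (x : ℝ) :
    ww k n (2 * l) x = ww (k - 1) (2 * n) l x + ww (k - 1) (2 * n + 1) l x := by
  unfold ww
  rw [walsh_even, zpow_neg_pred]; push_cast; congr 2 <;> ring

lemma ww_odd (k : ℤ) (n l : ℕ) (x : ℝ) :
    ww k n (2 * l + 1) x = ww (k - 1) (2 * n) l x - ww (k - 1) (2 * n + 1) l x := by
  unfold ww
  rw [walsh_odd, zpow_neg_pred]; push_cast; congr 2 <;> ring

lemma mem_dy (k : ℤ) (n : ℕ) (x : ℝ) :
    x ∈ dyadicI k n ↔ 0 ≤ (2:ℝ) ^ (-k) * x - n ∧ (2:ℝ) ^ (-k) * x - n < 1 := by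
  unfold dyadicI
  have h : (0:ℝ) < (2:ℝ) ^ k := by positivity
  rw [mem_Ico, zpow_neg, sub_nonneg, sub_lt_iff_lt_add, inv_mul_eq_div, le_div_iff₀ h, div_lt_iff₀ h]
  rw [mul_comm (n:ℝ), mul_comm _ ((2:ℝ) ^ k), add_comm (1:ℝ)]

lemma ww_supp {k : ℤ} {n : ℕ} {x : ℝ} (h : x ∉ dyadicI k n) (l : ℕ) : ww k n l x = 0 :=
  walsh_supp _ _ (by rwa [← mem_dy])

lemma ww_pm {k : ℤ} {n : ℕ} {x : ℝ} (h : x ∈ dyadicI k n) (l : ℕ) : ww k n l x = 1 ∨ ww k n l x = -1 :=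
  walsh_pm _ _ (by rwa [← mem_dy])

lemma ww_abs_le (k : ℤ) (n l : ℕ) (x : ℝ) : |ww k n l x| ≤ (dyadicI k n).indicator 1 x := by
  by_cases h : x ∈ dyadicI k n
  · rcases ww_pm h l with e | e <;> simp [e, h]
  · simp [ww_supp h, h]

lemma ww_meas (k : ℤ) (n l : ℕ) : Measurable (ww k n l) := (walsh_meas l).comp (by fun_prop)

lemma dy_meas (k : ℤ) (n : ℕ) : MeasurableSet (dyadicI k n) := measurableSet_Ico

lemma dy_vol (k : ℤ) (n : ℕ) : volume (dyadicI k n) = ENNReal.ofReal ((2:ℝ) ^ k) := by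
  unfold dyadicI; rw [Real.volume_Ico]; congr 1; ring

lemma dy_mem_iff (k : ℤ) (n : ℕ) (x : ℝ) : x ∈ dyadicI k n ↔ 0 ≤ x ∧ n = ⌊(2:ℝ) ^ (-k) * x⌋₊ := by
  rw [mem_dy]
  have h2 : (0:ℝ) < (2:ℝ) ^ (-k) := by positivity
  constructor
  · rintro ⟨h, h'⟩
    have hx : 0 ≤ (2:ℝ) ^ (-k) * x := by
      have : (0:ℝ) ≤ n := by positivity
      linarith
    refine ⟨nonneg_of_mul_nonneg_right hx h2, ?_⟩
    symm
    rw [Nat.floor_eq_iff hx]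
    constructor <;> linarith
  · rintro ⟨h, h'⟩
    have hx : 0 ≤ (2:ℝ) ^ (-k) * x := by positivity
    have := (Nat.floor_eq_iff hx).1 h'.symm
    constructor <;> linarith

lemma dy_ne {k : ℤ} {n n' : ℕ} (h : n ≠ n') (x : ℝ) (hx : x ∈ dyadicI k n) : x ∉ dyadicI k n' := by
  intro hx'
  exact h (((dy_mem_iff _ _ _).1 hx).2.trans ((dy_mem_iff _ _ _).1 hx').2.symm)

lemma ww_mul_ne {k : ℤ} {n n' : ℕ} (h : n ≠ n') (l l' : ℕ) (x : ℝ) : ww k n l x * ww k n' l' x = 0 := by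
  by_cases hx : x ∈ dyadicI k n
  · rw [ww_supp (dy_ne h x hx), mul_zero]
  · rw [ww_supp hx, zero_mul]

lemma dy_ind_int (k : ℤ) (n : ℕ) : Integrable ((dyadicI k n).indicator (1 : ℝ → ℝ)) := by
  refine (integrable_indicator_iff (dy_meas k n)).2 ?_
  refine integrableOn_const (by rw [dy_vol]; exact ENNReal.ofReal_ne_top)

lemma ww_int (k : ℤ) (n l : ℕ) : Integrable (ww k n l) :=
  (dy_ind_int k n).mono' (ww_meas k n l).aestronglyMeasurable (ae_of_all _ fun x => ww_abs_le k n l x)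

lemma ww_abs_le1 (k : ℤ) (n l : ℕ) (x : ℝ) : |ww k n l x| ≤ 1 :=
  (ww_abs_le k n l x).trans (by by_cases h : x ∈ dyadicI k n <;> simp [h])

lemma ww_mul_int (k : ℤ) (n l : ℕ) (k' : ℤ) (n' l' : ℕ) :
    Integrable (fun x => ww k n l x * ww k' n' l' x) :=
  (ww_int k' n' l').bdd_mul (ww_meas k n l).aestronglyMeasurable (c := 1)
    (ae_of_all _ fun x => ww_abs_le1 k n l x)

lemma ww_norm (l : ℕ) : ∀ (l' : ℕ) (k : ℤ) (n : ℕ),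
    ∫ x, ww k n l x * ww k n l' x = if l = l' then (2:ℝ) ^ k else 0 := by
  suffices H : ∀ s l l' : ℕ, l + l' = s → ∀ (k : ℤ) (n : ℕ),
      ∫ x, ww k n l x * ww k n l' x = if l = l' then (2:ℝ) ^ k else 0 from
    fun l' k n => H _ l l' rfl k n
  intro s
  induction s using Nat.strong_induction_on with
  | _ s ih =>
    intro l l' hs k n
    rcases Nat.eq_zero_or_pos s with h0 | h0
    · obtain ⟨rfl, rfl⟩ : l = 0 ∧ l' = 0 := by omega
      have : ∀ x, ww k n 0 x * ww k n 0 x = (dyadicI k n).indicator (fun _ => (1:ℝ)) x := by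
        intro x
        by_cases h : x ∈ dyadicI k n
        · rcases ww_pm h 0 with e | e <;> simp [e, h]
        · simp [ww_supp h, h]
      simp_rw [this]
      rw [integral_indicator_const _ (dy_meas k n)]
      simp [Measure.real, dy_vol, ENNReal.toReal_ofReal, zpow_nonneg]
    · have e := fun m m' (h : m + m' < s) => ih _ h m m' rfl (k - 1) (2 * n)
      have e' := fun m m' (h : m + m' < s) => ih _ h m m' rfl (k - 1) (2 * n + 1)
      have hne : 2 * n ≠ 2 * n + 1 := by omega
      have t : (2:ℝ) ^ k = 2 ^ (k - 1) + 2 ^ (k - 1) := by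
        rw [zpow_sub_one₀ (by norm_num)]; ring
      have i := ww_mul_int (k - 1) (2 * n)
      have i' := ww_mul_int (k - 1) (2 * n + 1)
      have pl : ∀ m m', ∫ x, (ww (k - 1) (2 * n) m x * ww (k - 1) (2 * n) m' x +
          ww (k - 1) (2 * n + 1) m x * ww (k - 1) (2 * n + 1) m' x) = 
          (∫ x, ww (k - 1) (2 * n) m x * ww (k - 1) (2 * n) m' x) + 
          ∫ x, ww (k - 1) (2 * n + 1) m x * ww (k - 1) (2 * n + 1) m' x := fun m m' =>
        integral_add (i _ _ _ _) (i' _ _ _ _)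
      have mi : ∀ m m', ∫ x, (ww (k - 1) (2 * n) m x * ww (k - 1) (2 * n) m' x -
          ww (k - 1) (2 * n + 1) m x * ww (k - 1) (2 * n + 1) m' x) = 
          (∫ x, ww (k - 1) (2 * n) m x * ww (k - 1) (2 * n) m' x) - 
          ∫ x, ww (k - 1) (2 * n + 1) m x * ww (k - 1) (2 * n + 1) m' x := fun m m' =>
        integral_sub (i _ _ _ _) (i' _ _ _ _)
      rcases Nat.even_or_odd' l with ⟨m, rfl | rfl⟩ <;> rcases Nat.even_or_odd' l' with ⟨m', rfl | rfl⟩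
      · rw [integral_congr_ae (ae_of_all _ fun x => show _ = (ww (k - 1) (2 * n) m x * ww (k - 1) (2 * n) m' x +
          ww (k - 1) (2 * n + 1) m x * ww (k - 1) (2 * n + 1) m' x) from ?_)]
        · rw [pl, e _ _ (by omega), e' _ _ (by omega)]
          by_cases h : m = m' <;> simp [h, t]
        · rw [ww_even, ww_even]
          linear_combination ww_mul_ne (k := k - 1) hne m m' x + ww_mul_ne (k := k - 1) hne.symm m m' x
      · rw [integral_congr_ae (ae_of_all _ fun x => show _ = (ww (k - 1) (2 * n) m x * ww (k - 1) (2 * n) m' x -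
          ww (k - 1) (2 * n + 1) m x * ww (k - 1) (2 * n + 1) m' x) from ?_)]
        · rw [mi, e _ _ (by omega), e' _ _ (by omega)]
          rw [if_neg (show ¬ (2 * m = 2 * m' + 1) by omega)]; ring
        · rw [ww_even, ww_odd]
          linear_combination - ww_mul_ne (k := k - 1) hne m m' x + ww_mul_ne (k := k - 1) hne.symm m m' x
      · rw [integral_congr_ae (ae_of_all _ fun x => show _ = (ww (k - 1) (2 * n) m x * ww (k - 1) (2 * n) m' x -
          ww (k - 1) (2 * n + 1) m x * ww (k - 1) (2 * n + 1) m' x) from ?_)]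
        · rw [mi, e _ _ (by omega), e' _ _ (by omega)]
          rw [if_neg (show ¬ (2 * m + 1 = 2 * m') by omega)]; ring
        · rw [ww_even, ww_odd]
          linear_combination ww_mul_ne (k := k - 1) hne m m' x - ww_mul_ne (k := k - 1) hne.symm m m' x
      · rw [integral_congr_ae (ae_of_all _ fun x => show _ = (ww (k - 1) (2 * n) m x * ww (k - 1) (2 * n) m' x +
          ww (k - 1) (2 * n + 1) m x * ww (k - 1) (2 * n + 1) m' x) from ?_)]
        · rw [pl, e _ _ (by omega), e' _ _ (by omega)]
          by_cases h : m = m' <;> simp [h, t]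
        · rw [ww_odd, ww_odd]
          linear_combination - ww_mul_ne (k := k - 1) hne m m' x - ww_mul_ne (k := k - 1) hne.symm m m' x

lemma ww_orth (k : ℤ) (n l : ℕ) (δ : ℕ) : ∀ n' l' : ℕ, ¬ (n' = n / 2 ^ δ ∧ l = l' / 2 ^ δ) →
    ∫ x, ww k n l x * ww (k + δ) n' l' x = 0 := by
  induction δ with
  | zero =>
    intro n' l' h
    simp only [pow_zero, Nat.div_one, Nat.cast_zero, add_zero] at h ⊢
    by_cases hn : n' = n
    · subst hn
      rw [ww_norm, if_neg (fun e => h ⟨rfl, e⟩)]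
    · simp_rw [ww_mul_ne (Ne.symm hn)]; simp
  | succ δ ih =>
    intro n' l' h
    have c : ∀ e, e < 2 → ∫ x, ww k n l x * ww (k + δ) (2 * n' + e) (l' / 2) x = 0 := by
      intro e he
      refine ih _ _ fun ⟨h1, h2⟩ => h ⟨?_, ?_⟩
      · rw [pow_succ, ← Nat.div_div_eq_div_mul, ← h1]; omega
      · rw [h2, Nat.div_div_eq_div_mul, pow_succ']
    have c0 := c 0 (by omega)
    have c1 := c 1 (by omega)
    have hk : k + ((δ + 1 : ℕ) : ℤ) - 1 = k + δ := by push_cast; ring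
    have i := fun a b => ww_mul_int k n l (k + δ) a b
    rcases Nat.even_or_odd' l' with ⟨m, rfl | rfl⟩
    · simp_rw [ww_even, hk, mul_add]
      rw [integral_add (i _ _) (i _ _)]
      rw [show 2 * m / 2 = m by omega] at c0 c1
      rw [add_zero] at c0
      rw [c0, c1, add_zero]
    · simp_rw [ww_odd, hk, mul_sub]
      rw [integral_sub (i _ _) (i _ _)]
      rw [show (2 * m + 1) / 2 = m by omega] at c0 c1
      rw [add_zero] at c0
      rw [c0, c1, sub_zero]

lemma ww_orth' {k : ℤ} {n l : ℕ} {k' : ℤ} {n' l' : ℕ} (h : ¬ tint k n l k' n' l')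
    (h' : ¬ tint k' n' l' k n l) : ∫ x, ww k n l x * ww k' n' l' x = 0 := by
  rcases le_total k k' with hk | hk
  · obtain ⟨δ, rfl⟩ := Int.le.dest hk
    exact ww_orth k n l δ n' l' fun ⟨a, b⟩ => h ⟨δ, rfl, a, b⟩
  · obtain ⟨δ, rfl⟩ := Int.le.dest hk
    simp_rw [mul_comm (ww _ n l _)]
    exact ww_orth k' n' l' δ n l fun ⟨a, b⟩ => h' ⟨δ, rfl, a, b⟩

end Part7


section Part8

/-- normalized coefficients. -/
def AA (f : ℝ → ℂ) (k : ℤ) (n l : ℕ) : ℂ := (2:ℂ) ^ (-k) * ∫ x, f x * (ww k n l x : ℂ)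

/-- Functions dominated by an indicator function. -/
structure Dom (f : ℝ → ℂ) (E : Set ℝ) : Prop where
  meas : Measurable f
  mE : MeasurableSet E
  fin : volume E < ∞
  le : ∀ x, ‖f x‖ ≤ E.indicator 1 x

variable {f : ℝ → ℂ} {E : Set ℝ}

lemma Dom.intInd (h : Dom f E) : Integrable (E.indicator (1 : ℝ → ℝ)) :=
  (integrable_indicator_iff h.mE).2 (integrableOn_const h.fin.ne)

lemma Dom.int (h : Dom f E) : Integrable f :=
  h.intInd.mono' h.meas.aestronglyMeasurable (ae_of_all _ h.le)

lemma Dom.le1 (h : Dom f E) (x : ℝ) : ‖f x‖ ≤ 1 :=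
  (h.le x).trans (by by_cases hx : x ∈ E <;> simp [hx])

lemma Dom.memLp (h : Dom f E) : MemLp f 2 := by
  refine (memLp_two_iff_integrable_sq_norm h.meas.aestronglyMeasurable).2 ?_
  refine h.intInd.mono' (h.meas.norm.pow_const 2).aestronglyMeasurable (ae_of_all _ fun x => ?_)
  have := h.le1 x
  have h0 := norm_nonneg (f x)
  rw [Real.norm_of_nonneg (by positivity)]
  exact le_trans (by nlinarith) (h.le x)

lemma fw_int (hf : Integrable f) (k : ℤ) (n l : ℕ) : Integrable (fun x => f x * (ww k n l x : ℂ)) :=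
  hf.mul_bdd (c := 1) (Complex.measurable_ofReal.comp (ww_meas k n l)).aestronglyMeasurable
    (ae_of_all _ fun x => by
      simpa using ww_abs_le1 k n l x)

lemma AA_rec (hf : Integrable f) : Rec (AA f) := by
  have t : ∀ k : ℤ, (2:ℂ) ^ (-(k - 1)) = 2 * (2:ℂ) ^ (-k) := by
    intro k
    rw [show -(k - 1) = -k + 1 by ring, zpow_add_one₀ (by norm_num)]; ring
  constructor
  · intro k n l
    unfold AA
    simp_rw [ww_even, Complex.ofReal_add, mul_add]
    rw [integral_add (fw_int hf _ _ _) (fw_int hf _ _ _), t]; ring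
  · intro k n l
    unfold AA
    simp_rw [ww_odd, Complex.ofReal_sub, mul_sub]
    rw [integral_sub (fw_int hf _ _ _) (fw_int hf _ _ _), t]; ring

lemma fw_norm_le (k : ℤ) (n l : ℕ) (x : ℝ) :
    ‖f x * (ww k n l x : ℂ)‖ ≤ (dyadicI k n).indicator (fun x => ‖f x‖) x := by
  have := ww_abs_le k n l x
  rw [norm_mul, Complex.norm_real, Real.norm_eq_abs]
  by_cases h : x ∈ dyadicI k n
  · simp only [h, indicator_of_mem, Pi.one_apply] at this ⊢
    exact mul_le_of_le_one_right (norm_nonneg _) this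
  · simp [ww_supp h, h]

lemma AA_le (hf : Integrable f) (k : ℤ) (n l : ℕ) :
    ‖AA f k n l‖ ≤ (2:ℝ) ^ (-k) * ∫ x in dyadicI k n, ‖f x‖ := by
  unfold AA
  rw [norm_mul, norm_zpow, Complex.norm_ofNat, ← integral_indicator (dy_meas k n)]
  gcongr
  exact norm_integral_le_of_norm_le (hf.norm.indicator (dy_meas k n)) (ae_of_all _ fun x => fw_norm_le k n l x)

lemma AA_int (f : ℝ → ℂ) (k : ℤ) (n l : ℕ) : ∫ x, f x * (ww k n l x : ℂ) = (2:ℂ) ^ k * AA f k n l := by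
  unfold AA
  rw [← mul_assoc, ← zpow_add₀ (by norm_num)]; simp

lemma wwc_memLp (k : ℤ) (n l : ℕ) : MemLp (fun x => (ww k n l x : ℂ)) 2 := by
  refine (memLp_two_iff_integrable_sq_norm
    (Complex.measurable_ofReal.comp (ww_meas k n l)).aestronglyMeasurable).2 ?_
  refine (ww_mul_int k n l k n l).congr (ae_of_all _ fun x => ?_)
  simp [sq]

/-- Bessel inequality. -/
lemma bessel (h : Dom f E) {ι : Type*} (s : Finset ι) (k : ι → ℤ) (n l : ι → ℕ)
    (hs : ∀ i ∈ s, ∀ j ∈ s, i ≠ j → ¬ tint (k i) (n i) (l i) (k j) (n j) (l j)) :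
    ∑ i ∈ s, (2:ℝ) ^ (k i) * ‖AA f (k i) (n i) (l i)‖ ^ 2 ≤ (volume E).toReal := by
  let v : s → Lp ℂ 2 (volume : Measure ℝ) := fun i =>
    ((Real.sqrt ((2:ℝ) ^ (-(k i))) : ℝ) : ℂ) • (wwc_memLp (k i) (n i) (l i)).toLp
  have hin : ∀ (i : s) (g : ℝ → ℂ) (hg : MemLp g 2), inner ℂ (v i) (hg.toLp g) =
      ((Real.sqrt ((2:ℝ) ^ (-(k i))) : ℝ) : ℂ) * ∫ x, g x * (ww (k i) (n i) (l i) x : ℂ) := by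
    intro i g hg
    rw [inner_smul_left, L2.inner_def]
    congr 1
    · simp
    · refine integral_congr_ae ?_
      filter_upwards [(wwc_memLp (k i) (n i) (l i)).coeFn_toLp, hg.coeFn_toLp] with x h1 h2
      rw [h1, h2]; simp
  have hvv : ∀ i j : s, inner ℂ (v i) (v j) = ((Real.sqrt ((2:ℝ) ^ (-(k j))) : ℝ) : ℂ) *
      (((Real.sqrt ((2:ℝ) ^ (-(k i))) : ℝ) : ℂ) *
        ((∫ x, ww (k j) (n j) (l j) x * ww (k i) (n i) (l i) x : ℝ) : ℂ)) := by
    intro i j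
    rw [show v j = ((Real.sqrt ((2:ℝ) ^ (-(k j))) : ℝ) : ℂ) • (wwc_memLp (k j) (n j) (l j)).toLp from rfl,
      inner_smul_right, hin, ← integral_complex_ofReal]
    simp
  have hv : Orthonormal ℂ v := by
    classical
    rw [orthonormal_iff_ite]
    intro i j
    rw [hvv]
    split_ifs with hij
    · subst hij
      rw [ww_norm, if_pos rfl, ← Complex.ofReal_mul, ← Complex.ofReal_mul, ← mul_assoc,
        Real.mul_self_sqrt (by positivity), ← zpow_add₀ (by norm_num)]
      simp
    · have hij' : (i : ι) ≠ j := fun e => hij (Subtype.ext e)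
      rw [ww_orth' (hs _ j.2 _ i.2 hij'.symm) (hs _ i.2 _ j.2 hij')]
      simp
  have B := hv.sum_inner_products_le (s := Finset.univ) (h.memLp.toLp f)
  have e1 : ∀ i : s, ‖inner ℂ (v i) (h.memLp.toLp f)‖ ^ 2 = (2:ℝ) ^ (k i) * ‖AA f (k i) (n i) (l i)‖ ^ 2 := by
    intro i
    rw [hin, AA_int]
    simp only [norm_mul, norm_zpow, Complex.norm_ofNat, Complex.norm_real, Real.norm_eq_abs, mul_pow, sq_abs]
    rw [Real.sq_sqrt (by positivity), ← mul_assoc, zpow_neg]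
    field_simp
  simp_rw [e1] at B
  rw [Finset.sum_coe_sort s (fun i => (2:ℝ) ^ (k i) * ‖AA f (k i) (n i) (l i)‖ ^ 2)] at B
  refine B.trans ?_
  have e2 : ‖h.memLp.toLp f‖ ^ 2 = ∫ x, ‖f x‖ ^ 2 := by
    rw [← inner_self_eq_norm_sq (𝕜 := ℂ), L2.inner_def, ← integral_re]
    · refine integral_congr_ae ?_
      filter_upwards [h.memLp.coeFn_toLp] with x h1
      rw [h1, inner_self_eq_norm_sq]
    · exact L2.integrable_inner _ _
  rw [e2]
  have : ∫ x, ‖f x‖ ^ 2 ≤ ∫ x, E.indicator (1 : ℝ → ℝ) x := by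
    refine integral_mono_of_nonneg (ae_of_all _ fun x => by positivity) h.intInd (ae_of_all _ fun x => ?_)
    have := h.le1 x
    have h0 := norm_nonneg (f x)
    exact le_trans (by nlinarith) (h.le x)
  rw [integral_indicator_one h.mE] at this
  exact this

lemma En_le_sum (A : ℤ → ℕ → ℕ → ℂ) (good : ℤ → ℕ → Prop) (d : ℕ) : ∀ (k : ℤ) (n l : ℕ),
    En A good d k n l ≤ ∑ m ∈ Finset.range (2 ^ d), (2:ℝ) ^ (k - d) * ‖A (k - d) (2 ^ d * n + m) l‖ ^ 2 := by
  induction d with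
  | zero =>
    intro k n l
    simp only [En, pow_zero, Finset.range_one, Finset.sum_singleton, Nat.cast_zero, sub_zero, one_mul, add_zero]
    split_ifs
    · rfl
    · positivity
  | succ d ih =>
    intro k n l
    rw [pow_succ, mul_two, Finset.sum_range_add]
    have h1 := ih (k - 1) (2 * n) l
    have h2 := ih (k - 1) (2 * n + 1) l
    have hk : k - ((d + 1 : ℕ) : ℤ) = k - 1 - d := by push_cast; ring
    rw [hk]
    have : En A good (d + 1) k n l = En A good d (k - 1) (2 * n) l + En A good d (k - 1) (2 * n + 1) l := rfl
    rw [this]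
    refine add_le_add (h1.trans (le_of_eq ?_)) (h2.trans (le_of_eq ?_))
    · refine Finset.sum_congr rfl fun m _ => ?_
      rw [show 2 ^ d * (2 * n) + m = (2 ^ d + 2 ^ d) * n + m by ring]
    · refine Finset.sum_congr rfl fun m _ => ?_
      rw [show 2 ^ d * (2 * n + 1) + m = (2 ^ d + 2 ^ d) * n + (2 ^ d + m) by ring]

lemma AA_bes (h : Dom f E) (good : ℤ → ℕ → Prop) (L : ℕ) : Bes (AA f) good L (volume E).toReal := by
  intro e he 𝒬 h𝒬
  refine (Finset.sum_le_sum fun Q _ => En_le_sum (AA f) good L Q.k Q.n (2 * Q.l + e)).trans ?_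
  rw [← Finset.sum_product']
  refine bessel h (𝒬 ×ˢ Finset.range (2 ^ L)) (fun i => i.1.k - L) (fun i => 2 ^ L * i.1.n + i.2)
    (fun i => 2 * i.1.l + e) ?_
  rintro ⟨Q, m⟩ hi ⟨Q', m'⟩ hj hne ⟨δ, h1, h2, h3⟩
  simp only [Finset.mem_product, Finset.mem_range] at hi hj
  dsimp only at h1 h2 h3
  by_cases hQ : Q = Q'
  · subst hQ
    have : δ = 0 := by omega
    subst this
    simp only [pow_zero, Nat.div_one] at h2
    apply hne
    have : m = m' := by omega
    rw [this]
  · refine (h𝒬 Q hi.1 Q' hj.1 hQ).1 ⟨δ, by omega, ?_, h3⟩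
    have a1 : (2 ^ L * Q'.n + m') / 2 ^ L = Q'.n := by
      rw [Nat.mul_add_div (by positivity), Nat.div_eq_of_lt hj.2, add_zero]
    have a2 : (2 ^ L * Q.n + m) / 2 ^ L = Q.n := by
      rw [Nat.mul_add_div (by positivity), Nat.div_eq_of_lt hi.2, add_zero]
    rw [← a1, h2, Nat.div_div_eq_div_mul, mul_comm (2 ^ δ) (2 ^ L), ← Nat.div_div_eq_div_mul, a2]

end Part8


section Part9

variable {f : ℝ → ℂ} {E : Set ℝ}

lemma dy_sub (k : ℤ) (n δ : ℕ) : dyadicI k n ⊆ dyadicI (k + δ) (n / 2 ^ δ) := by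
  intro x hx
  rw [dy_mem_iff] at hx ⊢
  refine ⟨hx.1, ?_⟩
  have h := Nat.floor_div_natCast ((2:ℝ) ^ (-k) * x) (2 ^ δ)
  rw [← hx.2] at h
  rw [← h]
  congr 1
  rw [neg_add, zpow_add₀ (by norm_num), zpow_neg _ (δ : ℤ), zpow_natCast]
  push_cast
  field_simp

lemma dy_nest {k k' : ℤ} {n n' : ℕ} (hk : k ≤ k') {x : ℝ} (hx : x ∈ dyadicI k n)
    (hx' : x ∈ dyadicI k' n') : dyadicI k n ⊆ dyadicI k' n' := by
  obtain ⟨δ, rfl⟩ := Int.le.dest hk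
  have h := dy_sub k n δ hx
  have : n' = n / 2 ^ δ := ((dy_mem_iff _ _ _).1 hx').2.trans ((dy_mem_iff _ _ _).1 h).2.symm
  rw [this]
  exact dy_sub k n δ

/-- Intervals of high density. -/
def Bad (E : Set ℝ) (t : ℝ) (k : ℤ) (n : ℕ) : Prop := t * (2:ℝ) ^ k < (volume (E ∩ dyadicI k n)).toReal

/-- Maximal intervals of high density. -/
def MBad (E : Set ℝ) (t : ℝ) (k : ℤ) (n : ℕ) : Prop :=
  Bad E t k n ∧ ∀ k' n', k < k' → dyadicI k n ⊆ dyadicI k' n' → ¬ Bad E t k' n'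

/-- The exceptional set. -/
def Om (E : Set ℝ) (t : ℝ) : Set ℝ := ⋃ (k : ℤ) (n : ℕ) (_ : Bad E t k n), dyadicI k n

lemma Om_meas (E : Set ℝ) (t : ℝ) : MeasurableSet (Om E t) :=
  MeasurableSet.iUnion fun k => MeasurableSet.iUnion fun n => MeasurableSet.iUnion fun _ => dy_meas k n

lemma Om_sub (hE : volume E < ∞) {t : ℝ} (ht : 0 < t) {x : ℝ} (hx : x ∈ Om E t) :
    ∃ k n, MBad E t k n ∧ x ∈ dyadicI k n := by
  simp only [Om, mem_iUnion] at hx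
  obtain ⟨k, n, hb, hx⟩ := hx
  have hn := (dy_mem_iff _ _ _).1 hx
  have memk : ∀ k' : ℤ, x ∈ dyadicI k' ⌊(2:ℝ) ^ (-k') * x⌋₊ := fun k' => (dy_mem_iff _ _ _).2 ⟨hn.1, rfl⟩
  have hbd : ∃ b : ℤ, ∀ z : ℤ, Bad E t z ⌊(2:ℝ) ^ (-z) * x⌋₊ → z ≤ b := by
    obtain ⟨m, hm⟩ := pow_unbounded_of_one_lt ((volume E).toReal / t) (one_lt_two (α := ℝ))
    refine ⟨m, fun z hz => ?_⟩
    by_contra hlt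
    push Not at hlt
    have a1 : (2:ℝ) ^ m ≤ (2:ℝ) ^ z := by
      rw [← zpow_natCast]; exact zpow_le_zpow_right₀ (by norm_num) hlt.le
    have a2 : (volume (E ∩ dyadicI z ⌊(2:ℝ) ^ (-z) * x⌋₊)).toReal ≤ (volume E).toReal :=
      ENNReal.toReal_mono hE.ne (measure_mono inter_subset_left)
    have a3 : t * (2:ℝ) ^ z < _ := hz
    rw [div_lt_iff₀ ht] at hm
    nlinarith
  obtain ⟨ub, h1, h2⟩ := Int.exists_greatest_of_bdd (P := fun k' => Bad E t k' ⌊(2:ℝ) ^ (-k') * x⌋₊) hbd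
    ⟨k, by rw [← hn.2]; exact hb⟩
  refine ⟨ub, _, ⟨h1, ?_⟩, memk ub⟩
  intro k' n' hk' hs hb'
  have := ((dy_mem_iff _ _ _).1 (hs (memk ub))).2
  rw [this] at hb'
  have := h2 _ hb'
  omega

lemma Om_vol (mE : MeasurableSet E) (hE : volume E < ∞) {t : ℝ} (ht : 0 < t) :
    ENNReal.ofReal t * volume (Om E t) ≤ volume E := by
  let S := {p : ℤ × ℕ // MBad E t p.1 p.2}
  let D : S → Set ℝ := fun p => dyadicI p.1.1 p.1.2
  have hsub : Om E t ⊆ ⋃ p : S, D p := by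
    intro x hx
    obtain ⟨k, n, h, hx⟩ := Om_sub hE ht hx
    exact mem_iUnion.2 ⟨⟨(k, n), h⟩, hx⟩
  have key : ∀ p q : S, p.1.1 ≤ q.1.1 → p ≠ q → Disjoint (D p) (D q) := by
    intro p q hle hne
    rw [Set.disjoint_left]
    intro x hx hx'
    rcases hle.eq_or_lt with h | h
    · apply hne
      have h1 := ((dy_mem_iff _ _ _).1 hx).2
      have h2 := ((dy_mem_iff _ _ _).1 hx').2
      rw [← h, ← h1] at h2
      exact Subtype.ext (Prod.ext h h2.symm)
    · exact p.2.2 _ _ h (dy_nest hle hx hx') q.2.1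
  have hdis : Pairwise (Function.onFun Disjoint D) := by
    intro p q hne
    rcases le_total p.1.1 q.1.1 with h | h
    · exact key p q h hne
    · exact (key q p h hne.symm).symm
  have mD : ∀ p, MeasurableSet (D p) := fun p => dy_meas _ _
  calc ENNReal.ofReal t * volume (Om E t) ≤ ENNReal.ofReal t * volume (⋃ p, D p) := by gcongr
    _ = ∑' p, ENNReal.ofReal t * volume (D p) := by rw [measure_iUnion hdis mD, ENNReal.tsum_mul_left]
    _ ≤ ∑' p, volume (E ∩ D p) := by
      refine ENNReal.tsum_le_tsum fun p => ?_
      have := p.2.1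
      unfold Bad at this
      rw [show D p = dyadicI p.1.1 p.1.2 from rfl, dy_vol, ← ENNReal.ofReal_mul ht.le]
      exact ENNReal.ofReal_le_of_le_toReal this.le
    _ = volume (⋃ p, E ∩ D p) := by
      rw [measure_iUnion _ (fun p => mE.inter (mD p))]
      intro p q hne
      exact (hdis hne).mono inter_subset_right inter_subset_right
    _ ≤ volume E := measure_mono (iUnion_subset fun p => inter_subset_left)

lemma AA_le_dens (h : Dom f E) (k : ℤ) (n l : ℕ) :
    ‖AA f k n l‖ ≤ (2:ℝ) ^ (-k) * (volume (E ∩ dyadicI k n)).toReal := by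
  refine (AA_le h.int k n l).trans ?_
  gcongr
  calc ∫ x in dyadicI k n, ‖f x‖ ≤ ∫ x in dyadicI k n, E.indicator (1 : ℝ → ℝ) x := by
        exact setIntegral_mono h.int.norm.integrableOn h.intInd.integrableOn h.le
    _ = (volume (E ∩ dyadicI k n)).toReal := by
        rw [setIntegral_indicator h.mE]
        simp [Measure.real, inter_comm]

lemma AA_le_one (h : Dom f E) (k : ℤ) (n l : ℕ) : ‖AA f k n l‖ ≤ 1 := by
  refine (AA_le_dens h k n l).trans ?_
  have : (volume (E ∩ dyadicI k n)).toReal ≤ (2:ℝ) ^ k := by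
    have h1 : volume (E ∩ dyadicI k n) ≤ ENNReal.ofReal ((2:ℝ) ^ k) := by
      rw [← dy_vol k n]; exact measure_mono inter_subset_right
    have := ENNReal.toReal_mono ENNReal.ofReal_ne_top h1
    rwa [ENNReal.toReal_ofReal (by positivity)] at this
  calc _ ≤ (2:ℝ) ^ (-k) * 2 ^ k := by gcongr
    _ = 1 := by rw [← zpow_add₀ (by norm_num)]; simp

lemma AA_le_good (h : Dom f E) {t : ℝ} {k : ℤ} {n : ℕ} (hg : ¬ dyadicI k n ⊆ Om E t) (l : ℕ) :
    ‖AA f k n l‖ ≤ t := by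
  refine (AA_le_dens h k n l).trans ?_
  have hb : ¬ Bad E t k n := fun hb => hg fun x hx => by
    simp only [Om, mem_iUnion]; exact ⟨k, n, hb, hx⟩
  unfold Bad at hb
  push Not at hb
  calc _ ≤ (2:ℝ) ^ (-k) * (t * 2 ^ k) := by gcongr
    _ = t * ((2:ℝ) ^ (-k) * 2 ^ k) := by ring
    _ = t := by rw [← zpow_add₀ (by norm_num)]; simp

lemma AA_zero_of (k : ℤ) (n l : ℕ) (h : ∀ x ∈ dyadicI k n, f x = 0) : AA f k n l = 0 := by
  unfold AA
  have : ∀ x, f x * (ww k n l x : ℂ) = 0 := by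
    intro x
    by_cases hx : x ∈ dyadicI k n
    · rw [h x hx, zero_mul]
    · rw [ww_supp hx]; simp
  simp [this]

lemma her_sub (Ω : Set ℝ) : Her (fun k n => ¬ dyadicI k n ⊆ Ω) := by
  have h1 : ∀ k n, dyadicI (k - 1) (2 * n) ⊆ dyadicI k n := by
    intro k n
    have := dy_sub (k - 1) (2 * n) 1
    simpa using this
  have h2 : ∀ k n, dyadicI (k - 1) (2 * n + 1) ⊆ dyadicI k n := by
    intro k n
    have := dy_sub (k - 1) (2 * n + 1) 1
    rw [show (2 * n + 1) / 2 ^ 1 = n by omega] at this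
    simpa using this
  intro k n h h'
  rcases h with h | h
  · exact h ((h1 k n).trans h')
  · exact h ((h2 k n).trans h')

end Part9


section Part10

variable {f f1 f2 f3 : ℝ → ℂ} {E : Set ℝ}

lemma tp (k : ℤ) : (0:ℝ) < (2:ℝ) ^ k := by positivity

lemma timeI_sub_iff (p q : Tile) : p.timeI ⊆ q.timeI ↔
    (2:ℝ) ^ q.k * q.n ≤ (2:ℝ) ^ p.k * p.n ∧ (2:ℝ) ^ p.k * (p.n + 1) ≤ (2:ℝ) ^ q.k * (q.n + 1) := by
  unfold Tile.timeI
  exact Ico_subset_Ico_iff (by nlinarith [tp p.k])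

lemma freqI_sub_iff (p : Tile) (a b : ℝ) : p.freqI ⊆ Ico a b ↔
    a ≤ (2:ℝ) ^ (-p.k) * p.l ∧ (2:ℝ) ^ (-p.k) * (p.l + 1) ≤ b := by
  unfold Tile.freqI
  exact Ico_subset_Ico_iff (by nlinarith [tp (-p.k)])

lemma dilate_eq (L : ℕ) (k : ℤ) (n l : ℕ) : dilate L (Tile.toSet ⟨k, n, l⟩) =
    (Tile.timeI ⟨k, n, l⟩) ×ˢ Ico ((2:ℝ) ^ (-k) * ((2:ℝ) ^ L * l)) ((2:ℝ) ^ (-k) * ((2:ℝ) ^ L * (l + 1))) := by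
  have h2 : (0:ℝ) < (2:ℝ) ^ L := by positivity
  ext ⟨x, y⟩
  simp only [dilate, Tile.toSet, Tile.freqI, mem_image, mem_prod, Prod.mk.injEq, Prod.exists, mem_Ico]
  constructor
  · rintro ⟨a, b, ⟨h, h', h''⟩, rfl, rfl⟩
    refine ⟨h, ?_, ?_⟩
    · nlinarith [mul_le_mul_of_nonneg_left h' h2.le]
    · nlinarith [mul_lt_mul_of_pos_left h'' h2]
  · rintro ⟨h, h', h''⟩
    refine ⟨x, y / (2:ℝ) ^ L, ⟨h, ?_, ?_⟩, rfl, by field_simp⟩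
    · rw [le_div_iff₀ h2]; linarith
    · rw [div_lt_iff₀ h2]; linarith

lemma toSet_sub_iff (p : Tile) (I J : Set ℝ) : p.toSet ⊆ I ×ˢ J ↔ p.timeI ⊆ I ∧ p.freqI ⊆ J := by
  unfold Tile.toSet
  rw [prod_subset_prod_iff]
  constructor
  · rintro (h | h | h)
    · exact h
    · exfalso
      have : ((2:ℝ) ^ p.k * p.n) ∈ p.timeI := ⟨le_rfl, by nlinarith [tp p.k]⟩
      rw [h] at this; exact this
    · exfalso
      have : ((2:ℝ) ^ (-p.k) * p.l) ∈ p.freqI := ⟨le_rfl, by nlinarith [tp (-p.k)]⟩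
      rw [h] at this; exact this
  · exact Or.inl

open Classical in
lemma maxTiles_eq (L : ℕ) (k : ℤ) (n l : ℕ) : maxTiles (dilate L (Tile.toSet ⟨k, n, l⟩)) =
    ((Finset.range (2 ^ L)).image (fun j => (⟨k, n, 2 ^ L * l + j⟩ : Tile)) : Finset Tile) := by
  rw [dilate_eq]
  ext p
  rw [Finset.coe_image]
  simp only [maxTiles, mem_ofPred_eq, toSet_sub_iff, mem_image, Finset.coe_range, mem_Iio]
  constructor
  · rintro ⟨⟨ht, hf⟩, hmax⟩
    rw [timeI_sub_iff] at ht
    dsimp only at ht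
    have hk : p.k ≤ k := by
      have : (2:ℝ) ^ p.k ≤ (2:ℝ) ^ k := by nlinarith [ht.1, ht.2]
      exact (zpow_le_zpow_iff_right₀ (by norm_num)).1 this
    obtain ⟨δ, hδ⟩ := Int.le.dest hk
    have e : (2:ℝ) ^ (-p.k) = (2:ℝ) ^ (-k) * 2 ^ δ := by
      rw [← hδ, neg_add, zpow_add₀ (by norm_num), zpow_neg _ (δ : ℤ), zpow_natCast]; field_simp
    have hsub : (Tile.freqI ⟨k, n, 2 ^ δ * p.l⟩) ⊆ p.freqI := by
      rw [show p.freqI = Ico _ _ from rfl, freqI_sub_iff, e]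
      push_cast
      have : (1:ℝ) ≤ 2 ^ δ := one_le_pow₀ (by norm_num)
      have := tp (-k)
      constructor
      · linarith
      · rw [mul_assoc]; apply mul_le_mul_of_nonneg_left _ this.le; linarith
    have hq := hmax ⟨k, n, 2 ^ δ * p.l⟩ ⟨by rw [timeI_sub_iff]; exact ⟨le_rfl, le_rfl⟩, hsub.trans hf⟩
      ⟨by rw [timeI_sub_iff]; exact ht, hsub⟩
    have hpk : p.k = k := by rw [← hq]
    have hpn : p.n = n := by rw [← hq]
    rw [freqI_sub_iff, hpk] at hf
    have f1 := le_of_mul_le_mul_left hf.1 (tp (-k))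
    have f2 := le_of_mul_le_mul_left hf.2 (tp (-k))
    have g1 : 2 ^ L * l ≤ p.l := by exact_mod_cast f1
    have g2 : p.l + 1 ≤ 2 ^ L * (l + 1) := by exact_mod_cast f2
    refine ⟨p.l - 2 ^ L * l, by rw [mul_add] at g2; omega, ?_⟩
    obtain ⟨pk, pn, pl⟩ := p
    dsimp only at hpk hpn g1 ⊢
    subst hpk hpn
    congr 1; omega
  · rintro ⟨j, hj, rfl⟩
    have hsub : Tile.timeI ⟨k, n, 2 ^ L * l + j⟩ ⊆ Tile.timeI ⟨k, n, l⟩ := by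
      rw [timeI_sub_iff]; exact ⟨le_rfl, le_rfl⟩
    have hj' : (j:ℝ) + 1 ≤ 2 ^ L := by exact_mod_cast hj
    refine ⟨⟨hsub, ?_⟩, ?_⟩
    · rw [freqI_sub_iff]
      push_cast
      constructor
      · exact mul_le_mul_of_nonneg_left (by linarith [(Nat.cast_nonneg j : (0:ℝ) ≤ j)]) (tp (-k)).le
      · exact mul_le_mul_of_nonneg_left (by linarith) (tp (-k)).le
    · rintro ⟨qk, qn, ql⟩ ⟨h1, h2⟩ ⟨h3, h4⟩
      rw [timeI_sub_iff] at h1 h3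
      dsimp only at h1 h3
      have hk1 : (2:ℝ) ^ qk = (2:ℝ) ^ k := by nlinarith [h1.1, h1.2, h3.1, h3.2]
      have hk : qk = k := (zpow_right_injective₀ (by norm_num : (0:ℝ) < 2) (by norm_num)) hk1
      subst hk
      have hn : (qn : ℝ) = n := le_antisymm (le_of_mul_le_mul_left h3.1 (tp qk)) (le_of_mul_le_mul_left h1.1 (tp qk))
      have hn' : qn = n := by exact_mod_cast hn
      rw [show Tile.freqI ⟨qk, n, 2 ^ L * l + j⟩ = Ico _ _ from rfl, freqI_sub_iff] at h4
      dsimp only at h4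
      have a1 := le_of_mul_le_mul_left h4.1 (tp (-qk))
      have a2 := le_of_mul_le_mul_left h4.2 (tp (-qk))
      have a3 : 2 ^ L * l + j ≤ ql := by exact_mod_cast a1
      have a4 : ql + 1 ≤ 2 ^ L * l + j + 1 := by exact_mod_cast a2
      have : ql = 2 ^ L * l + j := by omega
      rw [hn', this]

/-- Rank one projection in normalized form. -/
def pr (f : ℝ → ℂ) (k : ℤ) (n l : ℕ) (x : ℝ) : ℂ := AA f k n l * (ww k n l x : ℂ)

lemma projT_eq (f : ℝ → ℂ) (k : ℤ) (n l : ℕ) (x : ℝ) : projT ⟨k, n, l⟩ f x = pr f k n l x := by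
  unfold projT coef pr AA Tile.wp
  have h : ((√((2:ℝ) ^ (-k)) : ℝ) : ℂ) * ((√((2:ℝ) ^ (-k)) : ℝ) : ℂ) = (2:ℂ) ^ (-k) := by
    rw [← Complex.ofReal_mul, Real.mul_self_sqrt (tp _).le]; push_cast; rfl
  have : ∀ x, f x * ((√((2:ℝ) ^ (-k)) * walsh l ((2:ℝ) ^ (-k) * x - n) : ℝ) : ℂ) =
      ((√((2:ℝ) ^ (-k)) : ℝ) : ℂ) * (f x * (ww k n l x : ℂ)) := by
    intro x; unfold ww; push_cast; ring
  simp_rw [this]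
  rw [integral_const_mul, ← h]
  unfold ww
  push_cast; ring

/-- Partial projection onto a dilated tile. -/
def Pr (f : ℝ → ℂ) (d : ℕ) (k : ℤ) (n l : ℕ) (x : ℝ) : ℂ :=
  ∑ j ∈ Finset.range (2 ^ d), pr f k n (2 ^ d * l + j) x

lemma piProj_eq (f : ℝ → ℂ) (L : ℕ) (k : ℤ) (n l : ℕ) (x : ℝ) :
    piProj (dilate L (Tile.toSet ⟨k, n, l⟩)) f x = Pr f L k n l x := by
  classical
  unfold piProj projSet
  rw [maxTiles_eq]
  rw [Finset.tsum_subtype' _ (fun p => projT p f x), Finset.sum_image]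
  · unfold Pr
    exact Finset.sum_congr rfl fun j _ => projT_eq _ _ _ _ _
  · intro i _ j _ h
    simp only [Tile.mk.injEq, true_and] at h
    omega

lemma sum_range_two_mul (g : ℕ → ℂ) (m : ℕ) :
    ∑ j ∈ Finset.range (2 * m), g j = ∑ i ∈ Finset.range m, (g (2 * i) + g (2 * i + 1)) := by
  induction m with
  | zero => simp
  | succ m ih => rw [show 2 * (m + 1) = 2 * m + 1 + 1 by ring, Finset.sum_range_succ, Finset.sum_range_succ,
      Finset.sum_range_succ, ih, add_assoc]

lemma Pr_succ (hf : Integrable f) (d : ℕ) (k : ℤ) (n l : ℕ) (x : ℝ) :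
    Pr f (d + 1) k n l x = Pr f d (k - 1) (2 * n) l x + Pr f d (k - 1) (2 * n + 1) l x := by
  unfold Pr
  rw [pow_succ', sum_range_two_mul, ← Finset.sum_add_distrib]
  refine Finset.sum_congr rfl fun i _ => ?_
  unfold pr
  rw [show 2 * 2 ^ d * l + 2 * i = 2 * (2 ^ d * l + i) by ring,
    show 2 * 2 ^ d * l + (2 * i + 1) = 2 * (2 ^ d * l + i) + 1 by ring, (AA_rec hf).even, (AA_rec hf).odd,
    ww_even, ww_odd]
  push_cast; ring

lemma Pr_zero (d : ℕ) (k : ℤ) (n l : ℕ) (x : ℝ) (hx : x ∉ dyadicI k n) : Pr f d k n l x = 0 := by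
  unfold Pr pr
  exact Finset.sum_eq_zero fun j _ => by rw [ww_supp hx]; simp

lemma Pr_meas (f : ℝ → ℂ) (d : ℕ) (k : ℤ) (n l : ℕ) : Measurable (Pr f d k n l) := by
  unfold Pr pr
  refine Finset.measurable_sum _ fun j _ => ?_
  exact measurable_const.mul (Complex.measurable_ofReal.comp (ww_meas _ _ _))

lemma Pr_le (hf : Integrable f) (d : ℕ) (k : ℤ) (n l : ℕ) (x : ℝ) :
    ‖Pr f d k n l x‖ ≤ 2 ^ d * ((2:ℝ) ^ (-k) * ∫ x in dyadicI k n, ‖f x‖) * (dyadicI k n).indicator 1 x := by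
  unfold Pr
  refine (norm_sum_le _ _).trans ?_
  calc _ ≤ ∑ j ∈ Finset.range (2 ^ d), ((2:ℝ) ^ (-k) * ∫ x in dyadicI k n, ‖f x‖) * (dyadicI k n).indicator 1 x := by
        refine Finset.sum_le_sum fun j _ => ?_
        unfold pr
        rw [norm_mul, Complex.norm_real, Real.norm_eq_abs]
        exact mul_le_mul (AA_le hf _ _ _) (ww_abs_le _ _ _ _) (abs_nonneg _)
          ((norm_nonneg _).trans (AA_le hf k n 0))
    _ = _ := by rw [Finset.sum_const, Finset.card_range, nsmul_eq_mul]; push_cast; ring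

lemma Pr_mul_int (hf2 : Integrable f2) (hf3 : Integrable f3) (d : ℕ) (k : ℤ) (n l : ℕ) :
    Integrable (fun x => Pr f2 d k n l x * Pr f3 d k n l x) := by
  refine ((dy_ind_int k n).const_mul ((2 ^ d * ((2:ℝ) ^ (-k) * ∫ x in dyadicI k n, ‖f2 x‖)) *
    (2 ^ d * ((2:ℝ) ^ (-k) * ∫ x in dyadicI k n, ‖f3 x‖)))).mono'
    ((Pr_meas _ _ _ _ _).mul (Pr_meas _ _ _ _ _)).aestronglyMeasurable (ae_of_all _ fun x => ?_)
  have h2 := Pr_le hf2 d k n l x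
  have h3 := Pr_le hf3 d k n l x
  rw [norm_mul]
  by_cases hx : x ∈ dyadicI k n
  · simp only [hx, indicator_of_mem, Pi.one_apply, mul_one] at h2 h3 ⊢
    exact mul_le_mul h2 h3 (norm_nonneg _) ((norm_nonneg _).trans h2)
  · simp [Pr_zero _ _ _ _ _ hx, hx]

lemma Pr_mul_split (hf2 : Integrable f2) (hf3 : Integrable f3) (d : ℕ) (k : ℤ) (n l : ℕ) (x : ℝ) :
    Pr f2 (d + 1) k n l x * Pr f3 (d + 1) k n l x =
      Pr f2 d (k - 1) (2 * n) l x * Pr f3 d (k - 1) (2 * n) l x +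
      Pr f2 d (k - 1) (2 * n + 1) l x * Pr f3 d (k - 1) (2 * n + 1) l x := by
  rw [Pr_succ hf2, Pr_succ hf3]
  by_cases hx : x ∈ dyadicI (k - 1) (2 * n)
  · have hx' := dy_ne (show 2 * n ≠ 2 * n + 1 by omega) x hx
    rw [Pr_zero (f := f2) _ _ _ _ _ hx', Pr_zero (f := f3) _ _ _ _ _ hx']; ring
  · rw [Pr_zero (f := f2) _ _ _ _ _ hx, Pr_zero (f := f3) _ _ _ _ _ hx]; ring

lemma Pr_int (hf2 : Integrable f2) (hf3 : Integrable f3) (d : ℕ) : ∀ (k : ℤ) (n l : ℕ),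
    ∫ x, Pr f2 d k n l x * Pr f3 d k n l x = MM (AA f2) (AA f3) d k n l := by
  induction d with
  | zero =>
    intro k n l
    simp only [Pr, pow_zero, Finset.range_one, Finset.sum_singleton, one_mul, add_zero, MM, pr]
    have : ∀ x, AA f2 k n l * (ww k n l x : ℂ) * (AA f3 k n l * (ww k n l x : ℂ)) =
        AA f2 k n l * AA f3 k n l * ((ww k n l x * ww k n l x : ℝ) : ℂ) := by
      intro x; push_cast; ring
    simp_rw [this]
    rw [integral_const_mul, integral_complex_ofReal, ww_norm, if_pos rfl]
    push_cast; ring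
  | succ d ih =>
    intro k n l
    simp_rw [Pr_mul_split hf2 hf3]
    rw [integral_add (Pr_mul_int hf2 hf3 _ _ _ _) (Pr_mul_int hf2 hf3 _ _ _ _), ih, ih]
    rfl

/-- The summand of the quartile form. -/
def qterm (L : ℕ) (f1 f2 f3 : ℝ → ℂ) (P : Bitile) (x : ℝ) : ℂ :=
  (P.phid x : ℂ) * projT P.u f1 x * piProj (dilate L P.d.toSet) f2 x * piProj (dilate L P.d.toSet) f3 x

lemma phid_eq (P : Bitile) (x : ℝ) : P.phid x = ww P.k P.n (2 * P.l) x := by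
  unfold Bitile.phid Bitile.d Tile.wp ww
  rw [← mul_assoc, ← Real.sqrt_mul (tp _).le, ← zpow_add₀ (by norm_num)]; simp

lemma qterm_eq (L : ℕ) (f1 f2 f3 : ℝ → ℂ) (P : Bitile) (x : ℝ) : qterm L f1 f2 f3 P x =
    (ww P.k P.n (2 * P.l) x : ℂ) * pr f1 P.k P.n (2 * P.l + 1) x *
      Pr f2 L P.k P.n (2 * P.l) x * Pr f3 L P.k P.n (2 * P.l) x := by
  unfold qterm
  rw [phid_eq, Bitile.u, projT_eq, Bitile.d, piProj_eq, piProj_eq]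

lemma qterm_eq' (hf2 : Integrable f2) (hf3 : Integrable f3) (L : ℕ) (P : Bitile) (x : ℝ) :
    qterm (L + 1) f1 f2 f3 P x = AA f1 P.k P.n (2 * P.l + 1) *
      (Pr f2 L (P.k - 1) (2 * P.n) (2 * P.l) x * Pr f3 L (P.k - 1) (2 * P.n) (2 * P.l) x -
        Pr f2 L (P.k - 1) (2 * P.n + 1) (2 * P.l) x * Pr f3 L (P.k - 1) (2 * P.n + 1) (2 * P.l) x) := by
  rw [qterm_eq, mul_assoc, Pr_mul_split hf2 hf3]
  unfold pr
  rw [ww_even, ww_odd]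
  by_cases hx : x ∈ dyadicI (P.k - 1) (2 * P.n)
  · have hx' := dy_ne (show 2 * P.n ≠ 2 * P.n + 1 by omega) x hx
    rw [Pr_zero (f := f2) _ _ _ _ _ hx', Pr_zero (f := f3) _ _ _ _ _ hx', ww_supp hx']
    rcases ww_pm hx P.l with e | e <;> rw [e] <;> push_cast <;> ring
  · rw [Pr_zero (f := f2) _ _ _ _ _ hx, Pr_zero (f := f3) _ _ _ _ _ hx, ww_supp hx]
    by_cases hx' : x ∈ dyadicI (P.k - 1) (2 * P.n + 1)
    · rcases ww_pm hx' P.l with e | e <;> rw [e] <;> push_cast <;> ring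
    · rw [Pr_zero (f := f2) _ _ _ _ _ hx', Pr_zero (f := f3) _ _ _ _ _ hx']; ring

lemma qterm_int (hf2 : Integrable f2) (hf3 : Integrable f3) (L : ℕ) (P : Bitile) :
    ∫ x, qterm (L + 1) f1 f2 f3 P x = Lam L (MM (AA f2) (AA f3)) (AA f1) P.k P.n P.l := by
  simp_rw [qterm_eq' hf2 hf3]
  rw [integral_const_mul, integral_sub (Pr_mul_int hf2 hf3 _ _ _ _) (Pr_mul_int hf2 hf3 _ _ _ _),
    Pr_int hf2 hf3, Pr_int hf2 hf3]
  rfl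

end Part10


section Part11

variable {f f1 f2 f3 : ℝ → ℂ} {E : Set ℝ}

lemma strip_iff (N : ℕ) (P : Bitile) : P ∈ stripBitiles N ↔ (2:ℝ) ^ (1 - P.k) * (P.l + 1) ≤ (2:ℝ) ^ N := by
  show P.freqI ⊆ _ ↔ _
  unfold Bitile.freqI
  rw [Ico_subset_Ico_iff (by nlinarith [tp (1 - P.k)])]
  constructor
  · exact fun h => h.2
  · exact fun h => ⟨by have := tp (1 - P.k); positivity, h⟩

lemma strip_idx {N : ℕ} {P : Bitile} (h : P ∈ stripBitiles N) :
    P.k = (((N + P.k - 1).toNat : ℕ) : ℤ) + 1 - N ∧ P.l < 2 ^ (N + P.k - 1).toNat := by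
  rw [strip_iff] at h
  have e : (2:ℝ) ^ N = (2:ℝ) ^ (1 - P.k) * (2:ℝ) ^ (N + P.k - 1) := by
    rw [← zpow_add₀ (by norm_num), ← zpow_natCast]; congr 1; ring
  rw [e] at h
  have h1 := le_of_mul_le_mul_left h (tp _)
  have h0 : 0 ≤ N + P.k - 1 := by
    have : (2:ℝ) ^ (0:ℤ) ≤ (2:ℝ) ^ (N + P.k - 1) := by
      rw [zpow_zero]; exact le_trans (by linarith [(Nat.cast_nonneg P.l : (0:ℝ) ≤ P.l)]) h1
    exact (zpow_le_zpow_iff_right₀ (by norm_num)).1 this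
  have h2 := Int.toNat_of_nonneg h0
  refine ⟨by omega, ?_⟩
  rw [← h2, zpow_natCast] at h1
  have : P.l + 1 ≤ 2 ^ (N + P.k - 1).toNat := by exact_mod_cast h1
  omega

lemma qterm_le (hf1 : Integrable f1) (hf2 : Integrable f2) (hf3 : Integrable f3) (L : ℕ) (P : Bitile) (x : ℝ) :
    ‖qterm L f1 f2 f3 P x‖ ≤ ((2:ℝ) ^ (-P.k) * ∫ x, ‖f1 x‖) * (2 ^ L * ((2:ℝ) ^ (-P.k) * ∫ x, ‖f2 x‖)) *
      (2 ^ L * ((2:ℝ) ^ (-P.k) * ∫ x in dyadicI P.k P.n, ‖f3 x‖)) * (dyadicI P.k P.n).indicator 1 x := by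
  have j1 : ∀ {g : ℝ → ℂ}, Integrable g → ∫ x in dyadicI P.k P.n, ‖g x‖ ≤ ∫ x, ‖g x‖ := fun hg =>
    setIntegral_le_integral hg.norm (ae_of_all _ fun x => norm_nonneg _)
  have p0 : (0:ℝ) < (2:ℝ) ^ (-P.k) := tp _
  have a1 := (AA_le hf1 P.k P.n (2 * P.l + 1)).trans (mul_le_mul_of_nonneg_left (j1 hf1) p0.le)
  have a2 := Pr_le hf2 L P.k P.n (2 * P.l) x
  have a3 := Pr_le hf3 L P.k P.n (2 * P.l) x
  rw [qterm_eq]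
  by_cases hx : x ∈ dyadicI P.k P.n
  · simp only [hx, indicator_of_mem, Pi.one_apply, mul_one] at a2 a3 ⊢
    have b2 : ‖Pr f2 L P.k P.n (2 * P.l) x‖ ≤ 2 ^ L * ((2:ℝ) ^ (-P.k) * ∫ x, ‖f2 x‖) := by
      refine a2.trans ?_
      have := j1 hf2
      gcongr
    have b1 : ‖(ww P.k P.n (2 * P.l) x : ℂ) * pr f1 P.k P.n (2 * P.l + 1) x‖ ≤
        (2:ℝ) ^ (-P.k) * ∫ x, ‖f1 x‖ := by
      unfold pr
      simp only [norm_mul, Complex.norm_real, Real.norm_eq_abs]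
      have w1 := ww_abs_le1 P.k P.n (2 * P.l) x
      have w2 := ww_abs_le1 P.k P.n (2 * P.l + 1) x
      have n0 := norm_nonneg (AA f1 P.k P.n (2 * P.l + 1))
      calc _ ≤ 1 * (‖AA f1 P.k P.n (2 * P.l + 1)‖ * 1) := by gcongr
        _ ≤ _ := by linarith
    rw [norm_mul, norm_mul]
    exact mul_le_mul (mul_le_mul b1 b2 (norm_nonneg _) ((norm_nonneg _).trans b1)) a3 (norm_nonneg _)
      (mul_nonneg ((norm_nonneg _).trans b1) ((norm_nonneg _).trans b2))
  · simp [ww_supp hx, hx]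

lemma qterm_meas (L : ℕ) (f1 f2 f3 : ℝ → ℂ) (P : Bitile) : Measurable (qterm L f1 f2 f3 P) := by
  have : qterm L f1 f2 f3 P = fun x => (ww P.k P.n (2 * P.l) x : ℂ) * (AA f1 P.k P.n (2 * P.l + 1) *
      (ww P.k P.n (2 * P.l + 1) x : ℂ)) *
      Pr f2 L P.k P.n (2 * P.l) x * Pr f3 L P.k P.n (2 * P.l) x := by
    ext x; exact qterm_eq _ _ _ _ _ _
  rw [this]
  have hw := fun l => Complex.measurable_ofReal.comp (ww_meas P.k P.n l)
  exact (((hw _).mul (measurable_const.mul (hw _))).mul (Pr_meas _ _ _ _ _)).mul (Pr_meas _ _ _ _ _)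

lemma qterm_lint (hf1 : Integrable f1) (hf2 : Integrable f2) (hf3 : Integrable f3) (L : ℕ) (P : Bitile) :
    ∫⁻ x, ‖qterm L f1 f2 f3 P x‖ₑ ≤ ENNReal.ofReal (4 ^ L * (∫ x, ‖f1 x‖) * (∫ x, ‖f2 x‖)) *
      (ENNReal.ofReal (((2:ℝ) ^ (-P.k)) ^ 2) * ∫⁻ x in dyadicI P.k P.n, ‖f3 x‖ₑ) := by
  set K : ℝ := ((2:ℝ) ^ (-P.k) * ∫ x, ‖f1 x‖) * (2 ^ L * ((2:ℝ) ^ (-P.k) * ∫ x, ‖f2 x‖)) *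
      (2 ^ L * ((2:ℝ) ^ (-P.k) * ∫ x in dyadicI P.k P.n, ‖f3 x‖)) with hK
  have i1 : 0 ≤ ∫ x, ‖f1 x‖ := integral_nonneg fun x => norm_nonneg _
  have i2 : 0 ≤ ∫ x, ‖f2 x‖ := integral_nonneg fun x => norm_nonneg _
  have i3 : 0 ≤ ∫ x in dyadicI P.k P.n, ‖f3 x‖ := integral_nonneg fun x => norm_nonneg _
  have e3 : ∫⁻ x in dyadicI P.k P.n, ‖f3 x‖ₑ = ENNReal.ofReal (∫ x in dyadicI P.k P.n, ‖f3 x‖) :=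
    (ofReal_integral_norm_eq_lintegral_enorm hf3.integrableOn).symm
  have s1 : ∫⁻ x, ‖qterm L f1 f2 f3 P x‖ₑ ≤ ∫⁻ x, (dyadicI P.k P.n).indicator (fun _ => ENNReal.ofReal K) x := by
    refine lintegral_mono fun x => ?_
    have h := qterm_le hf1 hf2 hf3 L P x
    rw [← hK] at h
    rw [← ofReal_norm]
    by_cases hx : x ∈ dyadicI P.k P.n
    · simp only [hx, indicator_of_mem, Pi.one_apply, mul_one] at h ⊢
      exact ENNReal.ofReal_le_ofReal h
    · simp only [hx, not_false_eq_true, indicator_of_notMem, mul_zero] at h ⊢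
      rw [ENNReal.ofReal_of_nonpos h]
  refine s1.trans ?_
  rw [lintegral_indicator_const (dy_meas _ _), dy_vol, e3, ← ENNReal.ofReal_mul (by positivity),
    ← ENNReal.ofReal_mul (by positivity), ← ENNReal.ofReal_mul (by positivity)]
  apply ENNReal.ofReal_le_ofReal
  have t : (2:ℝ) ^ (-P.k) * (2:ℝ) ^ P.k = 1 := by rw [← zpow_add₀ (by norm_num)]; simp
  have t4 : (4:ℝ) ^ L = 2 ^ L * 2 ^ L := by rw [← mul_pow]; norm_num
  rw [hK, t4]
  apply le_of_eq
  linear_combination ((2:ℝ) ^ L * 2 ^ L * (∫ x, ‖f1 x‖) * (∫ x, ‖f2 x‖) * ((2:ℝ) ^ (-P.k)) ^ 2 *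
    ∫ x in dyadicI P.k P.n, ‖f3 x‖) * t

lemma sum_dy (f : ℝ → ℂ) (k : ℤ) : ∑' n : ℕ, ∫⁻ x in dyadicI k n, ‖f x‖ₑ ≤ ∫⁻ x, ‖f x‖ₑ := by
  rw [← lintegral_iUnion (fun n => dy_meas k n)]
  · exact setLIntegral_le_lintegral _ _
  · intro n n' h
    exact Set.disjoint_left.2 fun x hx => dy_ne h x hx

lemma strip_sum (hf : Integrable f) (N : ℕ) :
    ∑' P : stripBitiles N, (ENNReal.ofReal (((2:ℝ) ^ (-P.1.k)) ^ 2) * ∫⁻ x in dyadicI P.1.k P.1.n, ‖f x‖ₑ) ≠ ∞ := by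
  let G : ℕ × ℕ × ℕ → ℝ≥0∞ := fun p => if p.2.1 < 2 ^ p.1 then
    ENNReal.ofReal (((2:ℝ) ^ (-((p.1 : ℤ) + 1 - N))) ^ 2) * ∫⁻ x in dyadicI ((p.1 : ℤ) + 1 - N) p.2.2, ‖f x‖ₑ else 0
  let φ : stripBitiles N → ℕ × ℕ × ℕ := fun P => ((N + P.1.k - 1).toNat, P.1.l, P.1.n)
  have hφ : Function.Injective φ := by
    rintro ⟨⟨k, n, l⟩, hP⟩ ⟨⟨k', n', l'⟩, hP'⟩ h
    simp only [φ, Prod.mk.injEq] at h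
    have h1 := (strip_idx hP).1
    have h2 := (strip_idx hP').1
    dsimp only at h1 h2
    obtain ⟨a, rfl, rfl⟩ := h
    have : k = k' := by rw [h1, h2, a]
    subst this
    rfl
  have hG : ∀ P : stripBitiles N, (ENNReal.ofReal (((2:ℝ) ^ (-P.1.k)) ^ 2) *
      ∫⁻ x in dyadicI P.1.k P.1.n, ‖f x‖ₑ) = G (φ P) := by
    intro P
    have h := strip_idx P.2
    simp only [G, φ]
    rw [if_pos h.2, ← h.1]
  simp_rw [hG]
  refine ne_top_of_le_ne_top ?_ (ENNReal.tsum_comp_le_tsum_of_injective hφ G)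
  rw [ENNReal.tsum_prod (f := fun a b => G (a, b))]
  set W := ∫⁻ x, ‖f x‖ₑ with hW
  have hWt : W ≠ ∞ := hf.2.ne
  have b : ∀ j : ℕ, ∑' q : ℕ × ℕ, G (j, q) ≤ ENNReal.ofReal ((2:ℝ) ^ (2 * (N:ℤ))) * W * (2⁻¹ : ℝ≥0∞) ^ j := by
    intro j
    rw [ENNReal.tsum_prod (f := fun a b => G (j, a, b))]
    have c : ∀ l : ℕ, ∑' n : ℕ, G (j, l, n) ≤ (if l < 2 ^ j then
        ENNReal.ofReal (((2:ℝ) ^ (-((j : ℤ) + 1 - N))) ^ 2) * W else 0) := by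
      intro l
      simp only [G]
      split_ifs with h
      · rw [ENNReal.tsum_mul_left]
        gcongr
        exact sum_dy f _
      · simp
    refine (ENNReal.tsum_le_tsum c).trans ?_
    rw [tsum_eq_sum (s := Finset.range (2 ^ j)) (fun l hl => if_neg (by simpa using hl))]
    rw [Finset.sum_congr rfl (fun l hl => if_pos (by simpa using hl)), Finset.sum_const, Finset.card_range,
      nsmul_eq_mul]
    have e : (2⁻¹ : ℝ≥0∞) ^ j = ENNReal.ofReal ((2:ℝ)⁻¹ ^ j) := by
      rw [ENNReal.ofReal_pow (by norm_num), ENNReal.ofReal_inv_of_pos (by norm_num)]; simp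
    have e' : ((2 ^ j : ℕ) : ℝ≥0∞) = ENNReal.ofReal ((2:ℝ) ^ j) := by
      rw [ENNReal.ofReal_pow (by norm_num)]; simp
    rw [e, e', ← mul_assoc, ← ENNReal.ofReal_mul (by positivity), mul_right_comm,
      ← ENNReal.ofReal_mul (by positivity)]
    refine mul_le_mul' (ENNReal.ofReal_le_ofReal ?_) le_rfl
    have q : (2:ℝ) ^ (-((j : ℤ) + 1 - N)) = (2:ℝ) ^ (N:ℤ) * ((2:ℝ)⁻¹ ^ j * 2⁻¹) := by
      rw [show -((j : ℤ) + 1 - N) = N + (-(j:ℤ)) + (-1) by ring, zpow_add₀ (by norm_num), zpow_add₀ (by norm_num),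
        zpow_neg, zpow_neg_one, zpow_natCast (2:ℝ) j, inv_pow]; ring
    have q2 : (2:ℝ) ^ (2 * (N:ℤ)) = (2:ℝ) ^ (N:ℤ) * (2:ℝ) ^ (N:ℤ) := by
      rw [two_mul, zpow_add₀ (by norm_num)]
    have q3 : (2:ℝ) ^ j * (2:ℝ)⁻¹ ^ j = 1 := by rw [← mul_pow]; norm_num
    rw [q, q2]
    have : (2:ℝ) ^ j * ((2:ℝ) ^ (N:ℤ) * ((2:ℝ)⁻¹ ^ j * 2⁻¹)) ^ 2 =
      ((2:ℝ) ^ j * (2:ℝ)⁻¹ ^ j) * ((2:ℝ) ^ (N:ℤ) * (2:ℝ) ^ (N:ℤ) * (2:ℝ)⁻¹ ^ j) / 4 := by ring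
    rw [this, q3]
    have : 0 ≤ ((2:ℝ) ^ (N:ℤ) * (2:ℝ) ^ (N:ℤ) * (2:ℝ)⁻¹ ^ j) := by positivity
    linarith
  refine ne_top_of_le_ne_top ?_ (ENNReal.tsum_le_tsum b)
  rw [ENNReal.tsum_mul_left, ENNReal.tsum_geometric]
  refine ENNReal.mul_ne_top (ENNReal.mul_ne_top ENNReal.ofReal_ne_top hWt) ?_
  simp

/-- The finite exhausting boxes. -/
def box (M N : ℕ) : Set Bitile :=
  {P | -(M:ℤ) ≤ P.k ∧ P.k ≤ M ∧ P.n ≤ M ∧ P.l ≤ M ∧ P ∈ stripBitiles N}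

lemma box_fin (M N : ℕ) : (box M N).Finite := by
  refine Set.Finite.subset (((Set.finite_Icc (-(M:ℤ)) M).prod ((Set.finite_Iic M).prod (Set.finite_Iic M))).image
    (fun p => (⟨p.1, p.2.1, p.2.2⟩ : Bitile))) ?_
  rintro ⟨k, n, l⟩ ⟨h1, h2, h3, h4, -⟩
  exact ⟨(k, n, l), ⟨⟨h1, h2⟩, h3, h4⟩, rfl⟩

lemma box_conv (M N : ℕ) : Conv (box_fin M N).toFinset := by
  intro P hP R hRP hR Q hQ hQR
  apply hR
  rw [Set.Finite.mem_toFinset] at *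
  rw [ble_iff] at hRP hQR
  obtain ⟨δ, a1, a2, a3⟩ := hRP
  obtain ⟨ε, b1, b2, b3⟩ := hQR
  obtain ⟨p1, p2, p3, p4, p5⟩ := hP
  obtain ⟨q1, q2, q3, q4, q5⟩ := hQ
  refine ⟨by omega, by omega, ?_, ?_, ?_⟩
  · rw [b2]; exact (Nat.div_le_self _ _).trans q3
  · rw [a3]; exact (Nat.div_le_self _ _).trans p4
  · rw [strip_iff] at q5 ⊢
    refine le_trans ?_ q5
    have h : R.l + 1 ≤ 2 ^ ε * (Q.l + 1) := by
      rw [b3]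
      exact Nat.lt_mul_div_succ _ (by positivity)
    have h' : (R.l : ℝ) + 1 ≤ 2 ^ ε * (Q.l + 1) := by exact_mod_cast h
    have e : (2:ℝ) ^ (1 - Q.k) = (2:ℝ) ^ (1 - R.k) * 2 ^ ε := by
      rw [← zpow_natCast, ← zpow_add₀ (by norm_num)]; congr 1; omega
    rw [e, mul_assoc]
    exact mul_le_mul_of_nonneg_left h' (tp _).le

lemma form_le (hf1 : Integrable f1) (hf2 : Integrable f2) (hf3 : Integrable f3) (L N : ℕ) {B : ℝ} (hB0 : 0 ≤ B)
    (hB : ∀ PP : Finset Bitile, Conv PP →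
      ‖∑ Q ∈ PP, Lam L (MM (AA f2) (AA f3)) (AA f1) Q.k Q.n Q.l‖ ≤ B) :
    ‖quartileForm (L + 1) N f1 f2 f3‖ ≤ B := by
  have e : quartileForm (L + 1) N f1 f2 f3 = ∫ x, ∑' P : stripBitiles N, qterm (L + 1) f1 f2 f3 P.1 x := rfl
  have : Countable Bitile := by
    refine Function.Injective.countable (f := fun P : Bitile => (P.k, P.n, P.l)) ?_
    rintro ⟨k, n, l⟩ ⟨k', n', l'⟩ h
    simp only [Prod.mk.injEq] at h
    obtain ⟨rfl, rfl, rfl⟩ := h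
    rfl
  rw [e, integral_tsum (fun P => (qterm_meas _ _ _ _ _).aestronglyMeasurable)]
  · simp_rw [qterm_int hf2 hf3]
    let g : Bitile → ℂ := fun Q => Lam L (MM (AA f2) (AA f3)) (AA f1) Q.k Q.n Q.l
    rw [show (∑' P : stripBitiles N, Lam L (MM (AA f2) (AA f3)) (AA f1) P.1.k P.1.n P.1.l) =
      ∑' P : stripBitiles N, g P from rfl, tsum_subtype]
    by_cases hs : Summable ((stripBitiles N).indicator g)
    · have hlim := hs.hasSum
      have hT : Filter.Tendsto (fun M : ℕ => ∑ P ∈ (box_fin M N).toFinset, g P) Filter.atTop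
          (nhds (∑' P, (stripBitiles N).indicator g P)) := by
        rw [← hasSum_subtype_iff_indicator] at hlim
        classical
        have hmono : Filter.Tendsto (fun M : ℕ => (box_fin M N).toFinset.subtype (· ∈ stripBitiles N))
            Filter.atTop Filter.atTop := by
          refine Filter.tendsto_atTop_finset_of_monotone ?_ ?_
          · intro M M' h P hP
            simp only [Finset.mem_subtype, Set.Finite.mem_toFinset] at hP ⊢
            obtain ⟨p1, p2, p3, p4, p5⟩ := hP
            exact ⟨by omega, by omega, by omega, by omega, p5⟩
          · intro P
            refine ⟨P.1.k.natAbs + P.1.n + P.1.l, ?_⟩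
            simp only [Finset.mem_subtype, Set.Finite.mem_toFinset]
            exact ⟨by omega, by omega, by omega, by omega, P.2⟩
        refine (hlim.comp hmono).congr fun M => ?_
        simp only [Function.comp]
        rw [Finset.sum_subtype_of_mem (p := (· ∈ stripBitiles N)) g]
        intro P hP
        rw [Set.Finite.mem_toFinset] at hP
        exact hP.2.2.2.2
      exact le_of_tendsto' hT.norm fun M => hB _ (box_conv M N)
    · rw [tsum_eq_zero_of_not_summable hs]; simpa using hB0
  · refine ne_top_of_le_ne_top ?_ (ENNReal.tsum_le_tsum fun P => qterm_lint hf1 hf2 hf3 (L + 1) P.1)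
    rw [ENNReal.tsum_mul_left]
    exact ENNReal.mul_ne_top ENNReal.ofReal_ne_top (strip_sum hf3 N)

end Part11


lemma Dom.of_zero {f : ℝ → ℂ} {E : Set ℝ} (h : Dom f E) (h0 : volume E = 0) (k : ℤ) (n l : ℕ) :
    AA f k n l = 0 := by
  have := AA_le_dens h k n l
  have e : volume (E ∩ dyadicI k n) = 0 := measure_mono_null inter_subset_left h0
  rw [e] at this
  simpa using this

lemma MM_zero_right {A2 A3 : ℤ → ℕ → ℕ → ℂ} (h : ∀ k n l, A3 k n l = 0) (d : ℕ) :
    ∀ k n l, MM A2 A3 d k n l = 0 := by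
  induction d with
  | zero => intro k n l; simp [MM, h]
  | succ d ih => intro k n l; simp [MM, ih]

/-- Theorem 2 (uniform restricted type bounds with one negative exponent). -/
theorem quartileForm_restricted_type :
    ∀ α1 α2 α3 : ℝ, 0 < α1 → α1 < 1 → 0 < α3 → α3 < 1 → -(1/2) < α2 → α2 ≤ 0 →
      α1 + α2 + α3 = 1 →
    ∃ C : ℝ≥0, ∀ E1 E2 E3 : Set ℝ,
      MeasurableSet E1 → MeasurableSet E2 → MeasurableSet E3 →
      E1 ⊆ Ici 0 → E2 ⊆ Ici 0 → E3 ⊆ Ici 0 →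
      volume E1 < ∞ → volume E2 < ∞ → volume E3 < ∞ →
      volume E1 ≤ volume E2 → volume E3 ≤ volume E2 →
      ∃ E2' : Set ℝ, MeasurableSet E2' ∧ E2' ⊆ E2 ∧ volume E2 / 2 ≤ volume E2' ∧
        ∀ (L N : ℕ), 2 ≤ L →
        ∀ f1 f2 f3 : ℝ → ℂ, Measurable f1 → Measurable f2 → Measurable f3 →
          (∀ x, ‖f1 x‖ ≤ E1.indicator 1 x) →
          (∀ x, ‖f2 x‖ ≤ E2'.indicator 1 x) →
          (∀ x, ‖f3 x‖ ≤ E3.indicator 1 x) →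
          (‖quartileForm L N f1 f2 f3‖₊ : ℝ≥0∞) ≤
            C * volume E1 ^ α1 * volume E2 ^ α2 * volume E3 ^ α3 := by
  intro α1 α2 α3 a1 a1' a3 a3' a2 a2' hsum
  obtain ⟨C, hC0, hC⟩ := abstract_bound α1 α3 a1' a3' (by linarith)
  refine ⟨C.toNNReal, ?_⟩
  intro E1 E2 E3 m1 m2 m3 _ _ _ v1 v2 v3 l12 l32
  by_cases hz : volume E1 = 0 ∨ volume E3 = 0
  · refine ⟨E2, m2, subset_rfl, ENNReal.half_le_self, ?_⟩
    intro L N hL f1 f2 f3 mf1 mf2 mf3 hf1 hf2 hf3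
    obtain ⟨L, rfl⟩ : ∃ L', L = L' + 1 := ⟨L - 1, by omega⟩
    have D1 : Dom f1 E1 := ⟨mf1, m1, v1, hf1⟩
    have D2 : Dom f2 E2 := ⟨mf2, m2, v2, hf2⟩
    have D3 : Dom f3 E3 := ⟨mf3, m3, v3, hf3⟩
    have : ‖quartileForm (L + 1) N f1 f2 f3‖ ≤ 0 := by
      refine form_le D1.int D2.int D3.int L N le_rfl fun PP _ => ?_
      have : ∀ Q ∈ PP, Lam L (MM (AA f2) (AA f3)) (AA f1) Q.k Q.n Q.l = 0 := by
        intro Q _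
        unfold Lam
        rcases hz with hz | hz
        · rw [D1.of_zero hz, zero_mul]
        · rw [MM_zero_right (D3.of_zero hz), MM_zero_right (D3.of_zero hz)]; simp
      rw [Finset.sum_eq_zero this]; simp
    have h0 : quartileForm (L + 1) N f1 f2 f3 = 0 := norm_le_zero_iff.1 this
    rw [h0]; simp
  · push Not at hz
    obtain ⟨z1, z3⟩ := hz
    have z2 : volume E2 ≠ 0 := fun h => z1 (le_antisymm (h ▸ l12) (zero_le))
    set a := (volume E1).toReal with ha
    set b := (volume E2).toReal with hb
    set c := (volume E3).toReal with hc
    have a0 : 0 < a := ENNReal.toReal_pos z1 v1.ne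
    have b0 : 0 < b := ENNReal.toReal_pos z2 v2.ne
    have c0 : 0 < c := ENNReal.toReal_pos z3 v3.ne
    have hab : a ≤ b := ENNReal.toReal_mono v2.ne l12
    have hcb : c ≤ b := ENNReal.toReal_mono v2.ne l32
    have ea : volume E1 = ENNReal.ofReal a := (ENNReal.ofReal_toReal v1.ne).symm
    have eb : volume E2 = ENNReal.ofReal b := (ENNReal.ofReal_toReal v2.ne).symm
    have ec : volume E3 = ENNReal.ofReal c := (ENNReal.ofReal_toReal v3.ne).symm
    have t1 : 0 < 4 * (a / b) := by positivity
    have t3 : 0 < 4 * (c / b) := by positivity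
    have key : ∀ {E : Set ℝ} {s : ℝ}, MeasurableSet E → volume E < ∞ → 0 < s → volume E = ENNReal.ofReal s →
        volume (Om E (4 * (s / b))) ≤ ENNReal.ofReal (b / 4) := by
      intro E s mE vE hs he
      have ht : 0 < 4 * (s / b) := by positivity
      have h := Om_vol mE vE ht
      rw [he, show s = (4 * (s / b)) * (b / 4) by field_simp, ENNReal.ofReal_mul ht.le] at h
      have hh : ENNReal.ofReal (4 * (s / b)) ≠ 0 := by simpa using ht
      have e4 : 4 * (4 * (s / b) * (b / 4) / b) = 4 * (s / b) := by field_simp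
      rw [e4] at h
      exact (ENNReal.mul_le_mul_iff_right hh ENNReal.ofReal_ne_top).1 h
    set Ω := Om E1 (4 * (a / b)) ∪ Om E3 (4 * (c / b)) with hΩ
    have mΩ : MeasurableSet Ω := (Om_meas _ _).union (Om_meas _ _)
    have vΩ : volume Ω ≤ ENNReal.ofReal (b / 2) := by
      refine (measure_union_le _ _).trans ((add_le_add (key m1 v1 a0 ea) (key m3 v3 c0 ec)).trans ?_)
      rw [← ENNReal.ofReal_add (by positivity) (by positivity)]
      exact ENNReal.ofReal_le_ofReal (by linarith)
    refine ⟨E2 \ Ω, m2.diff mΩ, diff_subset, ?_, ?_⟩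
    · have h1 : volume E2 - volume Ω ≤ volume (E2 \ Ω) := le_measure_sdiff
      refine le_trans ?_ h1
      refine le_trans ?_ (tsub_le_tsub_left vΩ _)
      rw [eb, ← ENNReal.ofReal_sub _ (by positivity), show b - b / 2 = b / 2 by ring,
        ENNReal.ofReal_div_of_pos (by norm_num)]
      simp
    · intro L N hL f1 f2 f3 mf1 mf2 mf3 hf1 hf2 hf3
      obtain ⟨L, rfl⟩ : ∃ L', L = L' + 1 := ⟨L - 1, by omega⟩
      have D1 : Dom f1 E1 := ⟨mf1, m1, v1, hf1⟩
      have D2 : Dom f2 (E2 \ Ω) := ⟨mf2, m2.diff mΩ, (measure_mono diff_subset).trans_lt v2, hf2⟩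
      have D2' : Dom f2 E2 := ⟨mf2, m2, v2, fun x => (hf2 x).trans
        (Set.indicator_le_indicator_of_subset diff_subset (fun _ => zero_le_one) x)⟩
      have D3 : Dom f3 E3 := ⟨mf3, m3, v3, hf3⟩
      have hf20 : ∀ x ∈ Ω, f2 x = 0 := by
        intro x hx
        have := hf2 x
        rw [indicator_of_notMem (fun h => h.2 hx)] at this
        exact norm_le_zero_iff.1 this
      have main : ‖quartileForm (L + 1) N f1 f2 f3‖ ≤ C * (b * (a / b) ^ α1 * (c / b) ^ α3) := by
        refine form_le D1.int D2.int D3.int L N (by positivity) fun PP hPP => ?_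
        exact hC (AA f1) (AA f2) (AA f3) (fun k n => ¬ dyadicI k n ⊆ Ω) (AA_rec D1.int) (AA_rec D2.int)
          (AA_rec D3.int) (her_sub Ω)
          (fun k n l h => AA_zero_of k n l fun x hx => hf20 x (not_not.1 h hx))
          L a b c a0 c0 hab hcb
          (fun k n l h => AA_le_good D1 (fun h' => h (h'.trans subset_union_left)) l)
          (fun k n l h => AA_le_one D2 k n l)
          (fun k n l h => AA_le_good D3 (fun h' => h (h'.trans subset_union_right)) l)
          (AA_bes D1 _ _) (AA_bes D2' _ _) (AA_bes D3 _ _) PP hPP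
      have eq : C * (b * (a / b) ^ α1 * (c / b) ^ α3) = C * a ^ α1 * b ^ α2 * c ^ α3 := by
        rw [Real.div_rpow a0.le b0.le, Real.div_rpow c0.le b0.le]
        have : b ^ α2 = b / (b ^ α1 * b ^ α3) := by
          rw [← Real.rpow_add b0, show α2 = 1 - (α1 + α3) by linarith, Real.rpow_sub b0, Real.rpow_one]
        rw [this]
        have := Real.rpow_pos_of_pos b0 α1
        have := Real.rpow_pos_of_pos b0 α3
        field_simp
      rw [eq] at main
      have eC : ((C.toNNReal : ℝ≥0) : ℝ≥0∞) = ENNReal.ofReal C := rfl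
      rw [eC, ea, eb, ec, ENNReal.ofReal_rpow_of_pos a0, ENNReal.ofReal_rpow_of_pos b0,
        ENNReal.ofReal_rpow_of_pos c0, ← ENNReal.ofReal_mul (by positivity), ← ENNReal.ofReal_mul (by positivity),
        ← ENNReal.ofReal_mul (by positivity), ← enorm_eq_nnnorm, ← ofReal_norm]
      exact ENNReal.ofReal_le_ofReal main

end Quartile
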